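/- Let k be a field with 2 ∈ k^×, let (R,*) be an involutive k-algebra, and let (D,P) : (R,*) → k be a weak symplectic determinant law of dimension 2d. Then there is an isomorphism of involutive k-algebras R/ker(D) ≅ Π_{i=1}^t (R_i, σ_i) in which each R_i is a central simple algebra over a field extension of k equipped with either a symplectic involution, an orthogonal involution, or a unitary (second-kind) involution over a quadratic étale extension (including the split case T × T^{op} with the swap involution); each factor (R_i, σ_i) carries a symplectic determinant law (D_i, P_i), and D = Π_{i=1}^t D_i ∘ π_i and P = Π_{i=1}^t P_i ∘ π_i, where π_i : R → R_i are the projections. In particular CH(P) ⊆ ker(D), i.e. every weak symplectic determinant law over a field with 2 invertible is a symplectic determinant law. -/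

import Mathlib

/-!
STATEMENT 6: structure theorem for weak symplectic determinant laws over a field `k` with
`2 ∈ k^×`: `R/ker(D)` decomposes as a finite product of involutive algebras, each a central
simple algebra with a symplectic, orthogonal, or unitary (second-kind/split) involution,
each carrying a symplectic determinant law `(D_i, P_i)`, with `D = ∏ D_i ∘ π_i` and
`P = ∏ P_i ∘ π_i`. In particular `CH(P) ⊆ ker(D)`, i.e. `(D, P)` is a symplectic
determinant law.
-/

open scoped TensorProduct
open Matrix

universe u

namespace SympDet

/-! ### Polynomial laws valued in the base ring -/

variable (A : Type u) [CommRing A]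

/-- An `A`-polynomial law on the `A`-module `M` with values in `A`: a family of maps
`M ⊗[A] B → B` (written `B ⊗[A] M → B`), one for each commutative `A`-algebra `B`,
natural in `B`. -/
structure PolyLaw (M : Type u) [AddCommGroup M] [Module A M] : Type (u + 1) where
  toFun : ∀ (B : Type u) [CommRing B] [Algebra A B], B ⊗[A] M → B
  natural : ∀ (B B' : Type u) [CommRing B] [Algebra A B] [CommRing B'] [Algebra A B']
      (f : B →ₐ[A] B') (x : B ⊗[A] M),
      f (toFun B x) = toFun B' (LinearMap.rTensor M f.toLinearMap x)

variable {A}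

/-- Homogeneity of degree `n` of a polynomial law. -/
def PolyLaw.IsHomog {M : Type u} [AddCommGroup M] [Module A M] (P : PolyLaw A M) (n : ℕ) : Prop :=
  ∀ (B : Type u) [CommRing B] [Algebra A B] (b : B) (x : B ⊗[A] M),
    P.toFun B (b • x) = b ^ n * P.toFun B x

/-- The kernel of a polynomial law. -/
def PolyLaw.lawKer {M : Type u} [AddCommGroup M] [Module A M] (P : PolyLaw A M) : Set M :=
  {m | ∀ (B : Type u) [CommRing B] [Algebra A B] (b : B) (y : B ⊗[A] M),
    P.toFun B (b ⊗ₜ[A] m + y) = P.toFun B y}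

/-- Multiplicativity of a polynomial law on an `A`-algebra `R`. -/
def PolyLaw.IsMult {R : Type u} [Ring R] [Algebra A R] (D : PolyLaw A R) : Prop :=
  ∀ (B : Type u) [CommRing B] [Algebra A B],
    D.toFun B 1 = 1 ∧ ∀ x y : B ⊗[A] R, D.toFun B (x * y) = D.toFun B x * D.toFun B y

/-! ### Involutive algebras -/

variable (A) in
/-- An involutive `A`-algebra structure: an `A`-linear involutive anti-automorphism. -/
structure InvAlg (R : Type u) [Ring R] [Algebra A R] : Type u where
  star : R →ₗ[A] R
  star_one : star 1 = 1
  star_mul : ∀ x y : R, star (x * y) = star y * star x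
  star_star : ∀ x : R, star (star x) = x

variable {R : Type u} [Ring R] [Algebra A R]

/-- The submodule of symmetric elements `R⁺`. -/
def InvAlg.plus (s : InvAlg A R) : Submodule A R :=
  LinearMap.ker (s.star - LinearMap.id)

theorem InvAlg.one_mem_plus (s : InvAlg A R) : (1 : R) ∈ s.plus := by
  simp [InvAlg.plus, LinearMap.mem_ker, LinearMap.sub_apply, s.star_one]

/-- `1` as an element of `R⁺`. -/
def InvAlg.onePlus (s : InvAlg A R) : s.plus := ⟨1, s.one_mem_plus⟩

/-- The inclusion `B ⊗[A] R⁺ → B ⊗[A] R`. -/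
noncomputable def InvAlg.incl (s : InvAlg A R) (B : Type u) [CommRing B] [Algebra A B] :
    B ⊗[A] ↥s.plus →ₗ[A] B ⊗[A] R :=
  LinearMap.lTensor B s.plus.subtype

/-- A weak symplectic determinant law of dimension `2d`. -/
structure IsWeakSympDet (s : InvAlg A R) (d : ℕ) (D : PolyLaw A R) (P : PolyLaw A ↥s.plus) :
    Prop where
  mult : D.IsMult
  homog : D.IsHomog (2 * d)
  starInv : ∀ (B : Type u) [CommRing B] [Algebra A B] (x : B ⊗[A] R),
      D.toFun B (LinearMap.lTensor B s.star x) = D.toFun B x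
  homogP : P.IsHomog d
  sq : ∀ (B : Type u) [CommRing B] [Algebra A B] (x : B ⊗[A] ↥s.plus),
      P.toFun B x ^ 2 = D.toFun B (s.incl B x)
  one : P.toFun A ((1 : A) ⊗ₜ[A] s.onePlus) = 1

/-! ### Characteristic polynomials and the Cayley-Hamilton ideal -/

/-- The characteristic polynomial `χ^P(x, t) = P_{B[t]}(t·e - x)` of a polynomial law,
relative to a marked element `e` (the unit). -/
noncomputable def chPoly {M : Type u} [AddCommGroup M] [Module A M] (P : PolyLaw A M) (e : M)
    (B : Type u) [CommRing B] [Algebra A B] (x : B ⊗[A] M) : Polynomial B :=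
  P.toFun (Polynomial B)
    ((Polynomial.X : Polynomial B) ⊗ₜ[A] e -
      LinearMap.rTensor M (IsScalarTower.toAlgHom A B (Polynomial B)).toLinearMap x)

/-- The coefficient `(-1)^i Λ_i` of `t^(n-i)` in the characteristic polynomial, with the
convention that it vanishes for `i > n`. -/
noncomputable def chCoeff {M : Type u} [AddCommGroup M] [Module A M] (P : PolyLaw A M) (e : M)
    (n i : ℕ) (B : Type u) [CommRing B] [Algebra A B] (x : B ⊗[A] M) : B :=
  if i ≤ n then (-1 : B) ^ i * (chPoly P e B x).coeff (n - i) else 0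

/-- `χ^P(x, x)`: the characteristic polynomial of `x ∈ (B ⊗ R)⁺` evaluated at `x` itself. -/
noncomputable def chEval (s : InvAlg A R) (P : PolyLaw A ↥s.plus) (B : Type u) [CommRing B]
    [Algebra A B] (x : B ⊗[A] ↥s.plus) : B ⊗[A] R :=
  Polynomial.aeval (s.incl B x) (chPoly P s.onePlus B x)

/-- The `A`-linear coefficient extraction map on multivariate polynomials. -/
noncomputable def mvLcoeff {n : ℕ} (α : Fin n →₀ ℕ) : MvPolynomial (Fin n) A →ₗ[A] A where
  toFun p := MvPolynomial.coeff α p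
  map_add' p q := MvPolynomial.coeff_add α p q
  map_smul' c p := MvPolynomial.coeff_smul α c p

/-- Extracting the coefficient of the monomial `t^α` from an element of `R[t_1,…,t_n]`. -/
noncomputable def tensorCoeff {n : ℕ} (α : Fin n →₀ ℕ) :
    (MvPolynomial (Fin n) A) ⊗[A] R →ₗ[A] R :=
  (TensorProduct.lid A R).toLinearMap ∘ₗ LinearMap.rTensor R (mvLcoeff α)

/-- The generators `χ^P_α(r_1, …, r_n)` of the Cayley–Hamilton ideal of `P`:
the multihomogeneous coefficients of `χ^P(t_1 r_1 + ⋯ + t_n r_n, t_1 r_1 + ⋯ + t_n r_n)`. -/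
def chGen (s : InvAlg A R) (P : PolyLaw A ↥s.plus) : Set R :=
  {y | ∃ (n : ℕ) (r : Fin n → ↥s.plus) (α : Fin n →₀ ℕ),
    y = tensorCoeff α
      (chEval s P (MvPolynomial (Fin n) A)
        (∑ i : Fin n, (MvPolynomial.X i : MvPolynomial (Fin n) A) ⊗ₜ[A] r i))}

/-- The Cayley–Hamilton ideal `CH(P)`: the two-sided ideal generated by the
multihomogeneous coefficients of the characteristic polynomials. -/
def chIdeal (s : InvAlg A R) (P : PolyLaw A ↥s.plus) : TwoSidedIdeal R :=
  TwoSidedIdeal.span (chGen s P)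

/-- A symplectic determinant law of dimension `2d`: a weak symplectic determinant law
such that `CH(P) ⊆ ker(D)`. -/
def IsSympDet (s : InvAlg A R) (d : ℕ) (D : PolyLaw A R) (P : PolyLaw A ↥s.plus) : Prop :=
  IsWeakSympDet s d D P ∧ ∀ y ∈ chIdeal s P, y ∈ D.lawKer

/-- A symplectic Cayley–Hamilton algebra of degree `2d`: a symplectic determinant law
such that `χ^P(r, r) = 0` for all symmetric `r` over all base extensions. -/
def IsSympCH (s : InvAlg A R) (d : ℕ) (D : PolyLaw A R) (P : PolyLaw A ↥s.plus) : Prop :=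
  IsSympDet s d D P ∧
    ∀ (B : Type u) [CommRing B] [Algebra A B] (x : B ⊗[A] ↥s.plus), chEval s P B x = 0


/-! ### Central simple algebras with involution: the possible factor forms -/

/-- `σ` is an additive, unital, involutive anti-automorphism. -/
def IsAntiAutOn (T : Type u) [Ring T] (σ : T → T) : Prop :=
  σ 1 = 1 ∧ (∀ x y : T, σ (x + y) = σ x + σ y) ∧ (∀ x y : T, σ (x * y) = σ y * σ x) ∧
    ∀ x : T, σ (σ x) = x

/-- A witness that `(T, σ)` is a (finite-dimensional) central simple algebra over a field `K`
with a `K`-linear involution of the first kind of type `ε` (`ε = -1`: symplectic, `ε = 1`: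
orthogonal): over some splitting field `L`, the involution becomes `x ↦ u xᵀ u⁻¹` with
`uᵀ = ε u`. -/
structure FirstKindCase (T : Type u) [Ring T] (σ : T → T) (ε : ℤ) : Type (u + 1) where
  K : Type u
  [fieldK : Field K]
  [algK : Algebra K T]
  central : Algebra.IsCentral K T
  simple : IsSimpleRing T
  findim : FiniteDimensional K T
  linear : ∀ (c : K) (x : T), σ (algebraMap K T c * x) = algebraMap K T c * σ x
  anti : IsAntiAutOn T σ
  n : ℕ
  L : Type u
  [fieldL : Field L]
  [algKL : Algebra K L]
  split : L ⊗[K] T ≃ₐ[L] Matrix (Fin n) (Fin n) L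
  u : Matrix (Fin n) (Fin n) L
  hu : IsUnit u.det
  hut : uᵀ = (ε : L) • u
  hconj : ∀ x : T, split ((1 : L) ⊗ₜ[K] σ x) = u * (split ((1 : L) ⊗ₜ[K] x))ᵀ * u⁻¹

/-- A witness that `(T, σ)` is a central simple algebra over a field `L` with a `K`-linear
involution of the second kind, for an index-2 subfield `K ⊆ L` with `L/K` separable. -/
structure SecondKindCase (T : Type u) [Ring T] (σ : T → T) : Type (u + 1) where
  K : Type u
  [fieldK : Field K]
  L : Type u
  [fieldL : Field L]
  [algKL : Algebra K L]
  [algLT : Algebra L T]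
  [algKT : Algebra K T]
  [tower : IsScalarTower K L T]
  quad : Module.finrank K L = 2
  separable : Algebra.IsSeparable K L
  central : Algebra.IsCentral L T
  simple : IsSimpleRing T
  findim : FiniteDimensional L T
  anti : IsAntiAutOn T σ
  linear : ∀ (c : K) (x : T), σ (algebraMap K T c * x) = algebraMap K T c * σ x
  secondKind : ∃ l : L, σ (algebraMap L T l) ≠ algebraMap L T l

/-- A witness that `(T, σ) ≅ (E × Eᵒᵖ, swap)` for a (finite-dimensional) central simple
algebra `E` over a field `K`. -/
structure SwapCase (T : Type u) [Ring T] (σ : T → T) : Type (u + 1) where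
  K : Type u
  [fieldK : Field K]
  E : Type u
  [ringE : Ring E]
  [algKE : Algebra K E]
  central : Algebra.IsCentral K E
  simple : IsSimpleRing E
  findim : FiniteDimensional K E
  e : T ≃+* E × Eᵐᵒᵖ
  swap : ∀ x : T, e (σ x) = ((e x).2.unop, MulOpposite.op (e x).1)


/-- A factor of the decomposition: a `k`-algebra with involution. -/
structure LawFactorData (k : Type u) [Field k] : Type (u + 1) where
  carrier : Type u
  [ring : Ring carrier]
  [alg : Algebra k carrier]
  inv : InvAlg k carrier

attribute [instance] LawFactorData.ring LawFactorData.alg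

/-- A decomposition of a weak symplectic determinant law `(D, P)` on `(R, *)` over a field:
a surjection `π : R ↠ ∏ R_i` with kernel `ker(D)`, compatible with the involutions, such
that each factor is a central simple algebra with involution of one of the possible kinds,
carries a symplectic determinant law `(D_i, P_i)`, and `D = ∏ D_i ∘ π_i`,
`P = ∏ P_i ∘ π_i`. -/
structure SympDetDecomposition {k : Type u} [Field k] {R : Type u} [Ring R] [Algebra k R]
    (s : InvAlg k R) (d : ℕ) (D : PolyLaw k R) (P : PolyLaw k ↥s.plus) : Type (u + 1) where
  t : ℕ
  F : Fin t → LawFactorData k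
  π : R →ₐ[k] ((i : Fin t) → (F i).carrier)
  surj : Function.Surjective π
  ker_eq : ∀ x : R, π x = 0 ↔ x ∈ D.lawKer
  compat : ∀ (x : R) (i : Fin t), π (s.star x) i = (F i).inv.star (π x i)
  di : Fin t → ℕ
  dimsum : ∑ i, di i = d
  Dlaw : ∀ i : Fin t, PolyLaw k (F i).carrier
  Plaw : ∀ i : Fin t, PolyLaw k ↥((F i).inv.plus)
  sympdet : ∀ i, IsSympDet (F i).inv (di i) (Dlaw i) (Plaw i)
  forms : ∀ i : Fin t,
    Nonempty (FirstKindCase (F i).carrier (⇑(F i).inv.star) (-1)) ∨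
    Nonempty (FirstKindCase (F i).carrier (⇑(F i).inv.star) 1) ∨
    Nonempty (SecondKindCase (F i).carrier (⇑(F i).inv.star)) ∨
    Nonempty (SwapCase (F i).carrier (⇑(F i).inv.star))
  factorD : ∀ (B : Type u) [CommRing B] [Algebra k B] (x : B ⊗[k] R),
    D.toFun B x =
      ∏ i, (Dlaw i).toFun B
        (LinearMap.lTensor B ((LinearMap.proj i) ∘ₗ π.toLinearMap) x)
  q : ∀ i : Fin t, ↥s.plus →ₗ[k] ↥((F i).inv.plus)
  hq : ∀ (i : Fin t) (y : ↥s.plus), ((q i y : (F i).carrier)) = π (y : R) i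
  factorP : ∀ (B : Type u) [CommRing B] [Algebra k B] (y : B ⊗[k] ↥s.plus),
    P.toFun B y = ∏ i, (Plaw i).toFun B (LinearMap.lTensor B (q i) y)

end SympDet

/-!
Over an algebraically closed extension `K` of `k`, the quotient of `K ⊗ R` by the kernel of `D` on
`K`-points is a product of matrix algebras, on which `D` is a product of powers of determinants
`∏ det (y i) ^ m i`.

*Cayley–Hamilton.* For symmetric `x`, the polynomial `P (t - x)` is a square root of
`∏ χ i ^ m i`, where `χ i` is the characteristic polynomial of the `i`-th block of `x`. Two blocks
exchanged by the involution have the same `χ i`, so `χ i` divides `P (t - x)`; the same holds on a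
fixed block with `m i` even. On a fixed block with `m i` odd, `det (t - x + ε r)` is a square in
`K[t][ε]` for all symmetric `r`; differentiating in `ε` shows that `q = √χ i` divides the adjugate
of `t - x`, hence that `q` annihilates `x`. In each case `P (t - x)` annihilates `x` at `t = x`.

*Structure.* The image of `R` in the product of matrix algebras spans it over `K`. It has no nonzero
nil left ideal, by the trace form, and the ranks of its idempotents are bounded, so it is
semisimple; its simple factors are central simple algebras split by `K`. The involution permutes
them: a fixed factor carries an involution of the first or second kind, and two exchanged factors
form `E × Eᵒᵖ` with the swap. Multiplicativity of `D` splits `D` along the product, and `D = P ^ 2`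
on symmetric elements makes `P` descend and split as well.
-/

namespace SympDet

section Vandermonde

theorem mem_of_forall_sum_smul_mem {K W ι T : Type*} [Field K] [AddCommGroup W] [Module K W]
    {e : ι → T → K} (he : LinearIndependent K e) (V : Submodule K W) (F : Finset ι) (Z : ι → W)
    (h : ∀ t, ∑ i ∈ F, e i t • Z i ∈ V) {i : ι} (hi : i ∈ F) : Z i ∈ V := by
  by_contra hZ
  obtain ⟨f, hf, hV⟩ := Submodule.exists_le_ker_of_notMem hZ
  refine hf (linearIndependent_iff'.1 he F (fun i => f (Z i)) (funext fun t => ?_) i hi)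
  simpa [mul_comm] using hV (h t)

variable {K : Type*} [CommRing K] [IsDomain K] [Infinite K]

theorem linearIndependent_pow : LinearIndependent K fun (j : ℕ) (t : K) => t ^ j := by
  refine linearIndependent_iff'.2 fun s g hg i hi => ?_
  have sum_eq_zero : ∑ j ∈ s, Polynomial.monomial j (g j) = 0 := Polynomial.funext fun t => by
    simpa [Polynomial.eval_finsetSum] using congrFun hg t
  simpa [Polynomial.coeff_monomial, hi] using congrArg (Polynomial.coeff · i) sum_eq_zero

theorem linearIndependent_monomial (σ : Type*) [Fintype σ] :
    LinearIndependent K fun (α : σ →₀ ℕ) (t : σ → K) => ∏ i, t i ^ α i := by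
  classical
  refine linearIndependent_iff'.2 fun s g hg i hi => ?_
  have sum_eq_zero : ∑ α ∈ s, MvPolynomial.monomial α (g α) = 0 := MvPolynomial.funext fun t => by
    simpa [MvPolynomial.eval_monomial, Finsupp.prod_fintype] using congrFun hg t
  simpa [MvPolynomial.coeff_monomial, MvPolynomial.coeff_sum, hi] using
    congrArg (MvPolynomial.coeff i) sum_eq_zero

end Vandermonde

/-- A multiplicative form of degree `n` on a `K`-algebra: a unital multiplicative map to `K` that is
the diagonal of some `n`-multilinear form. Over an infinite field this is what remains of a
determinant law when only its map on `K`-points is kept. -/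
structure DetForm (K : Type*) (R : Type*) [CommRing K] [Ring R] [Algebra K R] (n : ℕ) where
  toFun : R → K
  exists_multilinear : ∃ Φ : MultilinearMap K (fun _ : Fin n => R) K, ∀ y, toFun y = Φ fun _ => y
  map_one' : toFun 1 = 1
  map_mul' : ∀ x y, toFun (x * y) = toFun x * toFun y

namespace DetForm

variable {K R : Type*} [CommRing K] [Ring R] [Algebra K R] {n : ℕ}

instance : FunLike (DetForm K R n) R K where
  coe := toFun
  coe_injective D E h := by cases D; cases E; congr

instance : MonoidHomClass (DetForm K R n) R K where
  map_one D := D.map_one'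
  map_mul D := D.map_mul'

variable (D : DetForm K R n)

theorem exists_eq_multilinear :
    ∃ Φ : MultilinearMap K (fun _ : Fin n => R) K, ∀ y, D y = Φ fun _ => y :=
  D.exists_multilinear

theorem map_smul (c : K) (y : R) : D (c • y) = c ^ n * D y := by
  obtain ⟨Φ, hΦ⟩ := D.exists_eq_multilinear
  simpa [hΦ] using Φ.map_smul_univ (fun _ => c) (fun _ => y)

theorem exists_polynomial_eval_add_smul (a b : R) :
    ∃ p : Polynomial K, p.natDegree ≤ n ∧ p.coeff n = D b ∧ ∀ t, p.eval t = D (a + t • b) := by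
  classical
  obtain ⟨Φ, hΦ⟩ := D.exists_eq_multilinear
  refine ⟨∑ s : Finset (Fin n), Polynomial.C (Φ (s.piecewise (fun _ => b) fun _ => a)) *
    Polynomial.X ^ s.card, ?_, ?_, fun t => ?_⟩
  · exact Polynomial.natDegree_sum_le_of_forall_le _ _ fun s _ =>
      (Polynomial.natDegree_C_mul_X_pow_le _ _).trans (by simpa using s.card_le_univ)
  · have card_eq (s : Finset (Fin n)) : n = s.card ↔ s = Finset.univ := by
      rw [← Finset.card_eq_iff_eq_univ, Fintype.card_fin, eq_comm]
    simp only [Polynomial.finsetSum_coeff, Polynomial.coeff_C_mul, Polynomial.coeff_X_pow, card_eq,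
      mul_ite, mul_one, mul_zero, Finset.sum_ite_eq', Finset.mem_univ, if_true, hΦ,
      Finset.piecewise_univ]
  · have smul_piecewise (s : Finset (Fin n)) : s.piecewise (fun _ => t • b) (fun _ => a) =
        s.piecewise (fun i => t • s.piecewise (fun _ => b) (fun _ => a) i)
          (s.piecewise (fun _ => b) fun _ => a) := by
      ext i; by_cases hi : i ∈ s <;> simp [hi]
    have add_eq : (fun _ : Fin n => a + t • b) = (fun _ => t • b) + fun _ => a := by
      ext; simp [add_comm]
    rw [hΦ, add_eq, Φ.map_add_univ, Polynomial.eval_finsetSum]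
    refine Finset.sum_congr rfl fun s _ => ?_
    rw [smul_piecewise, Φ.map_piecewise_smul, Finset.prod_const, Polynomial.eval_mul,
      Polynomial.eval_C, Polynomial.eval_pow, Polynomial.eval_X, smul_eq_mul, mul_comm]

end DetForm

/-! ### The Cayley–Hamilton theorem for multiplicative forms -/

namespace DetForm

section TensorPower

open PiTensorProduct

variable {K R : Type*} [Field K] [Ring R] [Algebra K R] {n : ℕ}

variable (K n) in
/-- The pure tensor power `y ⊗ ⋯ ⊗ y` in `R^{⊗ n}`, through which every multiplicative form of
degree `n` factors. -/
noncomputable def tensorPow (y : R) : ⨂[K] _ : Fin n, R := tprod K fun _ => y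

theorem tensorPow_mul (a b : R) : tensorPow K n (a * b) = tensorPow K n a * tensorPow K n b := by
  simp only [tensorPow, tprod_mul_tprod]
  rfl

variable (K R n) in
/-- The span of the pure tensor powers. -/
noncomputable def tensorPowSpan : Submodule K (⨂[K] _ : Fin n, R) :=
  Submodule.span K (Set.range (tensorPow K n))

theorem tensorPow_mem_span (y : R) : tensorPow K n y ∈ tensorPowSpan K R n :=
  Submodule.subset_span ⟨y, rfl⟩

variable (K n) in
/-- The action of `K[X]^{⊗ n}` on `R^{⊗ n}` in which the `i`-th variable is evaluated at `x` in the
`i`-th slot. -/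
noncomputable def tensorAeval (x : R) :
    (⨂[K] _ : Fin n, Polynomial K) →ₐ[K] ⨂[K] _ : Fin n, R :=
  liftAlgHom ((PiTensorProduct.tprod K).compLinearMap fun _ => (Polynomial.aeval x).toLinearMap)
    (by
      simp only [MultilinearMap.compLinearMap_apply, Pi.one_apply, AlgHom.toLinearMap_apply,
        map_one, one_def]
      rfl)
    (fun p q => by
      simp only [MultilinearMap.compLinearMap_apply, tprod_mul_tprod]
      congr 1; ext i; simp)

theorem tensorAeval_tprod (x : R) (p : Fin n → Polynomial K) :
    tensorAeval K n x (tprod K p) = tprod K fun i => Polynomial.aeval x (p i) := by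
  simp [tensorAeval]

variable (K) in
/-- The embedding of `K[X]` in the `i`-th slot of `K[X]^{⊗ n}`. -/
noncomputable abbrev slot (i : Fin n) : Polynomial K →ₐ[K] ⨂[K] _ : Fin n, Polynomial K :=
  singleAlgHom (R := K) (A := fun _ : Fin n => Polynomial K) i

theorem prod_slot (I : Finset (Fin n)) (g : Polynomial K) :
    ∏ i ∈ I, slot K i g = tprod K (I.piecewise (fun _ => g) fun _ => 1) := by
  simp only [slot, singleAlgHom_apply]
  rw [← tprod_prod]
  congr 1
  ext1 i
  rw [Finset.prod_apply]
  by_cases hi : i ∈ I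
  · rw [Finset.prod_eq_single i (fun j _ hj => by simp [hj.symm])
      (absurd hi)]
    simp [hi]
  · rw [Finset.prod_eq_one]
    · simp [hi]
    · rintro j hj
      simp [show i ≠ j by rintro rfl; exact hi hj]

theorem sum_tensorAeval_mul_tprod (x y s : R) (g : Polynomial K) :
    ∑ I : Finset (Fin n), tensorAeval K n x (∏ i ∈ I, slot K i g) *
        tprod K (I.piecewise (fun _ => s) fun _ => y) =
      tensorPow K n (y + Polynomial.aeval x g * s) := by
  have add_eq : (fun _ : Fin n => y + Polynomial.aeval x g * s) =
      (fun _ => Polynomial.aeval x g * s) + fun _ => y := by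
    ext; simp [add_comm]
  rw [tensorPow, add_eq, MultilinearMap.map_add_univ]
  refine Finset.sum_congr rfl fun I _ => ?_
  rw [prod_slot, tensorAeval_tprod, tprod_mul_tprod]
  congr 1
  ext i
  by_cases hi : i ∈ I <;> simp [hi]

variable (K n) in
/-- The monic polynomial over `K[X]^{⊗ n}` whose roots are the `n` variables. -/
noncomputable def slotPoly : Polynomial (⨂[K] _ : Fin n, Polynomial K) :=
  ∏ i, (Polynomial.X - Polynomial.C (slot K i Polynomial.X))

theorem natDegree_slotPoly_lt : (slotPoly K n).natDegree < n + 1 := by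
  refine Nat.lt_succ_of_le ((Polynomial.natDegree_prod_le _ _).trans ?_)
  refine (Finset.sum_le_card_nsmul _ _ 1 fun i _ => Polynomial.natDegree_X_sub_C_le _).trans ?_
  simp

theorem sum_coeff_slotPoly_mul_slot_pow (i : Fin n) :
    ∑ j ∈ Finset.range (n + 1), (slotPoly K n).coeff j * slot K i Polynomial.X ^ j = 0 := by
  rw [← Polynomial.eval_eq_sum_range' (natDegree_slotPoly_lt (K := K) (n := n)), slotPoly,
    Polynomial.eval_prod]
  exact Finset.prod_eq_zero (Finset.mem_univ i) (by simp)

theorem sum_slot_X_pow_mul_coeff_sub (i : Fin n) {f : Polynomial K} (hf : f.natDegree ≤ n) :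
    ∑ j : Fin (n + 1), slot K i Polynomial.X ^ (j : ℕ) *
      (algebraMap K _ (f.coeff j) - (slotPoly K n).coeff j) = slot K i f := by
  have slot_eq : slot K i f = ∑ j ∈ Finset.range (n + 1),
      slot K i Polynomial.X ^ j * algebraMap K _ (f.coeff j) := by
    conv_lhs => rw [f.as_sum_range_C_mul_X_pow' (Nat.lt_succ_of_le hf)]
    simp only [map_sum, map_mul, map_pow, mul_comm (slot K i (Polynomial.C _))]
    exact Finset.sum_congr rfl fun j _ => congrArg _ ((slot K i).commutes _)
  rw [Fin.sum_univ_eq_sum_range (fun j => slot K i Polynomial.X ^ j *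
    (algebraMap K _ (f.coeff j) - (slotPoly K n).coeff j)), slot_eq]
  simp only [mul_sub, Finset.sum_sub_distrib, mul_comm (slot K i Polynomial.X ^ _)
    ((slotPoly K n).coeff _), sum_coeff_slotPoly_mul_slot_pow, sub_zero]

theorem tensorPow_smul_one_sub (x : R) (t : K) :
    tensorPow K n (t • 1 - x) =
      ∑ j ∈ Finset.range (n + 1), t ^ j • tensorAeval K n x ((slotPoly K n).coeff j) := by
  have eval_eq : (slotPoly K n).eval (algebraMap K _ t) =
      ∏ i : Fin n, slot K i (Polynomial.C t - Polynomial.X) := by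
    simp only [slotPoly, Polynomial.eval_prod, Polynomial.eval_sub, Polynomial.eval_X,
      Polynomial.eval_C, map_sub]
    exact Finset.prod_congr rfl fun i _ => congrArg (· - _) ((slot K i).commutes t).symm
  calc tensorPow K n (t • 1 - x)
      = tensorAeval K n x ((slotPoly K n).eval (algebraMap K _ t)) := by
        rw [eval_eq, prod_slot, tensorAeval_tprod]
        simp [tensorPow, Algebra.algebraMap_eq_smul_one]
    _ = _ := by
        rw [Polynomial.eval_eq_sum_range' (natDegree_slotPoly_lt (K := K) (n := n)), map_sum]
        refine Finset.sum_congr rfl fun j _ => ?_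
        rw [← map_pow, mul_comm, ← Algebra.smul_def, _root_.map_smul]

open MvPolynomial in
/-- Formally the expansion of `(y + ∑ j, e j x ^ j s)^{⊗ n}` in monomials of `e`, which makes sense
as soon as `∑ j, x ^ j e j` agrees with some `g(x)` in every slot. -/
theorem exists_tensorPow_expansion (x y s : R) :
    ∃ (F : Finset (Fin (n + 1) →₀ ℕ)) (Z : (Fin (n + 1) →₀ ℕ) → ⨂[K] _ : Fin n, R),
      ∀ (e : Fin (n + 1) → ⨂[K] _ : Fin n, Polynomial K) (g : Polynomial K),
        (∀ i, ∑ j : Fin (n + 1), slot K i Polynomial.X ^ (j : ℕ) * e j = slot K i g) →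
        ∑ α ∈ F, tensorAeval K n x (∏ i, e i ^ α i) * Z α =
          tensorPow K n (y + Polynomial.aeval x g * s) := by
  classical
  let Q (I : Finset (Fin n)) : MvPolynomial (Fin (n + 1)) (⨂[K] _ : Fin n, Polynomial K) :=
    ∏ i ∈ I, ∑ j : Fin (n + 1), C (slot K i Polynomial.X ^ (j : ℕ)) * X j
  let F := Finset.univ.biUnion fun I => (Q I).support
  refine ⟨F, fun α => ∑ I, tensorAeval K n x ((Q I).coeff α) *
    tprod K (I.piecewise (fun _ => s) fun _ => y), fun e g he => ?_⟩
  have prod_eq (I) : ∏ i ∈ I, slot K i g = ∑ α ∈ F, (∏ i, e i ^ α i) * (Q I).coeff α := by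
    calc ∏ i ∈ I, slot K i g = (Q I).eval e := by
          simp only [Q, map_prod, map_sum, map_mul, eval_C, eval_X]
          exact Finset.prod_congr rfl fun i _ => (he i).symm
      _ = _ := by
          rw [eval_eq', Finset.sum_subset
            (Finset.subset_biUnion_of_mem (fun I => (Q I).support) (Finset.mem_univ I))]
          · exact Finset.sum_congr rfl fun α _ => mul_comm _ _
          · intro α _ hα
            rw [notMem_support_iff.1 hα, zero_mul]
  rw [← sum_tensorAeval_mul_tprod]
  simp only [prod_eq, map_sum, map_mul, Finset.mul_sum, Finset.sum_mul, mul_assoc]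
  rw [Finset.sum_comm]

end TensorPower

section CompatiblePairs

variable {K C W : Type*} [CommRing K] [CommRing C] [Algebra K C] [Ring W] [Algebra K W]

/-- The pairs `(w, c)` such that multiplication by `θ w` preserves `V` and multiplies the values of
the linear form `φ` on `V` by `c`. -/
def compatiblePairs (θ : C →ₐ[K] W) (V : Submodule K W) (φ : W →ₗ[K] K) : Subalgebra K (C × K) where
  carrier := {p | ∀ T ∈ V, θ p.1 * T ∈ V ∧ φ (θ p.1 * T) = p.2 * φ T}
  mul_mem' {p q} hp hq T hT := by
    obtain ⟨hqV, hqφ⟩ := hq T hT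
    obtain ⟨hpV, hpφ⟩ := hp _ hqV
    simp only [Prod.fst_mul, Prod.snd_mul, map_mul, mul_assoc]
    exact ⟨hpV, by rw [hpφ, hqφ]⟩
  add_mem' {p q} hp hq T hT := by
    simp only [Prod.fst_add, Prod.snd_add, map_add, add_mul, (hp T hT).2, (hq T hT).2, and_true]
    exact V.add_mem (hp T hT).1 (hq T hT).1
  algebraMap_mem' c T hT := by
    simp only [Prod.algebraMap_apply, AlgHom.commutes, ← Algebra.smul_def]
    exact ⟨V.smul_mem c hT, by simp⟩

theorem map_sum_prod_pow_mul_of_mem_compatiblePairs {θ : C →ₐ[K] W} {V : Submodule K W}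
    {φ : W →ₗ[K] K} {ι : Type*} [Fintype ι] {e : ι → C} {c : ι → K}
    (he : ∀ i, (e i, c i) ∈ compatiblePairs θ V φ) {F : Finset (ι →₀ ℕ)} {Z : (ι →₀ ℕ) → W}
    (hZ : ∀ α ∈ F, Z α ∈ V) :
    φ (∑ α ∈ F, θ (∏ i, e i ^ α i) * Z α) = ∑ α ∈ F, (∏ i, c i ^ α i) * φ (Z α) := by
  rw [map_sum]
  refine Finset.sum_congr rfl fun α hα => ?_
  have prod_mem : (∏ i, e i ^ α i, ∏ i, c i ^ α i) ∈ compatiblePairs θ V φ := by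
    convert Subalgebra.prod_mem _ (t := Finset.univ) fun i _ => Subalgebra.pow_mem _ (he i) (α i)
    · simp [Prod.fst_prod]
    · simp [Prod.snd_prod]
  exact (prod_mem _ (hZ α hα)).2

end CompatiblePairs

section CayleyHamilton

open PiTensorProduct

variable {K R : Type*} [Field K] [Infinite K] [Ring R] [Algebra K R] {n : ℕ}

theorem coeff_slotPoly_mem_compatiblePairs {D : DetForm K R n} {x : R} {f : Polynomial K}
    (hf : f.natDegree ≤ n) (hfD : ∀ t, f.eval t = D (t • 1 - x)) {φ : (⨂[K] _ : Fin n, R) →ₗ[K] K}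
    (hφ : ∀ y, φ (tensorPow K n y) = D y) {j : ℕ} (hj : j < n + 1) :
    ((slotPoly K n).coeff j, f.coeff j) ∈
      compatiblePairs (tensorAeval K n x) (tensorPowSpan K R n) φ := by
  have sum_eq (t : K) (z : R) : ∑ j ∈ Finset.range (n + 1),
      t ^ j • (tensorAeval K n x ((slotPoly K n).coeff j) * tensorPow K n z) =
        tensorPow K n ((t • 1 - x) * z) := by
    simp only [tensorPow_mul, tensorPow_smul_one_sub, Finset.sum_mul, smul_mul_assoc]
  intro T hT
  induction hT using Submodule.span_induction with
  | mem _ hT =>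
    obtain ⟨z, rfl⟩ := hT
    refine ⟨mem_of_forall_sum_smul_mem linearIndependent_pow (tensorPowSpan K R n)
      (Finset.range (n + 1)) _ (fun t => sum_eq t z ▸ tensorPow_mem_span _)
      (Finset.mem_range.2 hj), sub_eq_zero.1 ?_⟩
    refine (Submodule.mem_bot K).1 <| mem_of_forall_sum_smul_mem linearIndependent_pow ⊥
      (Finset.range (n + 1))
      (fun j => φ (tensorAeval K n x ((slotPoly K n).coeff j) * tensorPow K n z) -
        f.coeff j * φ (tensorPow K n z)) (fun t => ?_) (Finset.mem_range.2 hj)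
    have map_sum_eq := congrArg φ (sum_eq t z)
    rw [hφ, map_mul, ← hfD, ← hφ z, Polynomial.eval_eq_sum_range' (Nat.lt_succ_of_le hf),
      Finset.sum_mul, map_sum] at map_sum_eq
    simp only [_root_.map_smul, smul_eq_mul] at map_sum_eq
    simp only [smul_eq_mul, mul_sub, Finset.sum_sub_distrib, map_sum_eq, Submodule.mem_bot,
      sub_eq_zero]
    exact Finset.sum_congr rfl fun j _ => by ring
  | zero => simp
  | add a b _ _ ha hb =>
    simp only [mul_add, map_add, ha.2, hb.2, and_true]
    exact Submodule.add_mem _ ha.1 hb.1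
  | smul c a _ ha =>
    simp only [mul_smul_comm, _root_.map_smul, ha.2, smul_eq_mul, mul_left_comm, and_true]
    exact Submodule.smul_mem _ c ha.1

/-- The coefficients of `f` act on the span of the tensor powers, as far as `D` can see, like those
of `∏ i, (X - X i)`; as the latter vanishes at each `X i`, one may replace `f(x)` by `0`. -/
theorem apply_add_aeval_mul (D : DetForm K R n) (x y s : R) {f : Polynomial K}
    (hf : f.natDegree ≤ n) (hfD : ∀ t, f.eval t = D (t • 1 - x)) :
    D (y + Polynomial.aeval x f * s) = D y := by
  obtain ⟨Φ, hΦ⟩ := D.exists_eq_multilinear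
  have hφ (y : R) : lift Φ (tensorPow K n y) = D y := by rw [hΦ]; exact lift.tprod _
  obtain ⟨F, Z, hZ⟩ := exists_tensorPow_expansion (K := K) (n := n) x y s
  have hZV : ∀ α ∈ F, Z α ∈ tensorPowSpan K R n := fun α =>
    mem_of_forall_sum_smul_mem (linearIndependent_monomial (Fin (n + 1))) _ F Z fun t => by
      have expansion := hZ (fun j => algebraMap K _ (t j))
        (∑ j : Fin (n + 1), Polynomial.X ^ (j : ℕ) * Polynomial.C (t j)) fun i => by
          rw [map_sum]
          refine Finset.sum_congr rfl fun j _ => ?_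
          rw [map_mul, map_pow]
          exact congrArg _ ((slot K i).commutes _).symm
      simp only [← map_pow, ← map_prod, AlgHom.commutes, ← Algebra.smul_def] at expansion
      exact expansion ▸ tensorPow_mem_span _
  have mem_pairs (j : Fin (n + 1)) :
      (algebraMap K _ (f.coeff j) - (slotPoly K n).coeff j, (0 : K)) ∈
        compatiblePairs (tensorAeval K n x) (tensorPowSpan K R n) (lift Φ) := by
    simpa using sub_mem (Subalgebra.algebraMap_mem _ (f.coeff j))
      (coeff_slotPoly_mem_compatiblePairs hf hfD hφ j.2)
  rw [← hφ, ← hZ _ f fun i => sum_slot_X_pow_mul_coeff_sub i hf,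
    map_sum_prod_pow_mul_of_mem_compatiblePairs mem_pairs hZV,
    ← map_sum_prod_pow_mul_of_mem_compatiblePairs (θ := tensorAeval K n x) (e := fun _ => 0)
      (c := fun _ => 0) (fun _ => zero_mem _) hZV,
    hZ _ 0 (by simp only [mul_zero, Finset.sum_const_zero, map_zero, implies_true]), map_zero,
    zero_mul, add_zero, hφ]

end CayleyHamilton

end DetForm

/-! ### The kernel of a multiplicative form -/

namespace DetForm

section Charpoly

variable {K R : Type*} [CommRing K] [Ring R] [Algebra K R] {n : ℕ} (D : DetForm K R n)

/-- The characteristic polynomial `t ↦ D (t - x)`; over a finite ring its values do not determine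
it, and a choice is made. -/
noncomputable def charpoly (x : R) : Polynomial K :=
  (D.exists_polynomial_eval_add_smul (-x) 1).choose

theorem eval_charpoly (x : R) (t : K) : (D.charpoly x).eval t = D (t • 1 - x) := by
  rw [charpoly, (D.exists_polynomial_eval_add_smul (-x) 1).choose_spec.2.2, neg_add_eq_sub]

theorem natDegree_charpoly_le (x : R) : (D.charpoly x).natDegree ≤ n :=
  (D.exists_polynomial_eval_add_smul (-x) 1).choose_spec.1

theorem charpoly_coeff (x : R) : (D.charpoly x).coeff n = 1 :=
  (D.exists_polynomial_eval_add_smul (-x) 1).choose_spec.2.1.trans (map_one D)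

theorem charpoly_monic (x : R) : (D.charpoly x).Monic :=
  Polynomial.monic_of_natDegree_le_of_coeff_eq_one n (D.natDegree_charpoly_le x)
    (D.charpoly_coeff x)

end Charpoly

variable {K R : Type*} [Field K] [Ring R] [Algebra K R] {n : ℕ} (D : DetForm K R n)

/-- An element with `D r ≠ 0` is invertible up to an element of the form `f(r)`, which `D` does not
see by Cayley–Hamilton. -/
theorem exists_mul_eq_one_sub {r : R} (hr : D r ≠ 0) :
    ∃ (h : R) (c : K), r * h = 1 - c • Polynomial.aeval r (D.charpoly r) := by
  set f := D.charpoly r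
  have coeff_ne_zero : f.coeff 0 ≠ 0 := by
    rw [Polynomial.coeff_zero_eq_eval_zero, eval_charpoly, zero_smul, zero_sub, ← neg_one_smul K,
      D.map_smul]
    exact mul_ne_zero (pow_ne_zero _ (by simp)) hr
  have aeval_eq : r * Polynomial.aeval r f.divX = Polynomial.aeval r f - f.coeff 0 • 1 := by
    have := congrArg (Polynomial.aeval r) f.X_mul_divX_add
    simp only [map_add, map_mul, Polynomial.aeval_X, Polynomial.aeval_C] at this
    rw [← this, Algebra.algebraMap_eq_smul_one, add_sub_cancel_right]
  refine ⟨-(f.coeff 0)⁻¹ • Polynomial.aeval r f.divX, (f.coeff 0)⁻¹, ?_⟩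
  rw [mul_smul_comm, aeval_eq, smul_sub, smul_smul, neg_mul, inv_mul_cancel₀ coeff_ne_zero]
  module

variable [Infinite K]

theorem polynomial_eq_of_forall_apply_ne_zero (x : R) {p q : Polynomial K}
    (h : ∀ t : K, D (t • 1 + x) ≠ 0 → p.eval t = q.eval t) : p = q := by
  suffices D.charpoly (-x) * (p - q) = 0 from
    sub_eq_zero.1 ((mul_eq_zero.1 this).resolve_left (D.charpoly_monic _).ne_zero)
  refine Polynomial.funext fun t => ?_
  rw [Polynomial.eval_mul, eval_charpoly, sub_neg_eq_add, Polynomial.eval_sub, Polynomial.eval_zero]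
  by_cases ht : D (t • 1 + x) = 0
  · rw [ht, zero_mul]
  · rw [h t ht, sub_self, mul_zero]

theorem eval_zero_eq_of_forall_apply_ne_zero (x : R) {p q : Polynomial K}
    (h : ∀ t : K, D (t • 1 + x) ≠ 0 → p.eval t = q.eval t) : p.eval 0 = q.eval 0 := by
  rw [D.polynomial_eq_of_forall_apply_ne_zero x h]

theorem apply_one_add_mul_comm (a b : R) : D (1 + a * b) = D (1 + b * a) := by
  obtain ⟨p, -, -, hp⟩ := D.exists_polynomial_eval_add_smul (1 + a * b) b
  obtain ⟨q, -, -, hq⟩ := D.exists_polynomial_eval_add_smul (1 + b * a) b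
  have eval_eq := D.eval_zero_eq_of_forall_apply_ne_zero a (p := p) (q := q) fun t ht => by
    have intertwine : (1 + a * b + t • b) * (t • 1 + a) = (t • 1 + a) * (1 + b * a + t • b) := by
      simp only [mul_add, add_mul, smul_mul_assoc, mul_smul_comm, one_mul, mul_one, mul_assoc,
        smul_add]
      abel
    refine mul_left_cancel₀ ht ?_
    rw [hp, hq, mul_comm, ← map_mul, intertwine, map_mul]
  simpa [hp, hq] using eval_eq

theorem apply_add_of_forall_apply_one_add_mul {m : R} (h : ∀ s, D (1 + s * m) = 1) (y : R) :
    D (y + m) = D y := by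
  obtain ⟨p, -, -, hp⟩ := D.exists_polynomial_eval_add_smul (y + m) 1
  obtain ⟨q, -, -, hq⟩ := D.exists_polynomial_eval_add_smul y 1
  have eval_eq := D.eval_zero_eq_of_forall_apply_ne_zero y (p := p) (q := q) fun t ht => by
    obtain ⟨w, c, hw⟩ := D.exists_mul_eq_one_sub ht
    have decomposition : y + m + t • 1 = (t • 1 + y) * (1 + w * m) +
        Polynomial.aeval (t • 1 + y) (D.charpoly (t • 1 + y)) * (c • m) := by
      rw [mul_add, ← mul_assoc, hw, sub_mul, smul_mul_assoc, mul_smul_comm]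
      simp only [one_mul, mul_one]
      abel
    rw [hp, hq, decomposition, D.apply_add_aeval_mul _ _ _ (D.natDegree_charpoly_le _)
      (D.eval_charpoly _), map_mul, h, mul_one, add_comm]
  simpa [hp, hq] using eval_eq

theorem apply_one_add_mul_of_forall_apply_add {m : R} (h : ∀ y, D (y + m) = D y) (s : R) :
    D (1 + s * m) = 1 := by
  obtain ⟨p, -, -, hp⟩ := D.exists_polynomial_eval_add_smul (1 + s * m) m
  have eval_eq := D.eval_zero_eq_of_forall_apply_ne_zero s (p := p) (q := 1) fun t ht => by
    obtain ⟨w, c, hw⟩ := D.exists_mul_eq_one_sub ht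
    have apply_sub : D (1 - c • Polynomial.aeval (t • 1 + s) (D.charpoly (t • 1 + s))) = 1 := by
      have := D.apply_add_aeval_mul (t • 1 + s) 1 (-c • 1) (D.natDegree_charpoly_le _)
        (D.eval_charpoly _)
      rwa [mul_smul_comm, mul_one, neg_smul, ← sub_eq_add_neg, map_one] at this
    have decomposition : 1 + s * m + t • m = (t • 1 + s) * (w + m) +
        Polynomial.aeval (t • 1 + s) (D.charpoly (t • 1 + s)) * (c • 1) := by
      rw [mul_add, hw, add_mul, mul_smul_comm, mul_one, smul_mul_assoc, one_mul]
      abel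
    rw [hp, decomposition, D.apply_add_aeval_mul _ _ _ (D.natDegree_charpoly_le _)
      (D.eval_charpoly _), map_mul, h, ← map_mul, hw, apply_sub, Polynomial.eval_one]
  simpa [hp] using eval_eq

theorem forall_apply_one_add_mul_iff {m : R} :
    (∀ s, D (1 + s * m) = 1) ↔ ∀ y, D (y + m) = D y :=
  ⟨D.apply_add_of_forall_apply_one_add_mul, D.apply_one_add_mul_of_forall_apply_add⟩

/-- The kernel of a multiplicative form: the elements `m` with `D (y + m) = D y` for all `y`. -/
def ker : Ideal R where
  carrier := {m | ∀ y, D (y + m) = D y}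
  add_mem' {a b} ha hb y := by rw [← add_assoc, hb, ha]
  zero_mem' y := by rw [add_zero]
  smul_mem' r m hm := D.forall_apply_one_add_mul_iff.1 fun s => by
    rw [smul_eq_mul, ← mul_assoc, D.forall_apply_one_add_mul_iff.2 hm]

theorem mem_ker {m : R} : m ∈ D.ker ↔ ∀ y, D (y + m) = D y := Iff.rfl

theorem mem_ker_iff_apply_one_add_mul {m : R} : m ∈ D.ker ↔ ∀ s, D (1 + s * m) = 1 :=
  D.forall_apply_one_add_mul_iff.symm

instance : D.ker.IsTwoSided where
  mul_mem_of_left {a} b ha := D.mem_ker_iff_apply_one_add_mul.2 fun s => by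
    rw [← mul_assoc, apply_one_add_mul_comm, ← mul_assoc, D.mem_ker_iff_apply_one_add_mul.1 ha]

theorem aeval_charpoly_mem_ker (x : R) : Polynomial.aeval x (D.charpoly x) ∈ D.ker := fun y => by
  simpa using D.apply_add_aeval_mul x y 1 (D.natDegree_charpoly_le x) (D.eval_charpoly x)

/-- A multiplicative form is faithful when its kernel is trivial. -/
def Faithful : Prop := D.ker = ⊥

theorem exists_faithful_quotient :
    ∃ E : DetForm K (R ⧸ D.ker) n, (∀ x, E (Ideal.Quotient.mk D.ker x) = D x) ∧ E.Faithful := by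
  obtain ⟨Φ, hΦ⟩ := D.exists_eq_multilinear
  obtain ⟨τ, hτ⟩ := (Ideal.Quotient.mkₐ K D.ker).toLinearMap.exists_rightInverse_of_surjective
    (LinearMap.range_eq_top.2 Ideal.Quotient.mk_surjective)
  have mk_τ (x : R ⧸ D.ker) : Ideal.Quotient.mk D.ker (τ x) = x := LinearMap.congr_fun hτ x
  have apply_τ (a : R) : D (τ (Ideal.Quotient.mk D.ker a)) = D a := by
    have := D.mem_ker.1 (Ideal.Quotient.eq.1 (mk_τ (Ideal.Quotient.mk D.ker a))) a
    rwa [add_sub_cancel] at this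
  let E : DetForm K (R ⧸ D.ker) n :=
    { toFun x := D (τ x)
      exists_multilinear := ⟨Φ.compLinearMap fun _ => τ, fun y => hΦ _⟩
      map_one' := (apply_τ 1).trans (map_one D)
      map_mul' := by
        intro x y
        obtain ⟨a, rfl⟩ := Ideal.Quotient.mk_surjective x
        obtain ⟨b, rfl⟩ := Ideal.Quotient.mk_surjective y
        rw [← map_mul, apply_τ, apply_τ, apply_τ, map_mul] }
  refine ⟨E, apply_τ, eq_bot_iff.2 fun m hm => ?_⟩
  obtain ⟨a, rfl⟩ := Ideal.Quotient.mk_surjective m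
  refine (Submodule.mem_bot _).2 (Ideal.Quotient.eq_zero_iff_mem.2 fun y => ?_)
  have apply_add : D (τ _) = D (τ _) := hm (Ideal.Quotient.mk D.ker y)
  rwa [← map_add, apply_τ, apply_τ] at apply_add

end DetForm

/-! ### Ranks of idempotents and semisimplicity -/

namespace DetForm

variable {K R : Type*} [Field K] [Infinite K] [Ring R] [Algebra K R] {n : ℕ} (D : DetForm K R n)

theorem Faithful.aeval_charpoly {D : DetForm K R n} (hD : D.Faithful) (x : R) :
    Polynomial.aeval x (D.charpoly x) = 0 :=
  (Submodule.mem_bot R).1 (hD ▸ D.aeval_charpoly_mem_ker x)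

theorem Faithful.isIntegral {D : DetForm K R n} (hD : D.Faithful) (x : R) : IsIntegral K x :=
  ⟨D.charpoly x, D.charpoly_monic x, hD.aeval_charpoly x⟩

/-- The rank of an idempotent `e` with respect to a multiplicative form: the exponent `r` such that
`D (1 - e + t • e) = t ^ r`, which plays the role of the dimension of the image of `e`. -/
noncomputable def rank (e : R) : ℕ :=
  (D.exists_polynomial_eval_add_smul (1 - e) e).choose.natDegree

theorem apply_one_sub_add_smul {e : R} (he : IsIdempotentElem e) (t : K) :
    D (1 - e + t • e) = t ^ D.rank e := by
  obtain ⟨-, -, hp⟩ := (D.exists_polynomial_eval_add_smul (1 - e) e).choose_spec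
  rw [rank]
  set p := (D.exists_polynomial_eval_add_smul (1 - e) e).choose
  have eval_one : p.eval 1 = 1 := by rw [hp, one_smul, sub_add_cancel, map_one]
  have eval_mul (s : K) : p.eval (t * s) = p.eval t * p.eval s := by
    rw [hp, hp, hp, ← map_mul]
    congr 1
    simp only [mul_add, add_mul, smul_mul_assoc, mul_smul_comm, he.eq, smul_smul, mul_comm s,
      he.one_sub.eq, he.mul_one_sub_self, he.one_sub_mul_self, smul_zero, add_zero, zero_add]
  have comp_eq : p.comp (Polynomial.C t * Polynomial.X) = Polynomial.C (p.eval t) * p :=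
    Polynomial.funext fun s => by simpa using eval_mul s
  have leadingCoeff_ne_zero : p.leadingCoeff ≠ 0 :=
    Polynomial.leadingCoeff_ne_zero.2 fun h => by simp [h] at eval_one
  have coeff_eq := congrArg (Polynomial.coeff · p.natDegree) comp_eq
  simp only [Polynomial.comp_C_mul_X_coeff, Polynomial.coeff_C_mul, Polynomial.coeff_natDegree,
    mul_comm (p.eval t)] at coeff_eq
  rw [← hp, mul_left_cancel₀ leadingCoeff_ne_zero coeff_eq]

theorem rank_eq_of_forall {e : R} (he : IsIdempotentElem e) {r : ℕ}
    (h : ∀ t : K, D (1 - e + t • e) = t ^ r) : D.rank e = r := by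
  have : (Polynomial.X ^ D.rank e : Polynomial K) = Polynomial.X ^ r :=
    Polynomial.funext fun t => by simp [← h, D.apply_one_sub_add_smul he]
  simpa using congrArg Polynomial.natDegree this

theorem rank_add {e f : R} (he : IsIdempotentElem e) (hf : IsIdempotentElem f) (hef : e * f = 0)
    (hfe : f * e = 0) : D.rank (e + f) = D.rank e + D.rank f := by
  refine D.rank_eq_of_forall (he.add hf (by rw [hef, hfe, add_zero])) fun t => ?_
  rw [pow_add, ← D.apply_one_sub_add_smul he, ← D.apply_one_sub_add_smul hf, ← map_mul]
  congr 1
  simp only [mul_add, add_mul, mul_sub, sub_mul, smul_mul_assoc, mul_smul_comm, hef, one_mul,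
    mul_one]
  module

theorem rank_one : D.rank (1 : R) = n :=
  D.rank_eq_of_forall .one fun t => by
    rw [sub_self, zero_add, D.map_smul, map_one, mul_one]

theorem rank_le {e : R} (he : IsIdempotentElem e) : D.rank e ≤ n := by
  have := D.rank_add he he.one_sub he.mul_one_sub_self he.one_sub_mul_self
  rw [add_sub_cancel, D.rank_one] at this
  omega

theorem rank_mul_comm {u v : R} (huv : IsIdempotentElem (u * v)) (hvu : IsIdempotentElem (v * u)) :
    D.rank (u * v) = D.rank (v * u) := by
  refine D.rank_eq_of_forall huv fun t => ?_
  have one_sub_add_smul (a : R) : 1 - a + t • a = 1 + (t - 1) • a := by module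
  rw [← D.apply_one_sub_add_smul hvu, one_sub_add_smul, one_sub_add_smul, ← smul_mul_assoc,
    D.apply_one_add_mul_comm, mul_smul_comm]

theorem Faithful.eq_zero_of_rank_eq_zero {D : DetForm K R n} (hD : D.Faithful) {e : R}
    (he : IsIdempotentElem e) (h : D.rank e = 0) : e = 0 := by
  refine (Submodule.mem_bot R).1 (hD ▸ D.mem_ker_iff_apply_one_add_mul.2 fun s => ?_)
  have apply_one_sub : D (1 - e) = 1 := by
    simpa [h] using D.apply_one_sub_add_smul he 0
  have one_sub_mul : (1 - e) * (1 + e * (s * e)) = 1 - e := by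
    rw [mul_add, mul_one, ← mul_assoc, he.one_sub_mul_self, zero_mul, add_zero]
  have := congrArg D one_sub_mul
  rwa [map_mul, apply_one_sub, one_mul, D.apply_one_add_mul_comm, mul_assoc, he.eq] at this

end DetForm

section Idempotents

theorem exists_isIdempotentElem_mul_of_isIntegral {k S : Type*} [Field k] [Ring S] [Algebra k S]
    {a : S} (ha : IsIntegral k a) (not_nilpotent : ¬IsNilpotent a) :
    ∃ w : S, IsIdempotentElem (w * a) ∧ w * a ≠ 0 := by
  obtain ⟨μ, μ_monic, hμ⟩ := ha
  have aeval_μ : Polynomial.aeval a μ = 0 := hμ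
  obtain ⟨g, hg, not_dvd⟩ :=
    Polynomial.exists_eq_pow_rootMultiplicity_mul_and_not_dvd μ μ_monic.ne_zero 0
  simp only [Polynomial.C_0, sub_zero] at hg not_dvd
  set r := μ.rootMultiplicity 0
  obtain ⟨u, v, huv⟩ : IsCoprime (Polynomial.X ^ (r + 1) : Polynomial k) g :=
    (Polynomial.irreducible_X.coprime_iff_not_dvd.2 not_dvd).pow_left
  have aeval_eq_zero : Polynomial.aeval a (Polynomial.X ^ (r + 1) * g) = 0 := by
    rw [pow_succ', mul_assoc, ← hg, map_mul, aeval_μ, mul_zero]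
  have aeval_mul : Polynomial.aeval a (u * Polynomial.X ^ r) * a =
      Polynomial.aeval a (u * Polynomial.X ^ (r + 1)) := by
    rw [pow_succ, ← mul_assoc, map_mul _ _ Polynomial.X, Polynomial.aeval_X]
  refine ⟨Polynomial.aeval a (u * Polynomial.X ^ r), ?_, fun h => not_nilpotent ⟨r + 1, ?_⟩⟩
  · have sq_eq : (u * Polynomial.X ^ (r + 1)) * (u * Polynomial.X ^ (r + 1)) =
        u * Polynomial.X ^ (r + 1) - (u * v) * (Polynomial.X ^ (r + 1) * g) := by
      linear_combination (u * Polynomial.X ^ (r + 1)) * huv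
    rw [aeval_mul, IsIdempotentElem, ← map_mul, sq_eq, map_sub, map_mul _ (u * v), aeval_eq_zero,
      mul_zero, sub_zero]
  · have pow_eq : (Polynomial.X ^ (r + 1) : Polynomial k) = Polynomial.X ^ (r + 1) *
        (u * Polynomial.X ^ (r + 1)) + v * (Polynomial.X ^ (r + 1) * g) := by
      linear_combination (-Polynomial.X ^ (r + 1)) * huv
    have := congrArg (Polynomial.aeval a) pow_eq
    rw [map_add, map_mul, map_mul _ v, aeval_eq_zero, ← aeval_mul, h, mul_zero, mul_zero,
      add_zero] at this
    simpa using this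

variable {S : Type*} [Ring S]

theorem exists_orthogonal_isIdempotentElem {J : Ideal S} {e x : S} (he : IsIdempotentElem e)
    (heJ : e ∈ J) (hxJ : x ∈ J) (hx : x * e ≠ x)
    (exists_idem : ∀ I : Ideal S, I ≠ ⊥ → ∃ f ∈ I, f ≠ 0 ∧ IsIdempotentElem f) :
    ∃ g ∈ J, g ≠ 0 ∧ IsIdempotentElem g ∧ e * g = 0 ∧ g * e = 0 := by
  obtain ⟨f, hf, f_ne_zero, f_idem⟩ :=
    exists_idem (J ⊓ LinearMap.ker (LinearMap.toSpanSingleton S S e)) fun h => by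
      have : x - x * e ∈ J ⊓ LinearMap.ker (LinearMap.toSpanSingleton S S e) :=
        ⟨J.sub_mem hxJ (J.mul_mem_left _ heJ), by
          simp [sub_mul, mul_assoc, he.eq]⟩
      rw [h, Submodule.mem_bot, sub_eq_zero] at this
      exact hx this.symm
  obtain ⟨hfJ, hfe⟩ : f ∈ J ∧ f * e = 0 := by simpa using hf
  have f_mul (y : S) : f * (e * y) = 0 := by rw [← mul_assoc, hfe, zero_mul]
  refine ⟨f - e * f, J.sub_mem hfJ (J.mul_mem_left _ hfJ), fun h => f_ne_zero ?_, ?_, ?_, ?_⟩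
  · rw [← f_idem.eq, sub_eq_zero.1 h, mul_assoc, f_mul, mul_zero]
  · simp only [IsIdempotentElem, sub_mul, mul_sub, f_idem.eq, f_mul, mul_assoc, mul_zero, sub_zero]
  · rw [mul_sub, ← mul_assoc, he.eq, sub_self]
  · rw [sub_mul, mul_assoc, hfe, mul_zero, sub_zero]

theorem isSemisimpleRing_of_forall_exists_isIdempotentElem
    (h : ∀ J : Ideal S, ∃ e ∈ J, ∀ x ∈ J, x * e = x) : IsSemisimpleRing S := by
  refine @IsSemisimpleModule.mk _ _ _ _ _ ⟨fun J => ?_⟩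
  obtain ⟨e, heJ, he⟩ := h J
  refine ⟨LinearMap.ker (LinearMap.toSpanSingleton S S e), disjoint_iff.2 (eq_bot_iff.2 ?_), ?_⟩
  · rintro x ⟨hxJ, hx⟩
    rwa [← he x hxJ]
  · rw [codisjoint_iff, Ideal.eq_top_iff_one, Submodule.mem_sup]
    exact ⟨e, heJ, 1 - e, by simp [sub_mul, he e heJ], by simp⟩

/-- An idempotent of maximal rank in a left ideal generates it. -/
theorem isSemisimpleRing_of_rank {ρ : S → ℕ} {n : ℕ}
    (rank_add : ∀ e f : S, IsIdempotentElem e → IsIdempotentElem f → e * f = 0 → f * e = 0 →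
      ρ (e + f) = ρ e + ρ f)
    (rank_le : ∀ e : S, IsIdempotentElem e → ρ e ≤ n)
    (eq_zero_of_rank_eq_zero : ∀ e : S, IsIdempotentElem e → ρ e = 0 → e = 0)
    (exists_idem : ∀ J : Ideal S, J ≠ ⊥ → ∃ e ∈ J, e ≠ 0 ∧ IsIdempotentElem e) :
    IsSemisimpleRing S := by
  classical
  refine isSemisimpleRing_of_forall_exists_isIdempotentElem fun J => ?_
  let IsRank (m : ℕ) : Prop := ∃ e ∈ J, IsIdempotentElem e ∧ ρ e = m
  obtain ⟨e, heJ, he, rank_e⟩ : IsRank (Nat.findGreatest IsRank n) :=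
    Nat.findGreatest_spec (rank_le 0 .zero) ⟨0, J.zero_mem, .zero, rfl⟩
  refine ⟨e, heJ, fun x hxJ => of_not_not fun hx => ?_⟩
  obtain ⟨g, hgJ, g_ne_zero, hg, heg, hge⟩ :=
    exists_orthogonal_isIdempotentElem he heJ hxJ hx exists_idem
  have sum_idem : IsIdempotentElem (e + g) := he.add hg (by rw [heg, hge, add_zero])
  have rank_sum_le : ρ (e + g) ≤ Nat.findGreatest IsRank n :=
    Nat.le_findGreatest (rank_le _ sum_idem) ⟨e + g, J.add_mem heJ hgJ, sum_idem, rfl⟩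
  rw [rank_add e g he hg heg hge, rank_e] at rank_sum_le
  exact g_ne_zero (eq_zero_of_rank_eq_zero g hg (by omega))

end Idempotents

namespace DetForm

variable {K R : Type*} [Field K] [Ring R] [Algebra K R] {n : ℕ}

theorem apply_one_add_of_isNilpotent [IsAlgClosed K] (D : DetForm K R n) {z : R}
    (hz : IsNilpotent z) : D (1 + z) = 1 := by
  obtain ⟨p, -, -, hp⟩ := D.exists_polynomial_eval_add_smul 1 z
  have eval_ne_zero (t : K) : p.eval t ≠ 0 :=
    hp t ▸ ((hz.smul t).isUnit_one_add.map D).ne_zero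
  have degree_eq_zero : p.degree = 0 := of_not_not fun h =>
    (IsAlgClosed.exists_root p h).elim eval_ne_zero
  rw [Polynomial.eq_C_of_degree_eq_zero degree_eq_zero] at hp
  simp only [Polynomial.eval_C] at hp
  rw [← one_smul K z, ← hp, hp 0, zero_smul, add_zero, map_one]

variable {D : DetForm K R n}

theorem Faithful.isSemisimpleRing_of_injective [Infinite K] (hD : D.Faithful) {k S : Type*}
    [Field k] [Ring S] [Algebra k S] [Algebra.IsIntegral k S] {φ : S →+* R}
    (φ_injective : Function.Injective φ)
    (eq_bot_of_nil : ∀ J : Ideal S, (∀ a ∈ J, IsNilpotent a) → J = ⊥) : IsSemisimpleRing S := by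
  have idem_map {e : S} (he : IsIdempotentElem e) : IsIdempotentElem (φ e) := he.map φ
  refine isSemisimpleRing_of_rank (ρ := fun e => D.rank (φ e)) (n := n) ?_
    (fun e he => D.rank_le (idem_map he))
    (fun e he h => φ_injective
      ((hD.eq_zero_of_rank_eq_zero (idem_map he) h).trans (map_zero φ).symm))
    fun J hJ => ?_
  · intro e f he hf hef hfe
    rw [map_add]
    exact D.rank_add (idem_map he) (idem_map hf) (by rw [← map_mul, hef, map_zero])
      (by rw [← map_mul, hfe, map_zero])
  · obtain ⟨a, haJ, ha⟩ : ∃ a ∈ J, ¬IsNilpotent a := by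
      by_contra! h
      exact hJ (eq_bot_of_nil J h)
    obtain ⟨w, idem, ne_zero⟩ :=
      exists_isIdempotentElem_mul_of_isIntegral (Algebra.IsIntegral.isIntegral (R := k) a) ha
    exact ⟨w * a, J.mul_mem_left _ haJ, ne_zero, idem⟩

variable [IsAlgClosed K]

theorem Faithful.eq_bot_of_forall_isNilpotent (hD : D.Faithful) {J : Ideal R}
    (hJ : ∀ a ∈ J, IsNilpotent a) : J = ⊥ :=
  eq_bot_iff.2 fun _ ha => hD ▸ D.mem_ker_iff_apply_one_add_mul.2 fun _ =>
    D.apply_one_add_of_isNilpotent (hJ _ (J.mul_mem_left _ ha))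

theorem Faithful.exists_algEquiv_pi_matrix (hD : D.Faithful) :
    ∃ (t : ℕ) (c : Fin t → ℕ), (∀ i, NeZero (c i)) ∧
      Nonempty (R ≃ₐ[K] Π i, Matrix (Fin (c i)) (Fin (c i)) K) := by
  have : Algebra.IsIntegral K R := ⟨hD.isIntegral⟩
  have : IsSemisimpleRing R := hD.isSemisimpleRing_of_injective (k := K) (φ := .id R)
    Function.injective_id fun J => hD.eq_bot_of_forall_isNilpotent
  obtain ⟨t, E, c, _, _, hc, ⟨e⟩⟩ := IsSemisimpleRing.exists_algEquiv_pi_matrix_divisionRing K R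
  have (i : Fin t) : Algebra.IsIntegral K (E i) := by
    refine ⟨fun δ => ?_⟩
    have integral_scalar : IsIntegral K (Matrix.scalar (Fin (c i)) δ) := by
      simpa using (hD.isIntegral (e.symm (Pi.single i (Matrix.scalar (Fin (c i)) δ)))).map
        ((Pi.evalAlgHom K (fun i => Matrix (Fin (c i)) (Fin (c i)) (E i)) i).comp e.toAlgHom)
    exact (isIntegral_algHom_iff (Matrix.scalarAlgHom (α := E i) (Fin (c i)) K)
      fun _ _ h => Matrix.scalar_inj.1 h).1 integral_scalar
  exact ⟨t, c, hc, ⟨e.trans <| .piCongrRight fun i => .mapMatrix <| .symm <| .ofBijective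
    (Algebra.ofId K (E i)) IsAlgClosed.algebraMap_bijective_of_isIntegral⟩⟩

end DetForm

/-! ### Involutions of matrix algebras -/

section MatrixInvolution

variable {K : Type u} [Field K] {m : ℕ} (τ : InvAlg K (Matrix (Fin m) (Fin m) K))

theorem InvAlg.exists_star_eq_conj_transpose :
    ∃ u : Matrix (Fin m) (Fin m) K, IsUnit u.det ∧ ∀ y, τ.star y = u * yᵀ * u⁻¹ := by
  let γ : Matrix (Fin m) (Fin m) K ≃ₐ[K] Matrix (Fin m) (Fin m) K :=
    AlgEquiv.ofLinearEquiv
      ((transposeLinearEquiv (Fin m) (Fin m) K K).trans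
        (LinearEquiv.ofInvolutive τ.star τ.star_star))
      ((congrArg τ.star transpose_one).trans τ.star_one)
      (fun x y => (congrArg τ.star (transpose_mul x y)).trans (τ.star_mul yᵀ xᵀ))
  have γ_apply (y) : γ y = τ.star yᵀ := rfl
  let L : Matrix (Fin m) (Fin m) K ≃ₐ[K] Module.End K (Fin m → K) := toLinAlgEquiv'
  obtain ⟨g, hg⟩ := AlgEquiv.eq_linearEquivConjAlgEquiv ((L.symm.trans γ).trans L)
  have huv : L.symm g.toLinearMap * L.symm g.symm.toLinearMap = 1 := by
    rw [← map_mul, ← map_one L.symm]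
    exact congrArg L.symm (LinearMap.ext fun x => g.apply_symm_apply x)
  refine ⟨L.symm g.toLinearMap, (isUnit_iff_isUnit_det _).1 (IsUnit.of_mul_eq_one _ huv),
    fun y => ?_⟩
  rw [inv_eq_right_inv huv, ← transpose_transpose y, ← γ_apply, transpose_transpose]
  apply L.injective
  have h := DFunLike.congr_fun hg (L yᵀ)
  simp only [AlgEquiv.trans_apply, AlgEquiv.symm_apply_apply] at h
  rw [h, map_mul, map_mul, AlgEquiv.apply_symm_apply, AlgEquiv.apply_symm_apply,
    LinearEquiv.conjAlgEquiv_apply]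
  rfl

variable {τ} {u : Matrix (Fin m) (Fin m) K}

theorem InvAlg.transpose_eq_or_eq_neg [NeZero m] (hu : IsUnit u.det)
    (hτ : ∀ y, τ.star y = u * yᵀ * u⁻¹) : uᵀ = -u ∨ uᵀ = u := by
  have u_mul_inv : u * u⁻¹ = 1 := mul_nonsing_inv u hu
  have inv_mul_u : u⁻¹ * u = 1 := nonsing_inv_mul u hu
  have commute (y) : uᵀ * u⁻¹ * y = y * (uᵀ * u⁻¹) := by
    have h := τ.star_star y
    rw [hτ y, hτ, transpose_mul, transpose_mul, transpose_transpose] at h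
    have huu : uᵀ * u⁻¹ᵀ = 1 := by rw [← transpose_mul, inv_mul_u, transpose_one]
    calc uᵀ * u⁻¹ * y = uᵀ * u⁻¹ * (u * (u⁻¹ᵀ * (y * uᵀ)) * u⁻¹) := by rw [h]
      _ = uᵀ * (u⁻¹ * u) * u⁻¹ᵀ * y * uᵀ * u⁻¹ := by simp only [mul_assoc]
      _ = y * (uᵀ * u⁻¹) := by rw [inv_mul_u, mul_one, huu, one_mul, mul_assoc]
  obtain ⟨c, hc⟩ := mem_range_scalar_of_commute_single (M := uᵀ * u⁻¹)
    fun i j _ => (commute _).symm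
  have transpose_u : uᵀ = c • u := by
    rw [← mul_one uᵀ, ← inv_mul_u, ← mul_assoc, ← hc, scalar_apply, ← smul_one_eq_diagonal,
      smul_mul_assoc, one_mul]
  have u_ne_zero : u ≠ 0 := by
    rintro rfl
    exact zero_ne_one ((zero_mul _).symm.trans u_mul_inv)
  have c_mul_self : c * c = 1 := by
    have h : (c * c) • u = (1 : K) • u := by
      rw [mul_smul, ← transpose_u, ← transpose_smul, ← transpose_u, transpose_transpose, one_smul]
    exact smul_left_injective K u_ne_zero h
  rcases mul_self_eq_one_iff.1 c_mul_self with rfl | rfl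
  · exact Or.inr (by rw [transpose_u, one_smul])
  · exact Or.inl (by rw [transpose_u, neg_one_smul])

end MatrixInvolution

section AdjugateCharmatrix

open Polynomial

theorem coeff_one_det_add_X_smul {S n : Type*} [CommRing S] [IsDomain S] [Fintype n]
    [DecidableEq n] {A : Matrix n n S} (hA : A.det ≠ 0) (B : Matrix n n S) :
    (A.map C + (X : S[X]) • B.map C).det.coeff 1 = (A.adjugate * B).trace := by
  let φ := algebraMap S (FractionRing S)
  have φ_injective : Function.Injective φ := IsFractionRing.injective S (FractionRing S)
  have hdet : IsUnit (A.map φ).det := by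
    rw [isUnit_iff_ne_zero, ← RingHom.mapMatrix_apply, ← RingHom.map_det]
    exact (map_ne_zero_iff _ φ_injective).2 hA
  have factor : (A.map φ).map C + (X : (FractionRing S)[X]) • (B.map φ).map C =
      (A.map φ).map C * (1 + (X : (FractionRing S)[X]) • ((A.map φ)⁻¹ * B.map φ).map C) := by
    rw [mul_add, mul_one, mul_smul_comm, ← Matrix.map_mul, mul_nonsing_inv_cancel_left _ _ hdet]
  have map_pencil : (A.map C + (X : S[X]) • B.map C).map (mapRingHom φ) =
      (A.map φ).map C + (X : (FractionRing S)[X]) • (B.map φ).map C := by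
    ext1 i j
    simp
  apply φ_injective
  rw [← coeff_map, ← coe_mapRingHom, RingHom.map_det, RingHom.mapMatrix_apply, map_pencil, factor,
    det_mul, ← RingHom.mapMatrix_apply, ← RingHom.map_det, coeff_C_mul,
    coeff_det_one_add_X_smul_one, ← smul_eq_mul, ← trace_smul, ← smul_mul_assoc, inv_def,
    smul_smul, Ring.mul_inverse_cancel _ hdet, one_smul, ← RingHom.mapMatrix_apply,
    ← RingHom.mapMatrix_apply, ← RingHom.map_adjugate, ← map_mul, AddMonoidHom.map_trace φ]
  rfl

theorem adjugate_mul_eq_mul_transpose {S n : Type*} [CommRing S] [Fintype n] [DecidableEq n]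
    {A U : Matrix n n S} (hU : IsUnit U.det) (h : U * Aᵀ = A * U) :
    adjugate A * U = U * (adjugate A)ᵀ := by
  have h' : U * (adjugate U * adjugate A) * U = U * (adjugate Aᵀ * adjugate U) * U := by
    rw [← adjugate_mul_distrib, ← adjugate_mul_distrib, h]
  rw [← mul_assoc, mul_adjugate, mul_assoc U, mul_assoc (adjugate Aᵀ), adjugate_mul,
    smul_mul_assoc, one_mul, smul_mul_assoc, mul_smul_comm, mul_one, mul_smul_comm,
    ← adjugate_transpose] at h'
  exact hU.smul_left_cancel.1 h'

theorem aeval_eq_zero_of_mul_charmatrix {S n : Type*} [CommRing S] [Fintype n] [DecidableEq n]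
    {x : Matrix n n S} {q : S[X]} {B : Matrix n n S[X]} (h : B * charmatrix x = q • 1) :
    aeval x q = 0 := by
  have h' := congrArg (fun M => (matPolyEquiv M).eval x) h
  simpa only [map_mul, matPolyEquiv_charmatrix, eval_mul_X_sub_C, matPolyEquiv_smul_one, eval_map,
    ← aeval_def, eq_comm] using h'

variable {K : Type u} [Field K] {m : ℕ} {τ : InvAlg K (Matrix (Fin m) (Fin m) K)}
  {x : Matrix (Fin m) (Fin m) K}

theorem trace_adjugate_charmatrix_mul_star (hx : τ.star x = x) (y : Matrix (Fin m) (Fin m) K) :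
    (adjugate (charmatrix x) * (τ.star y).map C).trace =
      (adjugate (charmatrix x) * y.map C).trace := by
  obtain ⟨u, hu, hτ⟩ := τ.exists_star_eq_conj_transpose
  have hxu : u * xᵀ = x * u := by
    rw [← hx, hτ, nonsing_inv_mul_cancel_right _ _ hu, ← hτ, hx]
  set A := charmatrix x with hA
  set U : Matrix (Fin m) (Fin m) K[X] := u.map C with hU
  have U_mul_inv : U * u⁻¹.map C = 1 := by
    rw [hU, ← Matrix.map_mul, mul_nonsing_inv _ hu, Matrix.map_one _ C_0 C_1]
  have inv_mul_U : u⁻¹.map C * U = 1 := mul_eq_one_comm.1 U_mul_inv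
  have U_mul_transpose : U * Aᵀ = A * U := by
    rw [hA, charmatrix, RingHom.mapMatrix_apply, transpose_sub, mul_sub, sub_mul, scalar_apply,
      ← smul_one_eq_diagonal, transpose_smul, transpose_one, mul_smul_comm, smul_mul_assoc,
      mul_one, one_mul, ← transpose_map, hU, ← Matrix.map_mul, ← Matrix.map_mul, hxu]
  have adjugate_mul_U : adjugate A * U = U * (adjugate A)ᵀ :=
    adjugate_mul_eq_mul_transpose
      ((isUnit_iff_isUnit_det U).1 (IsUnit.of_mul_eq_one _ U_mul_inv)) U_mul_transpose
  calc (adjugate A * (τ.star y).map C).trace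
      = (adjugate A * U * (yᵀ.map C * u⁻¹.map C)).trace := by
        rw [hτ, Matrix.map_mul, Matrix.map_mul]
        simp only [U, mul_assoc]
    _ = ((adjugate A)ᵀ * yᵀ.map C * (u⁻¹.map C * U)).trace := by
        rw [adjugate_mul_U, mul_assoc U, trace_mul_comm U]
        simp only [mul_assoc]
    _ = (adjugate A * y.map C).trace := by
        rw [inv_mul_U, mul_one, transpose_map, ← transpose_mul, trace_transpose, trace_mul_comm]

theorem exists_sq_eq_charpoly_dvd_trace (h2 : (2 : K) ≠ 0) (hx : τ.star x = x)
    (hsq : ∀ r, τ.star r = r → ∃ F : K[X][X],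
      F ^ 2 = ((charmatrix x).map C + (X : K[X][X]) • (r.map C).map C).det) :
    ∃ q : K[X], q ^ 2 = x.charpoly ∧ ∀ y, q ∣ (adjugate (charmatrix x) * Matrix.map y C).trace := by
  have h2C : IsUnit (2 : K[X]) := by
    rw [← C_ofNat]
    exact (isUnit_iff_ne_zero.2 h2).map C
  have exists_sqrt (r) (hr : τ.star r = r) : ∃ q₀ : K[X], q₀ ^ 2 = x.charpoly ∧
      q₀ ∣ (adjugate (charmatrix x) * Matrix.map r C).trace := by
    obtain ⟨F, hF⟩ := hsq r hr
    refine ⟨F.coeff 0, ?_, 2 * F.coeff 1, ?_⟩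
    · rw [← constantCoeff_apply, ← map_pow, hF, RingHom.map_det, charpoly]
      congr 1
      ext1 i j
      simp
    · rw [← coeff_one_det_add_X_smul x.charpoly_monic.ne_zero, ← hF, sq, mul_coeff_one]
      ring
  obtain ⟨q, hq, -⟩ := exists_sqrt 0 (map_zero _)
  have dvd_of_symm (r) (hr : τ.star r = r) :
      q ∣ (adjugate (charmatrix x) * Matrix.map r C).trace := by
    obtain ⟨q₀, hq₀, hdvd⟩ := exists_sqrt r hr
    rcases sq_eq_sq_iff_eq_or_eq_neg.1 (hq₀.trans hq.symm) with rfl | rfl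
    · exact hdvd
    · exact neg_dvd.1 hdvd
  refine ⟨q, hq, fun y => ?_⟩
  have h := dvd_of_symm (y + τ.star y) (by rw [map_add, τ.star_star, add_comm])
  rwa [Matrix.map_add _ fun _ _ => C_add, mul_add, trace_add, trace_adjugate_charmatrix_mul_star hx,
    ← two_mul, h2C.dvd_mul_left] at h

theorem exists_sq_eq_charpoly_aeval_eq_zero (h2 : (2 : K) ≠ 0) (hx : τ.star x = x)
    (hsq : ∀ r, τ.star r = r → ∃ F : K[X][X],
      F ^ 2 = ((charmatrix x).map C + (X : K[X][X]) • (r.map C).map C).det) :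
    ∃ q : K[X], q ^ 2 = x.charpoly ∧ aeval x q = 0 := by
  obtain ⟨q, hq, hdvd⟩ := exists_sq_eq_charpoly_dvd_trace h2 hx hsq
  have entry_dvd (i j) : q ∣ adjugate (charmatrix x) i j := by
    have h := hdvd (single j i 1)
    rwa [map_single _ _ _ C, C_1, trace_mul_single, MulOpposite.op_one, one_smul] at h
  choose B hB using entry_dvd
  have adjugate_eq : adjugate (charmatrix x) = q • Matrix.of B := by
    ext1 i j
    exact hB i j
  have q_ne_zero : q ≠ 0 := by
    rintro rfl
    exact x.charpoly_monic.ne_zero (by rw [← hq, zero_pow two_ne_zero])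
  refine ⟨q, hq, aeval_eq_zero_of_mul_charmatrix (B := Matrix.of B) ?_⟩
  have h : q • (Matrix.of B * charmatrix x) = q • (q • 1) := by
    rw [← smul_mul_assoc, ← adjugate_eq, adjugate_mul, smul_smul, ← sq, hq, charpoly]
  exact smul_right_injective _ q_ne_zero h

end AdjugateCharmatrix

/-! ### Involutions of finite products of simple rings -/

section PiInvolution

theorem eq_zero_or_eq_one_of_mem_center {S : Type*} [Ring S] [IsSimpleRing S] {e : S}
    (he : IsIdempotentElem e) (hc : e ∈ Subring.center S) : e = 0 ∨ e = 1 := by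
  let _ : Field (Subring.center S) := (IsSimpleRing.isField_center S).toField
  have h : IsIdempotentElem (⟨e, hc⟩ : Subring.center S) := Subtype.ext he
  exact (IsIdempotentElem.iff_eq_zero_or_one.1 h).imp (congrArg Subtype.val)
    (congrArg Subtype.val)

variable {k : Type u} [CommRing k] {ι : Type} [DecidableEq ι] {A : ι → Type u}
  [∀ i, Ring (A i)] [∀ i, Algebra k (A i)] {s : InvAlg k (Π i, A i)}

theorem InvAlg.star_single_apply_eq_zero_or_one [∀ i, IsSimpleRing (A i)] (i j : ι) :
    s.star (Pi.single i 1) j = 0 ∨ s.star (Pi.single i 1) j = 1 := by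
  have idem : IsIdempotentElem (s.star (Pi.single i 1)) := by
    rw [IsIdempotentElem, ← s.star_mul, ← Pi.single_mul, one_mul]
  have commute (x : Π i, A i) : x * s.star (Pi.single i 1) = s.star (Pi.single i 1) * x := by
    have h : s.star x * Pi.single i 1 = Pi.single i 1 * s.star x := by
      rw [← Pi.single_mul_left, ← Pi.single_mul_right, mul_one, one_mul]
    simpa only [s.star_mul, s.star_star] using (congrArg s.star h).symm
  refine eq_zero_or_eq_one_of_mem_center (congrFun idem j) (Subring.mem_center_iff.2 fun y => ?_)
  simpa using congrFun (commute (Pi.single j y)) j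

theorem InvAlg.exists_star_single_eq [∀ i, IsSimpleRing (A i)] (i : ι) :
    ∃ j, s.star (Pi.single i 1) = Pi.single j 1 := by
  have star_single_ne_zero (j : ι) : s.star (Pi.single j 1) ≠ 0 := fun h => by
    have h' := congrArg s.star h
    rw [s.star_star, map_zero, Pi.single_eq_zero_iff] at h'
    exact one_ne_zero h'
  obtain ⟨j, hj⟩ : ∃ j, s.star (Pi.single i 1) j = 1 := by
    by_contra! h
    exact star_single_ne_zero i
      (funext fun j => (star_single_apply_eq_zero_or_one i j).resolve_right (h j))
  have mul_single : s.star (Pi.single i 1) * Pi.single j 1 = Pi.single j 1 := by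
    rw [← Pi.single_mul_right, hj, one_mul]
  have star_single : s.star (Pi.single j 1) = Pi.single i (s.star (Pi.single j 1) i) := by
    have h := congrArg s.star mul_single
    rwa [s.star_mul, s.star_star, ← Pi.single_mul_right, mul_one, eq_comm] at h
  refine ⟨j, ?_⟩
  rcases star_single_apply_eq_zero_or_one (s := s) j i with h | h
  · exact absurd (by rw [star_single, h, Pi.single_zero]) (star_single_ne_zero j)
  · rw [← h, ← star_single, s.star_star]

theorem InvAlg.exists_involutive_star_single [∀ i, IsSimpleRing (A i)] :
    ∃ σ : ι → ι, σ.Involutive ∧ ∀ i, s.star (Pi.single i 1) = Pi.single (σ i) 1 := by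
  choose σ hσ using InvAlg.exists_star_single_eq (s := s)
  refine ⟨σ, fun i => ?_, hσ⟩
  have h := congrFun (s.star_star (Pi.single i 1)) i
  rw [hσ, hσ, Pi.single_eq_same] at h
  by_contra hne
  rw [Pi.single_eq_of_ne (Ne.symm hne)] at h
  exact zero_ne_one h

theorem InvAlg.star_single {i j : ι} (h : s.star (Pi.single i 1) = Pi.single j 1)
    (x : Π i, A i) : s.star (Pi.single i (x i)) = Pi.single j (s.star x j) := by
  rw [← one_mul (x i), Pi.single_mul_left, s.star_mul, h, ← Pi.single_mul_right, mul_one]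

theorem InvAlg.star_apply_eq_zero {i j : ι} (h : s.star (Pi.single i 1) = Pi.single j 1)
    {x : Π i, A i} (hx : x i = 0) : s.star x j = 0 := by
  rw [← Pi.single_eq_zero_iff (i := j), ← star_single h, hx, Pi.single_zero, map_zero]

/-- The involution that an involution fixing the unit of the `i`-th factor of a product induces on
that factor. -/
def InvAlg.component {i : ι} (h : s.star (Pi.single i 1) = Pi.single i 1) : InvAlg k (A i) where
  star := LinearMap.proj i ∘ₗ s.star ∘ₗ LinearMap.single k A i
  star_one := by
    change s.star (Pi.single i 1) i = 1
    rw [h, Pi.single_eq_same]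
  star_mul x y := by
    change s.star (Pi.single i (x * y)) i = s.star (Pi.single i y) i * s.star (Pi.single i x) i
    rw [Pi.single_mul, s.star_mul, Pi.mul_apply]
  star_star x := by
    change s.star (Pi.single i (s.star (Pi.single i x) i)) i = x
    rw [InvAlg.star_single h, s.star_star, Pi.single_eq_same, Pi.single_eq_same]

theorem InvAlg.single_component_star {i : ι} (h : s.star (Pi.single i 1) = Pi.single i 1)
    (y : A i) : Pi.single i ((InvAlg.component h).star y) = s.star (Pi.single i y) := by
  have h' := InvAlg.star_single h (Pi.single i y)
  rw [Pi.single_eq_same] at h'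
  exact h'.symm

end PiInvolution

/-! ### The Cayley–Hamilton theorem for square roots on symmetric elements -/

theorem map_eq_det_pow {K n : Type*} [Field K] [Fintype n] [DecidableEq n]
    (f : Matrix n n K →* K) {m : ℕ}
    (map_transvection : ∀ t : TransvectionStruct n K, f t.toMatrix = 1)
    (map_diagonal : ∀ j t, f (diagonal (Pi.mulSingle j t)) = t ^ m) (A : Matrix n n K) :
    f A = A.det ^ m := by
  induction A using diagonal_transvection_induction with
  | hdiag v =>
    let g : (n → K) →* K := f.comp (diagonalRingHom n K : (n → K) →* Matrix n n K)
    calc f (diagonal v) = g (∏ j, Pi.mulSingle j (v j)) := by rw [Finset.univ_prod_mulSingle]; rfl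
      _ = ∏ j, v j ^ m := by rw [map_prod]; exact Finset.prod_congr rfl fun j _ => map_diagonal j _
      _ = (diagonal v).det ^ m := by rw [det_diagonal, Finset.prod_pow]
  | htransvec t => rw [map_transvection, t.det, one_pow]
  | hmul A B hA hB => rw [map_mul, det_mul, hA, hB, mul_pow]

theorem mulSingle_eq_one_add_single {ι : Type*} [DecidableEq ι] {A : ι → Type*} [∀ i, Ring (A i)]
    (i : ι) (y : A i) : Pi.mulSingle i y = 1 + Pi.single i (y - 1) := by
  ext j
  rcases eq_or_ne j i with rfl | hj
  · simp
  · simp [hj]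

namespace DetForm

section Blocks

variable {K : Type*} [Field K] [IsAlgClosed K] {N t : ℕ} {c : Fin t → ℕ}
  {E : DetForm K (Π i, Matrix (Fin (c i)) (Fin (c i)) K) N}

theorem Faithful.exists_apply_mulSingle_eq_det_pow (hE : E.Faithful) (i : Fin t)
    (hc : NeZero (c i)) :
    ∃ m ≠ 0, ∀ y, E (Pi.mulSingle i y) = y.det ^ m := by
  let e (a b : Fin (c i)) : Π i, Matrix (Fin (c i)) (Fin (c i)) K := Pi.single i (single a b 1)
  have e_mul (a b d : Fin (c i)) : e a b * e b d = e a d := by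
    rw [← Pi.single_mul, single_mul_single_same, one_mul]
  have rank_eq (a : Fin (c i)) : E.rank (e a a) = E.rank (e 0 0) := by
    rw [← e_mul a 0 a, ← e_mul 0 a 0]
    exact E.rank_mul_comm (by rw [e_mul]; exact e_mul a a a) (by rw [e_mul]; exact e_mul 0 0 0)
  let f : Matrix (Fin (c i)) (Fin (c i)) K →* K :=
    (E : (Π i, Matrix (Fin (c i)) (Fin (c i)) K) →* K).comp
      (MonoidHom.mulSingle (fun i => Matrix (Fin (c i)) (Fin (c i)) K) i)
  refine ⟨E.rank (e 0 0), fun h => ?_,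
    fun y => map_eq_det_pow f (fun T => ?_) (fun a s => ?_) y⟩
  · have h := congrFun (hE.eq_zero_of_rank_eq_zero (e_mul 0 0 0) h) i
    simp only [e, Pi.single_eq_same] at h
    exact one_ne_zero ((single_apply_same 0 0 (1 : K)).symm.trans (congrFun₂ h 0 0))
  · have nilpotent : IsNilpotent (Pi.single i (single T.i T.j T.c) :
        Π i, Matrix (Fin (c i)) (Fin (c i)) K) :=
      ⟨2, by rw [sq, ← Pi.single_mul, single_mul_single_of_ne _ _ _ _ T.hij.symm, Pi.single_zero]⟩
    change E (Pi.mulSingle i (1 + single T.i T.j T.c)) = 1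
    rw [mulSingle_eq_one_add_single, add_sub_cancel_left, E.apply_one_add_of_isNilpotent nilpotent]
  · have diagonal_eq : diagonal (Pi.mulSingle a s) = 1 + (s - 1) • single a a (1 : K) := by
      rw [mulSingle_eq_one_add_single, smul_single, smul_eq_mul, mul_one, ← diagonal_single,
        ← diagonal_one, diagonal_add]
      rfl
    change E (Pi.mulSingle i (diagonal (Pi.mulSingle a s))) = s ^ _
    rw [mulSingle_eq_one_add_single, diagonal_eq, add_sub_cancel_left, ← rank_eq a,
      ← E.apply_one_sub_add_smul (e_mul a a a), Pi.single_smul]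
    congr 1
    module

theorem Faithful.exists_eq_prod_det_pow (hE : E.Faithful) (hc : ∀ i, NeZero (c i)) :
    ∃ m : Fin t → ℕ, (∀ i, m i ≠ 0) ∧ ∀ y, E y = ∏ i, (y i).det ^ m i := by
  choose m hm E_mulSingle using fun i => hE.exists_apply_mulSingle_eq_det_pow i (hc i)
  let g : (Π i, Matrix (Fin (c i)) (Fin (c i)) K) →* K :=
    ∏ i, (powMonoidHom (m i)).comp (detMonoidHom.comp (Pi.evalMonoidHom _ i))
  have E_eq_g : (E : _ →* K) = g := MonoidHom.pi_ext fun i y => by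
    refine (E_mulSingle i y).trans ?_
    rw [MonoidHom.finsetProd_apply, Finset.prod_eq_single i]
    · simp
    · intro j _ hj
      simp [hj]
    · simp
  refine ⟨m, hm, fun y => (DFunLike.congr_fun E_eq_g y).trans ?_⟩
  rw [MonoidHom.finsetProd_apply]
  rfl

end Blocks

end DetForm

section Squares

open Polynomial

theorem exists_sq_eq_of_sq_eq_pow {S : Type*} [CommRing S] [IsDomain S] [IsIntegrallyClosed S]
    {F G : S} {m : ℕ} (hm : Odd m) (h : F ^ 2 = G ^ m) : ∃ H, H ^ 2 = G := by
  obtain ⟨j, rfl⟩ := hm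
  obtain ⟨H, rfl⟩ : G ^ j ∣ F := (IsIntegrallyClosed.pow_dvd_pow_iff two_ne_zero).1
    ⟨G, by rw [h, pow_succ, pow_mul']⟩
  rcases eq_or_ne G 0 with rfl | hG
  · exact ⟨0, zero_pow two_ne_zero⟩
  · refine ⟨H, mul_left_cancel₀ (pow_ne_zero (2 * j) hG) ?_⟩
    rw [← pow_succ, ← h, mul_pow, ← pow_mul']

theorem eq_of_forall_evalEval_eq {S : Type*} [CommRing S] [IsDomain S] [Infinite S] {F G : S[X][X]}
    (h : ∀ a b, F.evalEval a b = G.evalEval a b) : F = G := by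
  have map_eq (a : S) : F.map (evalRingHom a) = G.map (evalRingHom a) :=
    Polynomial.funext fun b => by
      rw [map_evalRingHom_eval, map_evalRingHom_eval, h]
  ext1 n
  refine Polynomial.funext fun a => ?_
  simpa using congrArg (coeff · n) (map_eq a)

/-- The restriction of `E` to the symmetric elements is the square of a polynomial function. -/
def DetForm.IsSquareOnSymm {K W : Type u} [CommRing K] [Ring W] [Algebra K W] {n : ℕ}
    (E : DetForm K W n) (s : InvAlg K W) : Prop :=
  ∀ (m : ℕ) (y : Fin m → W), (∀ i, s.star (y i) = y i) →
    ∃ p : MvPolynomial (Fin m) K, ∀ v, MvPolynomial.eval v p ^ 2 = E (∑ i, v i • y i)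

variable {K : Type u} [Field K] [IsAlgClosed K] {N t : ℕ} {c m : Fin t → ℕ}
  {E : DetForm K (Π i, Matrix (Fin (c i)) (Fin (c i)) K) N}
  {s : InvAlg K (Π i, Matrix (Fin (c i)) (Fin (c i)) K)}
  {x : Π i, Matrix (Fin (c i)) (Fin (c i)) K}

theorem exists_sq_eq_det_charmatrix_add (E_eq : ∀ y, E y = ∏ i, (y i).det ^ m i)
    (hsq : E.IsSquareOnSymm s) (hx : s.star x = x) {i : Fin t} (hm : Odd (m i))
    (hi : s.star (Pi.single i 1) = Pi.single i 1) {r : Matrix (Fin (c i)) (Fin (c i)) K}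
    (hr : s.star (Pi.single i r) = Pi.single i r) :
    ∃ F : K[X][X],
      F ^ 2 = ((charmatrix (x i)).map C + (X : K[X][X]) • (r.map C).map C).det := by
  have star_single_x : s.star (Pi.single i (x i)) = Pi.single i (x i) := by
    rw [InvAlg.star_single hi, hx]
  obtain ⟨p, hp⟩ := hsq 3
    ![1 - Pi.single i 1 - Pi.single i (x i), Pi.single i 1, Pi.single i r] <| by
    intro l
    fin_cases l
    · change s.star (_ - _ - _) = _ - _ - _
      rw [map_sub, map_sub, s.star_one, hi, star_single_x]
    exacts [hi, hr]
  let F : K[X][X] := MvPolynomial.aeval ![1, C X, X] p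
  have evalEval_F (a b : K) : F.evalEval a b = MvPolynomial.eval ![1, a, b] p := by
    rw [← coe_aevalAeval_eq_evalEval, MvPolynomial.comp_aeval_apply, MvPolynomial.aeval_eq_eval]
    congr 2
    ext l
    fin_cases l <;> simp
  have evalEval_det (a b : K) :
      ((charmatrix (x i)).map C + (X : K[X][X]) • (r.map C).map C).det.evalEval a b =
        (a • 1 - x i + b • r).det := by
    rw [← coe_evalEvalRingHom, RingHom.map_det]
    congr 1
    ext1 l l'
    simpa [charmatrix_apply, diagonal_apply, one_apply, apply_ite (eval a)] using mul_comm _ _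
  refine exists_sq_eq_of_sq_eq_pow hm (F := F) (eq_of_forall_evalEval_eq fun a b => ?_)
  rw [evalEval_pow, evalEval_pow, evalEval_F, evalEval_det, hp, E_eq,
    Finset.prod_eq_single i _ fun h => absurd (Finset.mem_univ i) h]
  · congr 2
    simp [Fin.sum_univ_three, neg_add_eq_sub]
  · intro j _ hj
    simp [Fin.sum_univ_three, hj]

theorem exists_sq_eq_charpoly_pow_aeval_eq_zero (h2 : (2 : K) ≠ 0)
    (E_eq : ∀ y, E y = ∏ i, (y i).det ^ m i) (hsq : E.IsSquareOnSymm s) (hx : s.star x = x)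
    {i : Fin t} (hm : m i ≠ 0) (hi : s.star (Pi.single i 1) = Pi.single i 1) :
    ∃ q : K[X], q ^ 2 = (x i).charpoly ^ m i ∧ aeval (x i) q = 0 := by
  rcases (m i).even_or_odd with ⟨j, hj⟩ | hodd
  · refine ⟨(x i).charpoly ^ j, by rw [← pow_mul, mul_two, hj], ?_⟩
    rw [map_pow, aeval_self_charpoly, zero_pow (by omega)]
  · have star_x : (InvAlg.component hi).star (x i) = x i :=
      Pi.single_injective (M := fun i => Matrix (Fin (c i)) (Fin (c i)) K) i <| by
        rw [InvAlg.single_component_star, InvAlg.star_single hi, hx]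
    obtain ⟨q, hq, aeval_q⟩ := exists_sq_eq_charpoly_aeval_eq_zero h2 star_x fun r hr =>
      exists_sq_eq_det_charmatrix_add E_eq hsq hx hodd hi
        (by rw [← InvAlg.single_component_star hi, hr])
    exact ⟨q ^ m i, by rw [← hq, ← pow_mul, ← pow_mul, mul_comm],
      by rw [map_pow, aeval_q, zero_pow hm]⟩

theorem charpoly_pow_eq_of_star_single (E_eq : ∀ y, E y = ∏ i, (y i).det ^ m i)
    (hs : ∀ y, E (s.star y) = E y) (hx : s.star x = x) {i j : Fin t}
    (hij : s.star (Pi.single i 1) = Pi.single j 1) :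
    (x i).charpoly ^ m i = (x j).charpoly ^ m j := by
  have E_eval (l : Fin t) (b : K) :
      E (1 - Pi.single l 1 + Pi.single l (b • 1 - x l)) = ((x l).charpoly ^ m l).eval b := by
    rw [E_eq, Finset.prod_eq_single l _ fun h => absurd (Finset.mem_univ l) h]
    · simp [eval_charpoly, ← smul_one_eq_diagonal]
    · intro l' _ hl'
      simp [hl']
  refine Polynomial.funext fun b => ?_
  rw [← E_eval, ← E_eval, ← hs, map_add, map_sub, s.star_one, hij]
  congr 2
  have h := InvAlg.star_single hij (b • 1 - x)
  rwa [map_sub, map_smul, s.star_one, hx] at h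

theorem exists_sq_dvd_prod_charpoly (h2 : (2 : K) ≠ 0) (hc : ∀ i, NeZero (c i))
    (E_eq : ∀ y, E y = ∏ i, (y i).det ^ m i) (hm : ∀ i, m i ≠ 0) (hs : ∀ y, E (s.star y) = E y)
    (hsq : E.IsSquareOnSymm s) (hx : s.star x = x) (i : Fin t) :
    ∃ q : K[X], q ^ 2 ∣ ∏ j, (x j).charpoly ^ m j ∧ aeval (x i) q = 0 := by
  obtain ⟨j, hij⟩ := InvAlg.exists_star_single_eq (s := s) i
  rcases eq_or_ne i j with rfl | hne
  · obtain ⟨q, hq, aeval_q⟩ := exists_sq_eq_charpoly_pow_aeval_eq_zero h2 E_eq hsq hx (hm i) hij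
    exact ⟨q, hq ▸ Finset.dvd_prod_of_mem _ (Finset.mem_univ i), aeval_q⟩
  · refine ⟨(x i).charpoly ^ m i, ?_, by rw [map_pow, aeval_self_charpoly, zero_pow (hm i)]⟩
    rw [sq]
    nth_rw 2 [charpoly_pow_eq_of_star_single E_eq hs hx hij]
    rw [← Finset.prod_pair (f := fun l => (x l).charpoly ^ m l) hne]
    exact Finset.prod_dvd_prod_of_subset _ _ _ (Finset.subset_univ _)

theorem DetForm.Faithful.aeval_eq_zero_of_sq_eq (hE : E.Faithful) (h2 : (2 : K) ≠ 0)
    (hc : ∀ i, NeZero (c i)) (hs : ∀ y, E (s.star y) = E y) (hsq : E.IsSquareOnSymm s)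
    (hx : s.star x = x) {p : K[X]} (hp : ∀ b, p.eval b ^ 2 = E (b • 1 - x)) : aeval x p = 0 := by
  obtain ⟨m, hm, E_eq⟩ := hE.exists_eq_prod_det_pow hc
  have sq_p : p ^ 2 = ∏ i, (x i).charpoly ^ m i := Polynomial.funext fun b => by
    rw [eval_pow, hp, E_eq, eval_prod]
    simp [Matrix.eval_charpoly, ← smul_one_eq_diagonal]
  ext1 i
  obtain ⟨q, hq, aeval_q⟩ := exists_sq_dvd_prod_charpoly h2 hc E_eq hm hs hsq hx i
  rw [← sq_p, IsIntegrallyClosed.pow_dvd_pow_iff two_ne_zero] at hq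
  have aeval_apply : aeval x p i = aeval (x i) p :=
    (aeval_algHom_apply (Pi.evalAlgHom K _ i) x p).symm
  rw [aeval_apply]
  exact zero_dvd_iff.1 (aeval_q ▸ _root_.map_dvd (aeval (x i)) hq)

end Squares

/-! ### Generic values of polynomial laws -/

section RTensor

variable {A : Type*} [CommRing A] {M : Type*} [AddCommGroup M] [Module A M]
  {B B' B'' : Type*} [CommRing B] [Algebra A B] [CommRing B'] [Algebra A B'] [CommRing B'']
  [Algebra A B'']

theorem rTensor_algHom_smul (f : B →ₐ[A] B') (b : B) (x : B ⊗[A] M) :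
    LinearMap.rTensor M f.toLinearMap (b • x) = f b • LinearMap.rTensor M f.toLinearMap x := by
  induction x with
  | zero => simp
  | add x y hx hy => rw [smul_add, map_add, hx, hy, map_add, smul_add]
  | tmul c m => simp [TensorProduct.smul_tmul']

theorem rTensor_algHom_rTensor_algHom (f : B →ₐ[A] B') (g : B' →ₐ[A] B'') (x : B ⊗[A] M) :
    LinearMap.rTensor M g.toLinearMap (LinearMap.rTensor M f.toLinearMap x) =
      LinearMap.rTensor M (g.comp f).toLinearMap x := by
  rw [AlgHom.comp_toLinearMap, LinearMap.rTensor_comp_apply]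

theorem rTensor_algHom_id (x : B ⊗[A] M) :
    LinearMap.rTensor M (AlgHom.id A B).toLinearMap x = x := by
  rw [AlgHom.toLinearMap_id, LinearMap.rTensor_id_apply]

end RTensor

theorem coeff_aeval_X_mul_C_X {σ S : Type*} [CommSemiring S] (p : MvPolynomial σ S) (n : ℕ) :
    (MvPolynomial.aeval (fun i => (Polynomial.X : Polynomial (MvPolynomial σ S)) *
      Polynomial.C (MvPolynomial.X i)) p).coeff n = MvPolynomial.homogeneousComponent n p := by
  induction p using MvPolynomial.induction_on' with
  | add p q hp hq => rw [map_add, Polynomial.coeff_add, hp, hq, map_add]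
  | monomial α c =>
    have aeval_eq : MvPolynomial.aeval (fun i => (Polynomial.X : Polynomial (MvPolynomial σ S)) *
        Polynomial.C (MvPolynomial.X i)) (MvPolynomial.monomial α c) =
          Polynomial.C (MvPolynomial.monomial α c) * Polynomial.X ^ α.degree := by
      rw [MvPolynomial.aeval_monomial, MvPolynomial.monomial_eq, Finsupp.degree_apply]
      simp only [mul_pow, Finsupp.prod, Finset.prod_mul_distrib, Finset.prod_pow_eq_pow_sum,
        map_mul, map_prod, map_pow]
      rw [mul_right_comm, ← mul_assoc]
      rfl
    rw [aeval_eq, Polynomial.coeff_C_mul_X_pow, MvPolynomial.homogeneousComponent_of_mem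
      (MvPolynomial.isHomogeneous_monomial c rfl)]

theorem isHomogeneous_of_aeval_X_mul_C_X_eq {σ S : Type*} [CommSemiring S] {p : MvPolynomial σ S}
    {n : ℕ} (h : MvPolynomial.aeval (fun i => (Polynomial.X : Polynomial (MvPolynomial σ S)) *
      Polynomial.C (MvPolynomial.X i)) p = Polynomial.X ^ n * Polynomial.C p) :
    p.IsHomogeneous n := by
  have h := congrArg (Polynomial.coeff · n) h
  rw [coeff_aeval_X_mul_C_X, Polynomial.coeff_X_pow_mul', if_pos le_rfl, Nat.sub_self,
    Polynomial.coeff_C_zero] at h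
  exact h ▸ MvPolynomial.homogeneousComponent_isHomogeneous n p

namespace PolyLaw

variable {A : Type u} [CommRing A] {M : Type u} [AddCommGroup M] [Module A M]
  {B : Type u} [CommRing B] [Algebra A B] {m : ℕ}

@[ext]
theorem ext {F G : PolyLaw A M} (h : ∀ (B : Type u) [CommRing B] [Algebra A B] (x : B ⊗[A] M),
    F.toFun B x = G.toFun B x) : F = G := by
  cases F
  cases G
  congr
  funext B _ _ x
  exact h B x

variable {N : Type u} [AddCommGroup N] [Module A N]

/-- The pullback of a polynomial law along a linear map. -/
def comp (Q : PolyLaw A N) (f : M →ₗ[A] N) :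
    PolyLaw A M where
  toFun B _ _ x := Q.toFun B (LinearMap.lTensor B f x)
  natural B B' _ _ _ _ g x := by
    rw [Q.natural, ← LinearMap.comp_apply, ← LinearMap.comp_apply, LinearMap.rTensor_comp_lTensor,
      LinearMap.lTensor_comp_rTensor]

theorem comp_eq_comp_of_forall_sub_mem {Q : PolyLaw A N} {f g : M →ₗ[A] N}
    (h : ∀ x, f x - g x ∈ Q.lawKer) : Q.comp f = Q.comp g := by
  ext B _ _ x
  suffices toFun_add : ∀ y, Q.toFun B (LinearMap.lTensor B f x + y) =
      Q.toFun B (LinearMap.lTensor B g x + y) by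
    simpa [comp] using toFun_add 0
  induction x with
  | zero => simp
  | add x x' hx hx' =>
    intro y
    rw [map_add, map_add, add_assoc, hx, add_left_comm, hx', add_left_comm, add_assoc]
  | tmul b x =>
    intro y
    have h := h x B b (b ⊗ₜ g x + y)
    rwa [TensorProduct.tmul_sub, ← add_assoc, sub_add_cancel] at h

theorem smul_mem_lawKer {Q : PolyLaw A M} (a : A) {x : M} (hx : x ∈ Q.lawKer) :
    a • x ∈ Q.lawKer := fun B _ _ b y => by
  rw [← TensorProduct.smul_tmul, hx]

theorem mem_lawKer_iff_comp_eq {Q : PolyLaw A M} {x : M} : x ∈ Q.lawKer ↔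
    Q.comp (LinearMap.coprod (LinearMap.toSpanSingleton A M x) LinearMap.id) =
      Q.comp (LinearMap.snd A A M) := by
  refine ⟨fun hx => comp_eq_comp_of_forall_sub_mem fun z => ?_, fun h B _ _ b y => ?_⟩
  · simpa using smul_mem_lawKer z.1 hx
  · have h := congrArg (fun Q' : PolyLaw A (A × M) => Q'.toFun B
      (b ⊗ₜ ((1 : A), (0 : M)) + LinearMap.lTensor B (LinearMap.inr A A M) y)) h
    simpa [comp, ← LinearMap.lTensor_comp_apply] using h

/-- The value of a polynomial law at the generic linear combination `∑ Xᵢ yᵢ` of the elements `yᵢ`,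
a polynomial that determines the values of the law on all linear combinations of the `yᵢ`. -/
noncomputable def generic (Q : PolyLaw A M) (y : Fin m → B ⊗[A] M) : MvPolynomial (Fin m) B :=
  Q.toFun (MvPolynomial (Fin m) B) (∑ i, (MvPolynomial.X i : MvPolynomial (Fin m) B) •
    LinearMap.rTensor M (IsScalarTower.toAlgHom A B (MvPolynomial (Fin m) B)).toLinearMap (y i))

variable (Q : PolyLaw A M)

theorem map_generic (y : Fin m → B ⊗[A] M) {C : Type u} [CommRing C] [Algebra A C]
    (f : MvPolynomial (Fin m) B →ₐ[A] C) :
    f (Q.generic y) = Q.toFun C (∑ i, f (MvPolynomial.X i) •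
      LinearMap.rTensor M (f.comp (IsScalarTower.toAlgHom A B _)).toLinearMap (y i)) := by
  simp only [generic, Q.natural, map_sum, rTensor_algHom_smul, rTensor_algHom_rTensor_algHom]

theorem eval_generic (y : Fin m → B ⊗[A] M) (v : Fin m → B) :
    MvPolynomial.eval v (Q.generic y) = Q.toFun B (∑ i, v i • y i) := by
  let f : MvPolynomial (Fin m) B →ₐ[A] B :=
    (MvPolynomial.aeval v : MvPolynomial (Fin m) B →ₐ[B] B).restrictScalars A
  have comp_eq : f.comp (IsScalarTower.toAlgHom A B _) = AlgHom.id A B := by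
    ext b
    simp [f]
  have h := Q.map_generic y f
  simpa [comp_eq, rTensor_algHom_id, f, MvPolynomial.aeval_eq_eval] using h

theorem aeval_generic_one_tmul (r : Fin m → M) (b : Fin m → B) :
    MvPolynomial.aeval b (Q.generic fun i => (1 : A) ⊗ₜ[A] r i) =
      Q.toFun B (∑ i, b i ⊗ₜ[A] r i) := by
  rw [map_generic]
  simp [TensorProduct.smul_tmul']

theorem generic_isHomogeneous {n : ℕ} (hQ : Q.IsHomog n) (y : Fin m → B ⊗[A] M) :
    (Q.generic y).IsHomogeneous n := by
  let S := MvPolynomial (Fin m) B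
  let scale : S →ₐ[A] Polynomial S :=
    (MvPolynomial.aeval fun i => (Polynomial.X : Polynomial S) * Polynomial.C (MvPolynomial.X i) :
      S →ₐ[B] Polynomial S).restrictScalars A
  let const : S →ₐ[A] Polynomial S := IsScalarTower.toAlgHom A S (Polynomial S)
  have comp_eq : scale.comp (IsScalarTower.toAlgHom A B S) =
      const.comp (IsScalarTower.toAlgHom A B S) := by
    ext b
    simp [scale, const, S, Polynomial.algebraMap_eq, MvPolynomial.algebraMap_eq]
  have scale_generic : scale (Q.generic y) = Polynomial.X ^ n * const (Q.generic y) := by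
    rw [map_generic, map_generic, ← hQ, Finset.smul_sum, comp_eq]
    refine congrArg _ (Finset.sum_congr rfl fun i _ => ?_)
    rw [smul_smul]
    congr 1
    simp [scale, const, S, Polynomial.algebraMap_eq]
  exact isHomogeneous_of_aeval_X_mul_C_X_eq scale_generic

theorem eq_of_forall_toFun_eq (K : Type u) [CommRing K] [IsDomain K] [Infinite K] [Algebra A K]
    [FaithfulSMul A K] {F G : PolyLaw A M} (h : ∀ y, F.toFun K y = G.toFun K y) : F = G := by
  ext B _ _ x
  obtain ⟨m, b, r, rfl⟩ := x.exists_sum_tmul_eq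
  have generic_eq : F.generic (fun i => (1 : A) ⊗ₜ[A] r i) = G.generic fun i => 1 ⊗ₜ r i :=
    MvPolynomial.map_injective _ (FaithfulSMul.algebraMap_injective A K) <|
      MvPolynomial.funext fun v => by
        simp only [MvPolynomial.eval_map, ← MvPolynomial.aeval_def, aeval_generic_one_tmul, h]
  rw [← aeval_generic_one_tmul, generic_eq, aeval_generic_one_tmul]

theorem eq_of_sq_eq_sq [IsDomain A] (h2 : (2 : A) ≠ 0) {F G : PolyLaw A M}
    (h : ∀ (B : Type u) [CommRing B] [Algebra A B] (x : B ⊗[A] M),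
      F.toFun B x ^ 2 = G.toFun B x ^ 2)
    {r₀ : M} (hr₀ : F.toFun A (1 ⊗ₜ r₀) = G.toFun A (1 ⊗ₜ r₀)) (hne : G.toFun A (1 ⊗ₜ r₀) ≠ 0) :
    F = G := by
  ext B _ _ x
  obtain ⟨m, b, r, rfl⟩ := x.exists_sum_tmul_eq
  let y (i : Fin (m + 1)) : A ⊗[A] M := 1 ⊗ₜ (Fin.cons r₀ r : Fin (m + 1) → M) i
  have aeval_y (Q : PolyLaw A M) : MvPolynomial.aeval (Fin.cons 0 b) (Q.generic y) =
      Q.toFun B (∑ i, b i ⊗ₜ[A] r i) := by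
    simp [y, aeval_generic_one_tmul, Fin.sum_univ_succ]
  have eval_y (Q : PolyLaw A M) : MvPolynomial.eval (Fin.cons 1 0) (Q.generic y) =
      Q.toFun A (1 ⊗ₜ r₀) := by
    simp [y, eval_generic, Fin.sum_univ_succ]
  have generic_ne_neg : F.generic y ≠ -G.generic y := fun hneg => by
    have h := congrArg (MvPolynomial.eval (Fin.cons 1 0)) hneg
    rw [map_neg, eval_y, eval_y, hr₀] at h
    exact mul_ne_zero h2 hne (by linear_combination h)
  have generic_eq : F.generic y = G.generic y :=
    (sq_eq_sq_iff_eq_or_eq_neg.1 (h _ _)).resolve_right generic_ne_neg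
  rw [← aeval_y, generic_eq, aeval_y]

end PolyLaw

/-! ### Determinant laws at the points of an extension field -/

section Polarization

variable {K W : Type*} [Field K] [AddCommGroup W] [Module K W] {n m : ℕ}

theorem exists_multilinearMap_eq_prod (c : Fin m → W →ₗ[K] K) {α : Fin m →₀ ℕ}
    (hα : α.degree = n) :
    ∃ Φ : MultilinearMap K (fun _ : Fin n => W) K, ∀ w, Φ (fun _ => w) = ∏ i, c i w ^ α i := by
  obtain ⟨l, hl⟩ : ∃ l : List (Fin m), (l : Multiset (Fin m)) = Finsupp.toMultiset α :=
    ⟨_, Multiset.coe_toList _⟩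
  obtain rfl : l.length = n := by
    rw [← hα, ← Multiset.coe_card, hl, Finsupp.card_toMultiset]
    rfl
  refine ⟨(MultilinearMap.mkPiAlgebra K (Fin l.length) K).compLinearMap fun j => c (l.get j),
    fun w => ?_⟩
  calc ∏ j, c (l.get j) w = ((l : Multiset (Fin m)).map fun i => c i w).prod := by
        rw [Multiset.map_coe, Multiset.prod_coe, ← List.prod_ofFn]
        congr 1
        apply List.ext_getElem <;> simp
    _ = ∏ i, c i w ^ α i := by
        rw [hl, Finsupp.toMultiset_map, Finsupp.prod_toMultiset,
          Finsupp.prod_mapDomain_index (fun _ => pow_zero _) fun _ _ _ => pow_add _ _ _,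
          Finsupp.prod_fintype _ _ fun _ => pow_zero _]

theorem exists_multilinearMap_eq_eval (c : Fin m → W →ₗ[K] K) {p : MvPolynomial (Fin m) K}
    (hp : p.IsHomogeneous n) :
    ∃ Φ : MultilinearMap K (fun _ : Fin n => W) K,
      ∀ w, Φ (fun _ => w) = MvPolynomial.eval (fun i => c i w) p := by
  choose! Φ hΦ using fun α (hα : Finsupp.degree α = n) =>
    exists_multilinearMap_eq_prod c hα
  refine ⟨∑ α ∈ p.support, p.coeff α • Φ α, fun w => ?_⟩
  rw [MvPolynomial.eval_eq', _root_.sum_apply]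
  refine Finset.sum_congr rfl fun α hα => ?_
  rw [_root_.smul_apply, smul_eq_mul, hΦ α]
  by_contra h
  exact MvPolynomial.mem_support_iff.1 hα (hp.coeff_eq_zero h)

theorem exists_multilinearMap_eq_of_mem_span {q : W → K}
    (hq : ∀ (m : ℕ) (y : Fin m → W), ∃ p : MvPolynomial (Fin m) K, p.IsHomogeneous n ∧
      ∀ v, MvPolynomial.eval v p = q (∑ i, v i • y i)) (F : Finset W) :
    ∃ Φ : MultilinearMap K (fun _ : Fin n => W) K,
      ∀ y ∈ Submodule.span K (F : Set W), q y = Φ (fun _ => y) := by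
  let V := Submodule.span K (F : Set W)
  have : Module.Finite K V := Module.Finite.span_of_finite K F.finite_toSet
  let b := Module.finBasis K V
  obtain ⟨p, hp, eval_p⟩ := hq _ fun i => (b i : W)
  obtain ⟨r, hr⟩ := V.subtype.exists_leftInverse_of_injective V.ker_subtype
  obtain ⟨Φ, hΦ⟩ := exists_multilinearMap_eq_eval (fun i => b.coord i ∘ₗ r) hp
  refine ⟨Φ, fun y hy => ?_⟩
  have r_y : r y = ⟨y, hy⟩ := LinearMap.congr_fun hr ⟨y, hy⟩
  have sum_y := congrArg V.subtype (b.sum_repr ⟨y, hy⟩)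
  rw [map_sum] at sum_y
  rw [hΦ, eval_p]
  simp only [LinearMap.comp_apply, r_y, Module.Basis.coord_apply]
  exact congrArg q sum_y.symm

/- A linear relation among the tensor powers of finitely many vectors is respected by `q`, hence `q`
factors through the span of all tensor powers, and a linear form on it extends. -/
theorem exists_multilinearMap_of_forall_finset {q : W → K}
    (h : ∀ F : Finset W, ∃ Φ : MultilinearMap K (fun _ : Fin n => W) K,
      ∀ y ∈ F, q y = Φ (fun _ => y)) :
    ∃ Φ : MultilinearMap K (fun _ : Fin n => W) K, ∀ y, q y = Φ (fun _ => y) := by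
  let pow : (W →₀ K) →ₗ[K] ⨂[K] _ : Fin n, W :=
    Finsupp.linearCombination K fun y => PiTensorProduct.tprod K fun _ => y
  let q' : (W →₀ K) →ₗ[K] K := Finsupp.linearCombination K q
  have ker_le : LinearMap.ker pow ≤ LinearMap.ker q' := by
    intro c hc
    obtain ⟨Φ, hΦ⟩ := h c.support
    have lift_pow : PiTensorProduct.lift Φ (pow c) = q' c := by
      simp only [pow, q', Finsupp.linearCombination_apply, Finsupp.sum, map_sum, map_smul,
        PiTensorProduct.lift.tprod]
      exact Finset.sum_congr rfl fun y hy => by rw [hΦ y hy]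
    rw [LinearMap.mem_ker, ← lift_pow, LinearMap.mem_ker.1 hc, map_zero]
  obtain ⟨g, hg⟩ : q' ∈ LinearMap.range pow.dualMap := by
    rw [LinearMap.range_dualMap_eq_dualAnnihilator_ker, Submodule.mem_dualAnnihilator]
    exact fun c hc => ker_le hc
  refine ⟨g.compMultilinearMap (PiTensorProduct.tprod K), fun y => ?_⟩
  simpa [pow, q'] using (LinearMap.congr_fun hg (Finsupp.single y 1)).symm

end Polarization

namespace PolyLaw

variable {k R : Type u} [Field k] [Ring R] [Algebra k R]

theorem IsMult.exists_detForm {D : PolyLaw k R} {n : ℕ} (mult : D.IsMult) (homog : D.IsHomog n)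
    (K : Type u) [Field K] [Algebra k K] :
    ∃ DK : DetForm K (K ⊗[k] R) n, ∀ y, DK y = D.toFun K y := by
  obtain ⟨Φ, hΦ⟩ := exists_multilinearMap_of_forall_finset (K := K) (n := n) (q := D.toFun K) <| by
    intro F
    obtain ⟨Φ, hΦ⟩ := exists_multilinearMap_eq_of_mem_span (n := n) (fun m y =>
      ⟨D.generic y, D.generic_isHomogeneous homog y, D.eval_generic y⟩) F
    exact ⟨Φ, fun y hy => hΦ y (Submodule.subset_span hy)⟩
  exact ⟨⟨D.toFun K, ⟨Φ, hΦ⟩, (mult K).1, (mult K).2⟩, fun _ => rfl⟩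

theorem mem_lawKer_iff_one_tmul_mem_ker {D : PolyLaw k R} {n : ℕ} {K : Type u} [Field K]
    [Infinite K] [Algebra k K] {DK : DetForm K (K ⊗[k] R) n} (DK_eq : ∀ y, DK y = D.toFun K y)
    (x : R) : x ∈ D.lawKer ↔ (1 ⊗ₜ x : K ⊗[k] R) ∈ DK.ker := by
  refine ⟨fun hx y => ?_, fun hx => ?_⟩
  · rw [DK_eq, DK_eq, add_comm, hx]
  let add : k × R →ₗ[k] R := LinearMap.coprod (LinearMap.toSpanSingleton k R x) LinearMap.id
  let snd : k × R →ₗ[k] R := LinearMap.snd k k R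
  refine mem_lawKer_iff_comp_eq.2 <| eq_of_forall_toFun_eq K (F := D.comp add) fun z => ?_
  have lTensor_add_sub_mem : LinearMap.lTensor K add z - LinearMap.lTensor K snd z ∈ DK.ker := by
    induction z with
    | zero => simp
    | add z w hz hw =>
      rw [map_add, map_add, add_sub_add_comm]
      exact add_mem hz hw
    | tmul c z =>
      have tmul_mem : (z.1 • c) ⊗ₜ[k] x ∈ DK.ker := by
        simpa using DK.ker.mul_mem_left ((z.1 • c) ⊗ₜ 1) hx
      simpa [add, snd, TensorProduct.tmul_add, TensorProduct.smul_tmul'] using tmul_mem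
  have h := DK.mem_ker.1 lTensor_add_sub_mem (LinearMap.lTensor K snd z)
  rwa [add_sub_cancel, DK_eq, DK_eq] at h

end PolyLaw

/-- A split model of a determinant law `D` over an extension `K` of the base field: the quotient of
`K ⊗ R` by the kernel of `D` on `K`-points, identified with a product of matrix algebras, together
with the faithful form induced by `D`. -/
structure SplitModel {k R : Type u} [Field k] [Ring R] [Algebra k R] (D : PolyLaw k R) (n : ℕ)
    (K : Type u) [Field K] [IsAlgClosed K] [Algebra k K] where
  t : ℕ
  c : Fin t → ℕ
  neZero : ∀ i, NeZero (c i)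
  proj : K ⊗[k] R →ₐ[K] Π i, Matrix (Fin (c i)) (Fin (c i)) K
  proj_surjective : Function.Surjective proj
  form : DetForm K (Π i, Matrix (Fin (c i)) (Fin (c i)) K) n
  faithful : form.Faithful
  form_proj : ∀ y, form (proj y) = D.toFun K y

theorem DetForm.Faithful.exists_form_of_algEquiv {K A A' : Type*} [Field K] [Infinite K] [Ring A]
    [Algebra K A] [Ring A'] [Algebra K A'] {n : ℕ} {E : DetForm K A n} (hE : E.Faithful)
    (e : A ≃ₐ[K] A') : ∃ E' : DetForm K A' n, E'.Faithful ∧ ∀ x, E' (e x) = E x := by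
  obtain ⟨Φ, hΦ⟩ := E.exists_eq_multilinear
  let E' : DetForm K A' n :=
    { toFun x := E (e.symm x)
      exists_multilinear := ⟨Φ.compLinearMap fun _ => e.symm.toLinearMap, fun _ => hΦ _⟩
      map_one' := by rw [map_one, map_one]
      map_mul' x y := by rw [map_mul, map_mul] }
  have E'_apply (x : A) : E' (e x) = E x := congrArg E (e.symm_apply_apply x)
  refine ⟨E', eq_bot_iff.2 fun m hm => ?_, E'_apply⟩
  have mem_ker : e.symm m ∈ E.ker := fun y => by
    have h := E'.mem_ker.1 hm (e y)
    rwa [← e.apply_symm_apply m, ← map_add, E'_apply, E'_apply] at h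
  rw [hE, Submodule.mem_bot, map_eq_zero_iff _ e.symm.injective] at mem_ker
  exact (Submodule.mem_bot _).2 mem_ker

namespace SplitModel

variable {k R : Type u} [Field k] [Ring R] [Algebra k R] {D : PolyLaw k R} {n : ℕ}
  {K : Type u} [Field K] [IsAlgClosed K] [Algebra k K]

theorem nonempty (mult : D.IsMult) (homog : D.IsHomog n) :
    Nonempty (SplitModel D n K) := by
  obtain ⟨DK, DK_eq⟩ := mult.exists_detForm homog K
  obtain ⟨E, E_mk, E_faithful⟩ := DK.exists_faithful_quotient
  obtain ⟨t, c, hc, ⟨e⟩⟩ := E_faithful.exists_algEquiv_pi_matrix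
  obtain ⟨F, F_faithful, F_e⟩ := E_faithful.exists_form_of_algEquiv e
  exact ⟨⟨t, c, hc, e.toAlgHom.comp (Ideal.Quotient.mkₐ K DK.ker),
    e.surjective.comp Ideal.Quotient.mk_surjective, F, F_faithful,
    fun y => (F_e _).trans ((E_mk y).trans (DK_eq y))⟩⟩

variable (Z : SplitModel D n K)

theorem proj_eq_zero_iff {y : K ⊗[k] R} :
    Z.proj y = 0 ↔ ∀ z, D.toFun K (z + y) = D.toFun K z := by
  rw [← Ideal.mem_bot, ← Z.faithful, DetForm.mem_ker, Z.proj_surjective.forall]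
  simp only [← map_add, Z.form_proj]

theorem proj_one_tmul_eq_zero_iff (mult : D.IsMult) (homog : D.IsHomog n) (x : R) :
    Z.proj (1 ⊗ₜ x) = 0 ↔ x ∈ D.lawKer := by
  obtain ⟨DK, DK_eq⟩ := mult.exists_detForm homog K
  rw [proj_eq_zero_iff, PolyLaw.mem_lawKer_iff_one_tmul_mem_ker DK_eq, DetForm.mem_ker]
  simp only [DK_eq]

end SplitModel

/-! ### Base change of involutions -/

namespace InvAlg

variable {A : Type u} [CommRing A] {R : Type u} [Ring R] [Algebra A R] (s : InvAlg A R)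
  {B : Type u} [CommRing B] [Algebra A B]

theorem mem_plus {x : R} : x ∈ s.plus ↔ s.star x = x := by
  simp [plus, sub_eq_zero]

theorem add_star_mem_plus (x : R) : x + s.star x ∈ s.plus := by
  rw [mem_plus, map_add, s.star_star, add_comm]

/-- The `B`-linear extension of an involution to `B ⊗ R`. -/
noncomputable def baseChange (B : Type u) [CommRing B] [Algebra A B] : InvAlg B (B ⊗[A] R) where
  star := s.star.baseChange B
  star_one := by simp [Algebra.TensorProduct.one_def, s.star_one]
  star_mul x y := by
    induction x with
    | zero => simp
    | add x x' hx hx' => simp only [add_mul, mul_add, map_add, hx, hx']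
    | tmul b r =>
      induction y with
      | zero => simp
      | add y y' hy hy' => simp only [add_mul, mul_add, map_add, hy, hy']
      | tmul b' r' => simp [s.star_mul, mul_comm]
  star_star x := by
    induction x with
    | zero => simp
    | add x x' hx hx' => simp only [map_add, hx, hx']
    | tmul b r => simp [s.star_star]

theorem baseChange_star (x : B ⊗[A] R) :
    (s.baseChange B).star x = LinearMap.lTensor B s.star x := rfl

theorem incl_smul (b : B) (x : B ⊗[A] s.plus) : s.incl B (b • x) = b • s.incl B x :=
  map_smul (s.plus.subtype.baseChange B) b x

theorem incl_tmul_onePlus (b : B) : s.incl B (b ⊗ₜ s.onePlus) = b • 1 := by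
  simp [incl, onePlus, Algebra.TensorProduct.one_def, TensorProduct.smul_tmul']

theorem rTensor_incl {B' : Type u} [CommRing B'] [Algebra A B'] (f : B →ₐ[A] B')
    (x : B ⊗[A] s.plus) : LinearMap.rTensor R f.toLinearMap (s.incl B x) =
      s.incl B' (LinearMap.rTensor s.plus f.toLinearMap x) := by
  rw [incl, incl, ← LinearMap.comp_apply, ← LinearMap.comp_apply, LinearMap.rTensor_comp_lTensor,
    LinearMap.lTensor_comp_rTensor]

theorem baseChange_star_incl (x : B ⊗[A] s.plus) :
    (s.baseChange B).star (s.incl B x) = s.incl B x := by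
  rw [baseChange_star, incl, ← LinearMap.lTensor_comp_apply]
  congr 2
  ext y
  exact s.mem_plus.1 y.2

theorem exists_incl_eq_of_star_eq (h2 : IsUnit (2 : B)) {x : B ⊗[A] R}
    (hx : (s.baseChange B).star x = x) : ∃ y, s.incl B y = x := by
  let symmetrize : R →ₗ[A] s.plus :=
    (LinearMap.id + s.star).codRestrict s.plus s.add_star_mem_plus
  have incl_symmetrize : s.incl B (LinearMap.lTensor B symmetrize x) = (2 : B) • x := by
    rw [incl, ← LinearMap.lTensor_comp_apply, LinearMap.subtype_comp_codRestrict,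
      LinearMap.lTensor_add, LinearMap.add_apply, LinearMap.lTensor_id_apply, ← baseChange_star, hx,
      two_smul]
  obtain ⟨u, hu⟩ := h2
  exact ⟨(↑u⁻¹ : B) • LinearMap.lTensor B symmetrize x, by
    rw [incl_smul, incl_symmetrize, ← hu, smul_smul, u.inv_mul, one_smul]⟩

theorem exists_star_comm_of_surjective {W : Type u} [Ring W] [Algebra A W] {π : R →ₐ[A] W}
    (hπ : Function.Surjective π) (star_mem : ∀ x, π x = 0 → π (s.star x) = 0) :
    ∃ s' : InvAlg A W, ∀ x, s'.star (π x) = π (s.star x) := by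
  let star' : W →ₗ[A] W :=
    (LinearMap.ker π.toLinearMap).liftQ (π.toLinearMap ∘ₗ s.star) (fun x hx => star_mem x hx) ∘ₗ
      (π.toLinearMap.quotKerEquivOfSurjective hπ).symm
  have star'_apply (x : R) : star' (π x) = π (s.star x) := by
    have h := (π.toLinearMap.quotKerEquivOfSurjective hπ).symm_apply_apply (Submodule.Quotient.mk x)
    exact congrArg _ h
  exact ⟨{
    star := star'
    star_one := by rw [← map_one π, star'_apply, s.star_one]
    star_mul := hπ.forall₂.2 fun x y => by simp only [← map_mul, star'_apply, s.star_mul]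
    star_star := hπ.forall.2 fun x => by rw [star'_apply, star'_apply, s.star_star] }, star'_apply⟩

end InvAlg

/-! ### Weak symplectic determinant laws are symplectic -/

section CharPoly

variable {A : Type u} [CommRing A] {M : Type u} [AddCommGroup M] [Module A M]
  {B B' : Type u} [CommRing B] [Algebra A B] [CommRing B'] [Algebra A B']

theorem map_chPoly (P : PolyLaw A M) (e : M) (f : B →ₐ[A] B') (x : B ⊗[A] M) :
    (chPoly P e B x).map f.toRingHom = chPoly P e B' (LinearMap.rTensor M f.toLinearMap x) := by
  have h := P.natural _ _ (Polynomial.mapAlgHom f) ((Polynomial.X : Polynomial B) ⊗ₜ[A] e -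
    LinearMap.rTensor M (IsScalarTower.toAlgHom A B (Polynomial B)).toLinearMap x)
  have comp_eq : (Polynomial.mapAlgHom f).comp (IsScalarTower.toAlgHom A B (Polynomial B)) =
      (IsScalarTower.toAlgHom A B' (Polynomial B')).comp f := by
    ext b
    simp [Polynomial.algebraMap_eq]
  rw [map_sub, rTensor_algHom_rTensor_algHom, comp_eq, LinearMap.rTensor_tmul] at h
  refine h.trans ?_
  rw [chPoly, rTensor_algHom_rTensor_algHom]
  simp

theorem eval_chPoly (P : PolyLaw A M) (e : M) (x : B ⊗[A] M) (b : B) :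
    (chPoly P e B x).eval b = P.toFun B (b ⊗ₜ e - x) := by
  let f : Polynomial B →ₐ[A] B := (Polynomial.aeval b : Polynomial B →ₐ[B] B).restrictScalars A
  have comp_eq : f.comp (IsScalarTower.toAlgHom A B (Polynomial B)) = AlgHom.id A B := by
    ext c
    simp [f]
  have h := P.natural _ _ f ((Polynomial.X : Polynomial B) ⊗ₜ[A] e -
    LinearMap.rTensor M (IsScalarTower.toAlgHom A B (Polynomial B)).toLinearMap x)
  rw [map_sub, rTensor_algHom_rTensor_algHom, comp_eq, rTensor_algHom_id,
    LinearMap.rTensor_tmul] at h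
  simpa [f, chPoly] using h

variable {R : Type u} [Ring R] [Algebra A R] (s : InvAlg A R)

theorem rTensor_chEval (P : PolyLaw A s.plus) (f : B →ₐ[A] B') (x : B ⊗[A] s.plus) :
    LinearMap.rTensor R f.toLinearMap (chEval s P B x) =
      chEval s P B' (LinearMap.rTensor s.plus f.toLinearMap x) := by
  let F : B ⊗[A] R →ₐ[A] B' ⊗[A] R := Algebra.TensorProduct.map f (AlgHom.id A R)
  have map_aeval (y : B ⊗[A] R) (p : Polynomial B) :
      F (Polynomial.aeval y p) = Polynomial.aeval (F y) (p.map f.toRingHom) := by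
    induction p using Polynomial.induction_on' with
    | add p q hp hq => simp only [map_add, Polynomial.map_add, hp, hq]
    | monomial n b =>
      have F_smul : F (b • y ^ n) = f b • F (y ^ n) := rTensor_algHom_smul f b _
      rw [Polynomial.map_monomial, Polynomial.aeval_monomial, Polynomial.aeval_monomial,
        ← Algebra.smul_def, ← Algebra.smul_def, F_smul, map_pow]
      rfl
  rw [chEval, chEval, ← map_chPoly, ← InvAlg.rTensor_incl]
  exact map_aeval _ _

end CharPoly

theorem exists_eq_sum_monomial_tmul_tensorCoeff {A R : Type u} [CommRing A] [Ring R] [Algebra A R]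
    {n : ℕ} (z : MvPolynomial (Fin n) A ⊗[A] R) : ∃ F₀ : Finset (Fin n →₀ ℕ), ∀ F, F₀ ⊆ F →
      z = ∑ α ∈ F, MvPolynomial.monomial α (1 : A) ⊗ₜ tensorCoeff α z := by
  classical
  induction z with
  | zero => exact ⟨∅, fun F _ => by simp⟩
  | add x y hx hy =>
    obtain ⟨F₁, h₁⟩ := hx
    obtain ⟨F₂, h₂⟩ := hy
    refine ⟨F₁ ∪ F₂, fun F hF => ?_⟩
    simp only [map_add, TensorProduct.tmul_add, Finset.sum_add_distrib]
    rw [← h₁ F (Finset.union_subset_left hF), ← h₂ F (Finset.union_subset_right hF)]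
  | tmul p r =>
    refine ⟨p.support, fun F hF => ?_⟩
    have monomial_tmul (α) : MvPolynomial.monomial α (1 : A) ⊗ₜ[A] tensorCoeff α (p ⊗ₜ[A] r) =
        MvPolynomial.monomial α (p.coeff α) ⊗ₜ[A] r := by
      have tensorCoeff_tmul : tensorCoeff α (p ⊗ₜ[A] r) = p.coeff α • r := rfl
      rw [tensorCoeff_tmul, ← TensorProduct.smul_tmul, MvPolynomial.smul_monomial, smul_eq_mul,
        mul_one]
    simp only [monomial_tmul]
    rw [← TensorProduct.sum_tmul]
    congr 1
    refine p.as_sum.trans (Finset.sum_subset hF fun α _ hα => ?_)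
    rw [MvPolynomial.notMem_support_iff.1 hα, map_zero]

namespace SplitModel

variable {k R : Type u} [Field k] [Ring R] [Algebra k R] {s : InvAlg k R} {d : ℕ}
  {D : PolyLaw k R} {P : PolyLaw k s.plus} {K : Type u} [Field K] [IsAlgClosed K] [Algebra k K]
  (Z : SplitModel D (2 * d) K)

theorem exists_star_proj (h : IsWeakSympDet s d D P) :
    ∃ s' : InvAlg K (Π i, Matrix (Fin (Z.c i)) (Fin (Z.c i)) K),
      ∀ y, s'.star (Z.proj y) = Z.proj ((s.baseChange K).star y) := by
  refine (s.baseChange K).exists_star_comm_of_surjective Z.proj_surjective fun y hy => ?_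
  rw [proj_eq_zero_iff] at hy ⊢
  intro z
  rw [← h.starInv, ← InvAlg.baseChange_star, map_add, InvAlg.star_star, hy,
    InvAlg.baseChange_star, h.starInv]

variable {Z} {s' : InvAlg K (Π i, Matrix (Fin (Z.c i)) (Fin (Z.c i)) K)}

theorem exists_proj_incl_eq (star_proj : ∀ y, s'.star (Z.proj y) = Z.proj ((s.baseChange K).star y))
    (h2 : (2 : K) ≠ 0) {a} (ha : s'.star a = a) : ∃ y, Z.proj (s.incl K y) = a := by
  obtain ⟨x, rfl⟩ := Z.proj_surjective a
  obtain ⟨y, hy⟩ := s.exists_incl_eq_of_star_eq h2.isUnit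
    ((s.baseChange K).mem_plus.1 ((s.baseChange K).add_star_mem_plus x))
  exact ⟨(2 : K)⁻¹ • y, by
    rw [InvAlg.incl_smul, hy, map_smul, map_add, ← star_proj, ha, ← two_smul K, smul_smul,
      inv_mul_cancel₀ h2, one_smul]⟩

theorem isSquareOnSymm (h : IsWeakSympDet s d D P)
    (star_proj : ∀ y, s'.star (Z.proj y) = Z.proj ((s.baseChange K).star y)) (h2 : (2 : K) ≠ 0) :
    Z.form.IsSquareOnSymm s' := by
  intro m a ha
  choose y hy using fun i => exists_proj_incl_eq star_proj h2 (ha i)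
  refine ⟨P.generic y, fun v => ?_⟩
  rw [PolyLaw.eval_generic, h.sq, ← Z.form_proj, map_sum, map_sum]
  simp only [InvAlg.incl_smul, map_smul, hy]

theorem proj_chEval (h : IsWeakSympDet s d D P) (h2 : (2 : K) ≠ 0) (y : K ⊗[k] s.plus) :
    Z.proj (chEval s P K y) = 0 := by
  obtain ⟨s', star_proj⟩ := Z.exists_star_proj h
  have form_star (a) : Z.form (s'.star a) = Z.form a := by
    obtain ⟨x, rfl⟩ := Z.proj_surjective a
    rw [star_proj, Z.form_proj, Z.form_proj, InvAlg.baseChange_star, h.starInv]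
  rw [chEval, ← Polynomial.aeval_algHom_apply]
  refine Z.faithful.aeval_eq_zero_of_sq_eq h2 Z.neZero form_star
    (isSquareOnSymm h star_proj h2) ?_ fun b => ?_
  · rw [star_proj, InvAlg.baseChange_star_incl]
  · rw [eval_chPoly, h.sq, map_sub, InvAlg.incl_tmul_onePlus, ← Z.form_proj, map_sub, map_smul,
      map_one]

theorem proj_one_tmul_tensorCoeff_eq_zero {n : ℕ} {z : MvPolynomial (Fin n) k ⊗[k] R}
    (hz : ∀ v : Fin n → K,
      Z.proj (LinearMap.rTensor R (MvPolynomial.aeval v).toLinearMap z) = 0) (α : Fin n →₀ ℕ) :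
    Z.proj (1 ⊗ₜ tensorCoeff α z) = 0 := by
  classical
  obtain ⟨F, hF⟩ := exists_eq_sum_monomial_tmul_tensorCoeff z
  refine (Submodule.mem_bot K).1 (mem_of_forall_sum_smul_mem (linearIndependent_monomial (Fin n)) ⊥
    (insert α F) (fun β => Z.proj (1 ⊗ₜ tensorCoeff β z)) (fun v => ?_)
    (Finset.mem_insert_self α F))
  rw [Submodule.mem_bot, ← hz v]
  conv_rhs => rw [hF _ (Finset.subset_insert α F), map_sum, map_sum]
  refine Finset.sum_congr rfl fun β _ => ?_
  rw [LinearMap.rTensor_tmul, ← map_smul, TensorProduct.smul_tmul', smul_eq_mul, mul_one,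
    AlgHom.toLinearMap_apply, MvPolynomial.aeval_monomial, map_one, one_mul,
    Finsupp.prod_fintype _ _ fun i => pow_zero _]

end SplitModel

theorem IsWeakSympDet.isSympDet {k R : Type u} [Field k] [Ring R] [Algebra k R] {s : InvAlg k R}
    {d : ℕ} {D : PolyLaw k R} {P : PolyLaw k s.plus} (h : IsWeakSympDet s d D P)
    (h2 : (2 : k) ≠ 0) : IsSympDet s d D P := by
  let K := AlgebraicClosure k
  have two_ne_zero : (2 : K) ≠ 0 := by
    simpa only [map_ofNat] using (map_ne_zero (algebraMap k K)).2 h2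
  obtain ⟨Z⟩ := SplitModel.nonempty (K := K) h.mult h.homog
  let ψ : R →ₐ[k] Π i, Matrix (Fin (Z.c i)) (Fin (Z.c i)) K :=
    (Z.proj.restrictScalars k).comp Algebra.TensorProduct.includeRight
  have chIdeal_le : chIdeal s P ≤ TwoSidedIdeal.ker ψ := by
    rw [chIdeal, TwoSidedIdeal.span_le]
    rintro _ ⟨n, r, α, rfl⟩
    refine (TwoSidedIdeal.mem_ker ψ).2
      (SplitModel.proj_one_tmul_tensorCoeff_eq_zero (fun v => ?_) α)
    rw [rTensor_chEval]
    exact SplitModel.proj_chEval h two_ne_zero _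
  exact ⟨h, fun y hy => (Z.proj_one_tmul_eq_zero_iff h.mult h.homog y).1
    ((TwoSidedIdeal.mem_ker ψ).1 (chIdeal_le hy))⟩

/-! ### Descent along surjections -/

namespace PolyLaw

theorem exists_eq_comp_of_surjective {k M N : Type u} [Field k] [AddCommGroup M] [Module k M]
    [AddCommGroup N] [Module k N] {Q : PolyLaw k M} {f : M →ₗ[k] N} (hf : Function.Surjective f)
    (mem_lawKer : ∀ x, f x = 0 → x ∈ Q.lawKer) : ∃ Q' : PolyLaw k N, Q = Q'.comp f := by
  obtain ⟨g, hg⟩ := f.exists_rightInverse_of_surjective (LinearMap.range_eq_top.2 hf)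
  have comp_eq : Q.comp LinearMap.id = Q.comp (g ∘ₗ f) :=
    comp_eq_comp_of_forall_sub_mem fun x => mem_lawKer _ <| by
      have right_inverse : f (g (f x)) = f x := LinearMap.congr_fun hg (f x)
      simp [right_inverse]
  refine ⟨Q.comp g, ?_⟩
  ext B _ _ x
  have h := congrArg (fun Q' : PolyLaw k M => Q'.toFun B x) comp_eq
  simpa [comp, LinearMap.lTensor_comp_apply] using h

variable {A : Type u} [CommRing A] {M : Type u} [AddCommGroup M] [Module A M]

theorem IsHomog.comp {N : Type u} [AddCommGroup N] [Module A N] {Q : PolyLaw A M} {n : ℕ}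
    (hQ : Q.IsHomog n) (f : N →ₗ[A] M) : (Q.comp f).IsHomog n := fun B _ _ b x =>
  (congrArg (Q.toFun B) (map_smul (f.baseChange B) b x)).trans (hQ B b _)

variable [IsDomain A]

theorem IsHomog.of_sq {P Q : PolyLaw A M} {d : ℕ} (hQ : Q.IsHomog (2 * d))
    (h : ∀ (B : Type u) [CommRing B] [Algebra A B] (x : B ⊗[A] M),
      P.toFun B x ^ 2 = Q.toFun B x) : P.IsHomog d := by
  intro B _ _ b x
  obtain ⟨m, c, r, rfl⟩ := x.exists_sum_tmul_eq
  let z : MvPolynomial (Fin (m + 1)) A ⊗[A] M := ∑ i, MvPolynomial.X (Fin.succ i) ⊗ₜ r i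
  let scaled := P.toFun _ ((MvPolynomial.X 0 : MvPolynomial (Fin (m + 1)) A) • z)
  have aeval_eq {C : Type u} [CommRing C] [Algebra A C] (b : C) (c : Fin m → C) :
      MvPolynomial.aeval (Fin.cons b c) scaled = P.toFun C (b • ∑ i, c i ⊗ₜ r i) := by
    refine (P.natural _ C _ _).trans ?_
    simp [z, rTensor_algHom_smul]
  have aeval_eq' {C : Type u} [CommRing C] [Algebra A C] (b : C) (c : Fin m → C) :
      MvPolynomial.aeval (Fin.cons b c) (P.toFun _ z) = P.toFun C (∑ i, c i ⊗ₜ r i) := by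
    refine (P.natural _ C _ _).trans ?_
    simp [z]
  have scaled_eq : scaled = MvPolynomial.X 0 ^ d * P.toFun _ z := by
    have scaled_sq : scaled ^ 2 = (MvPolynomial.X 0 ^ d * P.toFun _ z) ^ 2 := by
      rw [h, hQ, mul_pow, h, ← pow_mul, mul_comm d]
    rcases sq_eq_sq_iff_eq_or_eq_neg.1 scaled_sq with scaled_eq | scaled_eq
    · exact scaled_eq
    -- The wrong sign forces `P(z) = -P(z)`, as one sees at `X₀ = 1`.
    have eq_neg := congrArg (MvPolynomial.aeval
      (Fin.cons 1 fun i => (MvPolynomial.X (Fin.succ i) : MvPolynomial (Fin (m + 1)) A))) scaled_eq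
    rw [aeval_eq, map_neg, map_mul, map_pow, aeval_eq', MvPolynomial.aeval_X, Fin.cons_zero,
      one_pow, one_smul, one_mul] at eq_neg
    rw [scaled_eq, ← mul_neg]
    exact congrArg _ eq_neg.symm
  rw [← aeval_eq, scaled_eq, map_mul, map_pow, aeval_eq', MvPolynomial.aeval_X, Fin.cons_zero]

end PolyLaw

theorem IsWeakSympDet.mem_lawKer {A R : Type u} [CommRing A] [IsDomain A] [Ring R] [Algebra A R]
    {s : InvAlg A R} {d : ℕ} {D : PolyLaw A R} {P : PolyLaw A s.plus} (h : IsWeakSympDet s d D P)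
    (h2 : (2 : A) ≠ 0) {y : s.plus} (hy : (y : R) ∈ D.lawKer) : y ∈ P.lawKer := by
  let add : A × s.plus →ₗ[A] s.plus :=
    LinearMap.coprod (LinearMap.toSpanSingleton A s.plus y) LinearMap.id
  let snd : A × s.plus →ₗ[A] s.plus := LinearMap.snd A A s.plus
  have comp_eq : D.comp (s.plus.subtype ∘ₗ add) = D.comp (s.plus.subtype ∘ₗ snd) :=
    PolyLaw.comp_eq_comp_of_forall_sub_mem fun z => by
      simpa [add, snd] using PolyLaw.smul_mem_lawKer z.1 hy
  have sq_comp (f : A × s.plus →ₗ[A] s.plus) (B : Type u) [CommRing B] [Algebra A B]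
      (x : B ⊗[A] (A × s.plus)) :
      (P.comp f).toFun B x ^ 2 = (D.comp (s.plus.subtype ∘ₗ f)).toFun B x := by
    simp [PolyLaw.comp, h.sq, InvAlg.incl, LinearMap.lTensor_comp_apply]
  refine PolyLaw.mem_lawKer_iff_comp_eq.2 <| PolyLaw.eq_of_sq_eq_sq h2 (F := P.comp add)
    (G := P.comp snd) (r₀ := (0, s.onePlus)) (fun B _ _ x => by rw [sq_comp, sq_comp, comp_eq])
    ?_ ?_
  · simp [PolyLaw.comp, add, snd]
  · simp [PolyLaw.comp, snd, h.one]

section Descent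

variable {A R S : Type u} [CommRing A] [Ring R] [Algebra A R] [Ring S] [Algebra A S]
  {s : InvAlg A R} {s' : InvAlg A S}

/-- The map on symmetric elements induced by a linear map that commutes with the involutions. -/
def InvAlg.plusMap (f : R →ₗ[A] S) (comm : s'.star ∘ₗ f = f ∘ₗ s.star) :
    s.plus →ₗ[A] s'.plus :=
  f.restrict fun x hx => s'.mem_plus.2 <|
    (LinearMap.congr_fun comm x).trans (congrArg f (s.mem_plus.1 hx))

theorem InvAlg.incl_lTensor_plusMap {f : R →ₗ[A] S} {comm : s'.star ∘ₗ f = f ∘ₗ s.star}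
    {B : Type u} [CommRing B] [Algebra A B] (x : B ⊗[A] s.plus) :
    s'.incl B (LinearMap.lTensor B (plusMap f comm) x) =
      LinearMap.lTensor B f (s.incl B x) := by
  rw [incl, incl, ← LinearMap.lTensor_comp_apply, ← LinearMap.lTensor_comp_apply]
  rfl

variable {f : R →ₐ[A] S} {comm : s'.star ∘ₗ f.toLinearMap = f.toLinearMap ∘ₗ s.star}

theorem InvAlg.plusMap_onePlus : plusMap f.toLinearMap comm s.onePlus = s'.onePlus :=
  Subtype.ext (map_one f)

theorem InvAlg.plusMap_surjective (hf : Function.Surjective f) (h2 : IsUnit (2 : A)) :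
    Function.Surjective (plusMap f.toLinearMap comm) := by
  obtain ⟨u, hu⟩ := h2
  rintro ⟨y, hy⟩
  obtain ⟨x, rfl⟩ := hf y
  refine ⟨u⁻¹ • ⟨x + s.star x, s.add_star_mem_plus x⟩, Subtype.ext ?_⟩
  have f_star : f (s.star x) = f x := (LinearMap.congr_fun comm x).symm.trans (s'.mem_plus.1 hy)
  change f (u⁻¹ • (x + s.star x)) = f x
  rw [Units.smul_def, map_smul, map_add, f_star, ← two_smul A (f x), smul_smul,
    ← hu, Units.inv_mul, one_smul]

theorem IsWeakSympDet.of_comp {d : ℕ} {D : PolyLaw A S} {P : PolyLaw A s'.plus}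
    (h : IsWeakSympDet s d (D.comp f.toLinearMap) (P.comp (InvAlg.plusMap f.toLinearMap comm)))
    (hf : Function.Surjective f) (h2 : IsUnit (2 : A)) : IsWeakSympDet s' d D P := by
  have lTensor_surj (B : Type u) [CommRing B] [Algebra A B] :
      Function.Surjective (LinearMap.lTensor B f.toLinearMap) := LinearMap.lTensor_surjective B hf
  have plusMap_surj (B : Type u) [CommRing B] [Algebra A B] :
      Function.Surjective (LinearMap.lTensor B (InvAlg.plusMap f.toLinearMap comm)) :=
    LinearMap.lTensor_surjective B (InvAlg.plusMap_surjective hf h2)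
  have lTensor_mul (B : Type u) [CommRing B] [Algebra A B] (x y : B ⊗[A] R) :
      LinearMap.lTensor B f.toLinearMap (x * y) =
        LinearMap.lTensor B f.toLinearMap x * LinearMap.lTensor B f.toLinearMap y :=
    map_mul (Algebra.TensorProduct.map (AlgHom.id A B) f) x y
  have lTensor_smul {M N : Type u} [AddCommGroup M] [Module A M] [AddCommGroup N] [Module A N]
      (g : M →ₗ[A] N) (B : Type u) [CommRing B] [Algebra A B] (b : B) (x : B ⊗[A] M) :
      LinearMap.lTensor B g (b • x) = b • LinearMap.lTensor B g x :=
    map_smul (g.baseChange B) b x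
  refine ⟨fun B _ _ => ⟨?_, (lTensor_surj B).forall₂.2 fun x y => ?_⟩,
    fun B _ _ b => (lTensor_surj B).forall.2 fun x => ?_,
    fun B _ _ => (lTensor_surj B).forall.2 fun x => ?_,
    fun B _ _ b => (plusMap_surj B).forall.2 fun x => ?_,
    fun B _ _ => (plusMap_surj B).forall.2 fun x => ?_, ?_⟩
  · simpa [PolyLaw.comp, Algebra.TensorProduct.one_def] using (h.mult B).1
  · rw [← lTensor_mul]
    exact (h.mult B).2 x y
  · rw [← lTensor_smul]
    exact h.homog B b x
  · rw [← LinearMap.lTensor_comp_apply, comm, LinearMap.lTensor_comp_apply]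
    exact h.starInv B x
  · rw [← lTensor_smul]
    exact h.homogP B b x
  · rw [InvAlg.incl_lTensor_plusMap]
    exact h.sq B x
  · simpa [PolyLaw.comp, InvAlg.plusMap_onePlus] using h.one

end Descent

theorem IsWeakSympDet.exists_eq_comp_of_surjective {k R S : Type u} [Field k] [Ring R] [Algebra k R]
    [Ring S] [Algebra k S] {s : InvAlg k R} {s' : InvAlg k S} {f : R →ₐ[k] S}
    {comm : s'.star ∘ₗ f.toLinearMap = f.toLinearMap ∘ₗ s.star} {d : ℕ} {D : PolyLaw k R}
    {P : PolyLaw k s.plus}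
    (h : IsWeakSympDet s d D P) (h2 : (2 : k) ≠ 0) (hf : Function.Surjective f)
    (mem_lawKer : ∀ x, f x = 0 → x ∈ D.lawKer) :
    ∃ D' P', IsWeakSympDet s' d D' P' ∧ D = D'.comp f.toLinearMap ∧
      P = P'.comp (InvAlg.plusMap f.toLinearMap comm) := by
  obtain ⟨D', rfl⟩ := PolyLaw.exists_eq_comp_of_surjective (f := f.toLinearMap) hf mem_lawKer
  obtain ⟨P', rfl⟩ := PolyLaw.exists_eq_comp_of_surjective (Q := P)
    (InvAlg.plusMap_surjective (comm := comm) hf h2.isUnit)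
    fun y hy => h.mem_lawKer h2 (mem_lawKer y (congrArg Subtype.val hy))
  exact ⟨D', P', h.of_comp hf h2.isUnit, rfl, rfl⟩

/-! ### Determinant laws on finite products -/

theorem map_eq_prod_map_mulSingle {ι : Type*} [Fintype ι] [DecidableEq ι] {M : ι → Type*}
    [∀ i, Monoid (M i)] {N : Type*} [CommMonoid N] (f : (∀ i, M i) →* N) (x : ∀ i, M i) :
    f x = ∏ i, f (Pi.mulSingle i (x i)) :=
  (congrArg f (Finset.noncommProd_mulSingle x).symm).trans <|
    (Finset.map_noncommProd _ _ _ f).trans (Finset.noncommProd_eq_prod ..)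

theorem eq_X_pow_natDegree_of_comp_eq {A : Type*} [CommRing A] [IsDomain A] {q : Polynomial A}
    (hq : q ≠ 0) (h : (q.map Polynomial.C).comp (Polynomial.C Polynomial.X * Polynomial.X) =
      Polynomial.C q * q.map Polynomial.C) : q = Polynomial.X ^ q.natDegree := by
  have h := congrArg (Polynomial.coeff · q.natDegree) h
  simp only [Polynomial.comp_C_mul_X_coeff, Polynomial.coeff_map, Polynomial.coeff_C_mul] at h
  rw [mul_comm] at h
  exact (mul_right_cancel₀ (by simpa using hq) h).symm

namespace PolyLaw

variable {A : Type u} [CommRing A] {M : Type u} [AddCommGroup M] [Module A M]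

/-- The pointwise product of finitely many polynomial laws. -/
def prod {ι : Type*} [Fintype ι] (Q : ι → PolyLaw A M) : PolyLaw A M where
  toFun B _ _ x := ∏ i, (Q i).toFun B x
  natural B B' _ _ _ _ f x := by simp only [map_prod, (Q _).natural]

/-- The polynomial law `x ↦ Q (x + e)`. -/
def translate (Q : PolyLaw A M) (e : M) : PolyLaw A M where
  toFun B _ _ x := Q.toFun B (x + 1 ⊗ₜ e)
  natural B B' _ _ _ _ f x := by simp [Q.natural]

theorem IsMult.exists_isHomog [IsDomain A] {R : Type u} [Ring R] [Algebra A R] {D : PolyLaw A R}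
    (mult : D.IsMult) : ∃ n, D.IsHomog n := by
  let p (B : Type u) [CommRing B] [Algebra A B] (b : B) : B := D.toFun B (b • 1)
  have map_p {B B' : Type u} [CommRing B] [Algebra A B] [CommRing B'] [Algebra A B']
      (f : B →ₐ[A] B') (b : B) : f (p B b) = p B' (f b) := by
    simp [p, D.natural, rTensor_algHom_smul, Algebra.TensorProduct.one_def]
  have p_mul {B : Type u} [CommRing B] [Algebra A B] (b c : B) : p B (b * c) = p B b * p B c := by
    rw [← (mult B).2, smul_mul_smul_comm, one_mul]
  let q := p (Polynomial A) Polynomial.X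
  have aeval_q {B : Type u} [CommRing B] [Algebra A B] (b : B) : Polynomial.aeval b q = p B b :=
    (map_p (Polynomial.aeval b) Polynomial.X).trans (by rw [Polynomial.aeval_X])
  have q_ne_zero : q ≠ 0 := fun hq => by
    have h := aeval_q (1 : A)
    simp [hq, p, (mult A).1] at h
  have q_eq : q = Polynomial.X ^ q.natDegree := eq_X_pow_natDegree_of_comp_eq q_ne_zero <| by
    have comp_eq (r : Polynomial (Polynomial A)) :
        (q.map Polynomial.C).comp r = p (Polynomial (Polynomial A)) r := by
      rw [← aeval_q, Polynomial.comp, Polynomial.eval₂_map]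
      rfl
    have C_q : Polynomial.C q = p (Polynomial (Polynomial A)) (Polynomial.C Polynomial.X) :=
      map_p (IsScalarTower.toAlgHom A (Polynomial A) (Polynomial (Polynomial A))) Polynomial.X
    rw [comp_eq, p_mul, C_q, ← comp_eq Polynomial.X, Polynomial.comp_X]
  refine ⟨q.natDegree, fun B _ _ b x => ?_⟩
  have p_eq : p B b = b ^ q.natDegree := by
    rw [← aeval_q b]
    conv_lhs => rw [q_eq]
    rw [map_pow, Polynomial.aeval_X]
  rw [← p_eq, ← (mult B).2, smul_mul_assoc, one_mul]

end PolyLaw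

section Pi

variable {A : Type u} [CommRing A] {ι : Type} {T : ι → Type u} [∀ i, Ring (T i)]
  [∀ i, Algebra A (T i)]

/-- The product of involutive algebras. -/
def InvAlg.pi (s : ∀ i, InvAlg A (T i)) : InvAlg A (∀ i, T i) where
  star := LinearMap.pi fun i => (s i).star ∘ₗ LinearMap.proj i
  star_one := funext fun i => (s i).star_one
  star_mul x y := funext fun i => (s i).star_mul (x i) (y i)
  star_star x := funext fun i => (s i).star_star (x i)

variable [DecidableEq ι] {s : ∀ i, InvAlg A (T i)}

theorem InvAlg.pi_star_comp_single (s : ∀ i, InvAlg A (T i)) (i : ι) :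
    (pi s).star ∘ₗ LinearMap.single A T i = LinearMap.single A T i ∘ₗ (s i).star :=
  LinearMap.ext fun x => funext <| Pi.apply_single (fun j => (s j).star) (fun _ => map_zero _) i x

/-- The inclusion of the symmetric elements of the `i`-th factor of a product. -/
def InvAlg.plusSingle (s : ∀ i, InvAlg A (T i)) (i : ι) : (s i).plus →ₗ[A] (pi s).plus :=
  plusMap (LinearMap.single A T i) (pi_star_comp_single s i)

/-- The restriction of a polynomial law on a product of algebras to the `i`-th factor, the other
coordinates being set to `1`. -/
def PolyLaw.component (D : PolyLaw A (∀ i, T i)) (i : ι) : PolyLaw A (T i) :=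
  (D.translate (1 - Pi.single i 1)).comp (LinearMap.single A T i)

/-- The restriction to the `i`-th factor, as in `PolyLaw.component`, of a polynomial law on the
symmetric elements of a product. -/
def PolyLaw.plusComponent (P : PolyLaw A (InvAlg.pi s).plus) (i : ι) : PolyLaw A (s i).plus :=
  (P.translate ((InvAlg.pi s).onePlus - InvAlg.plusSingle s i (s i).onePlus)).comp
    (InvAlg.plusSingle s i)

theorem IsWeakSympDet.plusComponent_sq {d : ℕ} {D : PolyLaw A (∀ i, T i)}
    {P : PolyLaw A (InvAlg.pi s).plus} (h : IsWeakSympDet (InvAlg.pi s) d D P) (i : ι) (B : Type u)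
    [CommRing B] [Algebra A B] (x : B ⊗[A] (s i).plus) :
    (P.plusComponent i).toFun B x ^ 2 = (D.component i).toFun B ((s i).incl B x) := by
  refine (h.sq B _).trans (congrArg (D.toFun B) ?_)
  rw [map_add, InvAlg.plusSingle, InvAlg.incl_lTensor_plusMap]
  rfl

theorem IsWeakSympDet.plusComponent_one {d : ℕ} {D : PolyLaw A (∀ i, T i)}
    {P : PolyLaw A (InvAlg.pi s).plus} (h : IsWeakSympDet (InvAlg.pi s) d D P) (i : ι) :
    (P.plusComponent i).toFun A (1 ⊗ₜ (s i).onePlus) = 1 := by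
  simpa [PolyLaw.plusComponent, PolyLaw.comp, PolyLaw.translate, ← TensorProduct.tmul_add]
    using h.one

theorem IsWeakSympDet.component_starInv {d : ℕ} {D : PolyLaw A (∀ i, T i)}
    {P : PolyLaw A (InvAlg.pi s).plus} (h : IsWeakSympDet (InvAlg.pi s) d D P) (i : ι) (B : Type u)
    [CommRing B] [Algebra A B] (x : B ⊗[A] T i) :
    (D.component i).toFun B (LinearMap.lTensor B (s i).star x) = (D.component i).toFun B x := by
  have star_eq : (InvAlg.pi s).star (1 - Pi.single i 1) = 1 - Pi.single i 1 := by
    have star_single := LinearMap.congr_fun (InvAlg.pi_star_comp_single s i) 1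
    simp only [LinearMap.comp_apply, (s i).star_one] at star_single
    rw [map_sub, (InvAlg.pi s).star_one]
    exact congrArg _ star_single
  refine Eq.trans (congrArg (D.toFun B) ?_) (h.starInv B _)
  rw [map_add, ← LinearMap.lTensor_comp_apply, ← LinearMap.lTensor_comp_apply,
    InvAlg.pi_star_comp_single,
    LinearMap.lTensor_tmul, star_eq]

section Fintype

variable [Fintype ι]

theorem piRight_apply {B : Type u} [CommRing B] [Algebra A B] (x : B ⊗[A] (∀ i, T i)) (i : ι) :
    Algebra.TensorProduct.piRight A A B T x i = LinearMap.lTensor B (LinearMap.proj i) x := by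
  induction x with
  | zero => simp
  | add x y hx hy => simp [hx, hy]
  | tmul b x => simp

theorem lTensor_single_add_eq {B : Type u} [CommRing B] [Algebra A B] {i : ι} (x : B ⊗[A] T i) :
    LinearMap.lTensor B (LinearMap.single A T i) x + 1 ⊗ₜ (1 - Pi.single i 1) =
      (Algebra.TensorProduct.piRight A A B T).symm (Pi.mulSingle i x) := by
  rw [AlgEquiv.eq_symm_apply]
  funext j
  rw [piRight_apply, map_add, ← LinearMap.lTensor_comp_apply]
  obtain rfl | hj := eq_or_ne j i
  · simp [LinearMap.proj_comp_single_same]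
  · simp [LinearMap.proj_comp_single_ne, hj, Algebra.TensorProduct.one_def]

theorem PolyLaw.component_toFun (D : PolyLaw A (∀ i, T i)) {i : ι} {B : Type u} [CommRing B]
    [Algebra A B] (x : B ⊗[A] T i) : (D.component i).toFun B x =
      D.toFun B ((Algebra.TensorProduct.piRight A A B T).symm (Pi.mulSingle i x)) :=
  congrArg _ (lTensor_single_add_eq x)

theorem PolyLaw.IsMult.eq_prod_component {D : PolyLaw A (∀ i, T i)} (mult : D.IsMult) :
    D = prod fun i => (D.component i).comp (LinearMap.proj i) := by
  ext B _ _ x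
  let e := Algebra.TensorProduct.piRight A A B T
  let f : (∀ i, B ⊗[A] T i) →* B :=
    { toFun y := D.toFun B (e.symm y)
      map_one' := by rw [map_one, (mult B).1]
      map_mul' y z := by rw [map_mul, (mult B).2] }
  have h := map_eq_prod_map_mulSingle f (e x)
  simpa [f, prod, comp, component_toFun, e, piRight_apply] using h

end Fintype

theorem PolyLaw.IsMult.component [Finite ι] {D : PolyLaw A (∀ i, T i)} (mult : D.IsMult) (i : ι) :
    (D.component i).IsMult := fun B _ _ => by
  cases nonempty_fintype ι
  exact ⟨by simp [component_toFun, (mult B).1], fun x y => by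
    simp only [component_toFun, Pi.mulSingle_mul, map_mul, (mult B).2]⟩

variable [IsDomain A] {d : ℕ} {D : PolyLaw A (∀ i, T i)} {P : PolyLaw A (InvAlg.pi s).plus}

theorem IsWeakSympDet.exists_component [Finite ι] (h : IsWeakSympDet (InvAlg.pi s) d D P)
    (i : ι) : ∃ d', IsWeakSympDet (s i) d' (D.component i) (P.plusComponent i) := by
  obtain ⟨n, homog⟩ := (h.mult.component i).exists_isHomog
  obtain ⟨d', rfl⟩ : ∃ d', n = 2 * d' := by
    have sq := h.plusComponent_sq i (Polynomial A) (Polynomial.X ⊗ₜ (s i).onePlus)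
    rw [InvAlg.incl_tmul_onePlus, homog, (h.mult.component i _).1, mul_one] at sq
    have degree_eq := congrArg Polynomial.natDegree sq
    rw [Polynomial.natDegree_pow, Polynomial.natDegree_X_pow] at degree_eq
    exact ⟨_, degree_eq.symm⟩
  exact ⟨d', h.mult.component i, homog, h.component_starInv i,
    (homog.comp _).of_sq (h.plusComponent_sq i), h.plusComponent_sq i,
    h.plusComponent_one i⟩

variable [Fintype ι]

theorem IsWeakSympDet.sum_component (h : IsWeakSympDet (InvAlg.pi s) d D P) {d' : ι → ℕ}
    (h' : ∀ i, IsWeakSympDet (s i) (d' i) (D.component i) (P.plusComponent i)) :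
    ∑ i, d' i = d := by
  have toFun_X : D.toFun (Polynomial A) ((Polynomial.X : Polynomial A) • 1) =
      ∏ i, (D.component i).toFun (Polynomial A) ((Polynomial.X : Polynomial A) • 1) := by
    conv_lhs => rw [h.mult.eq_prod_component]
    simp [PolyLaw.prod, PolyLaw.comp, Algebra.TensorProduct.one_def, TensorProduct.smul_tmul']
  simp only [h.homog _, (h' _).homog _, (h.mult _).1, ((h' _).mult _).1, mul_one,
    Finset.prod_pow_eq_pow_sum] at toFun_X
  have degree_eq := congrArg Polynomial.natDegree toFun_X
  rw [Polynomial.natDegree_X_pow, Polynomial.natDegree_X_pow, ← Finset.mul_sum] at degree_eq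
  omega

theorem IsWeakSympDet.eq_prod_plusComponent (h : IsWeakSympDet (InvAlg.pi s) d D P)
    (h2 : (2 : A) ≠ 0) : P = PolyLaw.prod fun i => (P.plusComponent i).comp
      (InvAlg.plusMap (LinearMap.proj i) rfl) := by
  have prod_one : (PolyLaw.prod fun i => (P.plusComponent i).comp
      (InvAlg.plusMap (LinearMap.proj i) rfl)).toFun A (1 ⊗ₜ (InvAlg.pi s).onePlus) = 1 :=
    Finset.prod_eq_one fun i _ => h.plusComponent_one i
  refine PolyLaw.eq_of_sq_eq_sq h2 (r₀ := (InvAlg.pi s).onePlus) (fun B _ _ x => ?_)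
    (h.one.trans prod_one.symm) (by rw [prod_one]; exact one_ne_zero)
  rw [h.sq, h.mult.eq_prod_component]
  simp only [PolyLaw.prod, PolyLaw.comp, ← Finset.prod_pow, h.plusComponent_sq]
  exact Finset.prod_congr rfl fun i _ =>
    congrArg _
      (InvAlg.incl_lTensor_plusMap (s' := s i) (f := LinearMap.proj i) (comm := rfl) x).symm

end Pi

/-! ### The quotient by the kernel is semisimple -/

theorem commute_of_span_eq_top {K S : Type*} [CommRing K] [Ring S] [Algebra K S] {X : Set S}
    (hX : Submodule.span K X = ⊤) {a : S} (ha : ∀ x ∈ X, Commute x a) (y : S) : Commute y a := by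
  have hy : y ∈ Submodule.span K X := hX ▸ Submodule.mem_top
  induction hy using Submodule.span_induction with
  | zero => exact .zero_left a
  | add x y _ _ hx hy => exact hx.add_left hy
  | smul b x _ hx => exact hx.smul_left b
  | mem x hx => exact ha x hx

/-- A ring `T` is split by the field `K` if it maps to a matrix algebra over `K` with image spanning
over `K`. For simple `T` this means that `T` is a central simple algebra over its centre, which
embeds into `K` as a splitting field. -/
def IsSplitBy (K T : Type*) [Field K] [Ring T] : Prop :=
  ∃ (m : ℕ) (_ : NeZero m) (φ : T →+* Matrix (Fin m) (Fin m) K),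
    Submodule.span K (Set.range φ) = ⊤

theorem IsSplitBy.of_ringEquiv {K T T' : Type*} [Field K] [Ring T] [Ring T'] (h : IsSplitBy K T)
    (e : T' ≃+* T) : IsSplitBy K T' := by
  obtain ⟨m, hm, φ, hφ⟩ := h
  exact ⟨m, hm, φ.comp e, by rwa [RingHom.coe_comp, RingHom.coe_coe, e.surjective.range_comp]⟩

theorem exists_ringHom_span_range_eq_top {K ι : Type*} [Field K] [DecidableEq ι] {A : ι → Type*}
    [∀ i, Ring (A i)] {Q : Type*} [Ring Q] [Algebra K Q] [IsSimpleRing Q] {Ψ : (∀ i, A i) →+* Q}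
    (hΨ : Submodule.span K (Set.range Ψ) = ⊤) {i : ι} (hi : Ψ (Pi.single i 1) ≠ 0) :
    ∃ φ : A i →+* Q, Submodule.span K (Set.range φ) = ⊤ := by
  have commute : ∀ x ∈ Set.range Ψ, Commute x (Ψ (Pi.single i 1)) := by
    rintro _ ⟨y, rfl⟩
    rw [Commute, SemiconjBy, ← map_mul, ← map_mul, ← Pi.single_mul_left, ← Pi.single_mul_right,
      mul_one, one_mul]
  have idem : IsIdempotentElem (Ψ (Pi.single i 1)) := by
    rw [IsIdempotentElem, ← map_mul, ← Pi.single_mul, one_mul]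
  have map_single_one : Ψ (Pi.single i 1) = 1 :=
    (eq_zero_or_eq_one_of_mem_center idem
      (Subring.mem_center_iff.2 (commute_of_span_eq_top hΨ commute))).resolve_left hi
  let φ : A i →+* Q :=
    { toFun x := Ψ (Pi.single i x)
      map_one' := map_single_one
      map_mul' x y := by rw [Pi.single_mul, map_mul]
      map_zero' := by rw [Pi.single_zero, map_zero]
      map_add' x y := by rw [Pi.single_add, map_add] }
  have range_eq : Set.range φ = Set.range Ψ := by
    refine subset_antisymm (Set.range_subset_iff.2 fun x => ⟨_, rfl⟩)
      (Set.range_subset_iff.2 fun y => ⟨y i, ?_⟩)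
    change Ψ (Pi.single i (y i)) = Ψ y
    rw [← one_mul (y i), Pi.single_mul_left, map_mul, map_single_one, one_mul]
  exact ⟨φ, range_eq ▸ hΨ⟩

namespace SplitModel

variable {k R : Type u} [Field k] [Ring R] [Algebra k R] {D : PolyLaw k R} {n : ℕ}
  {K : Type u} [Field K] [IsAlgClosed K] [Algebra k K] (Z : SplitModel D n K)

/-- The representation of `R` on the matrix algebras of a split model. -/
noncomputable def rep : R →ₐ[k] Π i, Matrix (Fin (Z.c i)) (Fin (Z.c i)) K :=
  (Z.proj.restrictScalars k).comp Algebra.TensorProduct.includeRight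

theorem proj_tmul (b : K) (x : R) : Z.proj (b ⊗ₜ x) = b • Z.rep x := by
  have h : b ⊗ₜ[k] x = b • (1 : K) ⊗ₜ[k] x := by rw [TensorProduct.smul_tmul', smul_eq_mul, mul_one]
  rw [h, map_smul]
  rfl

theorem span_range_rep_apply (i : Fin Z.t) :
    Submodule.span K (Set.range fun x => Z.rep x i) = ⊤ := by
  rw [eq_top_iff]
  rintro M -
  obtain ⟨y, hy⟩ := Z.proj_surjective (Pi.single i M)
  obtain rfl : Z.proj y i = M := by rw [hy, Pi.single_eq_same]
  clear hy
  induction y with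
  | zero => simp
  | add x y hx hy => exact map_add Z.proj x y ▸ Submodule.add_mem _ hx hy
  | tmul b r => exact Z.proj_tmul b r ▸ Submodule.smul_mem _ b (Submodule.subset_span ⟨r, rfl⟩)

theorem map_chPoly_eq_charpoly (x : R) :
    (chPoly D 1 k (1 ⊗ₜ x)).map (algebraMap k K) = Z.form.charpoly (Z.rep x) := by
  have map_eq : (chPoly D 1 k (1 ⊗ₜ x)).map (algebraMap k K) = chPoly D 1 K (1 ⊗ₜ x) := by
    simpa using map_chPoly D 1 (Algebra.ofId k K) (1 ⊗ₜ x)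
  refine Polynomial.funext fun t => ?_
  rw [map_eq, eval_chPoly, DetForm.eval_charpoly, ← Z.form_proj, map_sub, proj_tmul, proj_tmul,
    map_one, one_smul]

theorem isIntegral_rep (x : R) : IsIntegral k (Z.rep x) := by
  have map_eq := Z.map_chPoly_eq_charpoly x
  refine ⟨chPoly D 1 k (1 ⊗ₜ x), Polynomial.monic_of_injective (algebraMap k K).injective
    (map_eq ▸ Z.form.charpoly_monic _), ?_⟩
  have h := Z.faithful.aeval_charpoly (Z.rep x)
  rwa [← map_eq, Polynomial.aeval_map_algebraMap] at h

/-- Since the image of `R` spans each block, an element of the image is determined by the traces of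
its products with the image; on a nil left ideal these all vanish. -/
theorem eq_bot_of_forall_isNilpotent (J : Ideal Z.rep.range) (hJ : ∀ a ∈ J, IsNilpotent a) :
    J = ⊥ := by
  refine eq_bot_iff.2 fun a ha => (Ideal.mem_bot).2 (Subtype.ext (funext fun i => ?_))
  have isNilpotent_mul (r : R) : IsNilpotent (Z.rep r i * a.1 i) :=
    (hJ _ (J.mul_mem_left ⟨Z.rep r, r, rfl⟩ ha)).map
      ((Pi.evalRingHom _ i).comp Z.rep.range.toSubring.subtype)
  refine (Matrix.ext_iff_trace_mul_left (B := 0)).2 fun M => ?_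
  have hM : M ∈ Submodule.span K (Set.range fun x => Z.rep x i) :=
    Z.span_range_rep_apply i ▸ Submodule.mem_top
  rw [mul_zero, Matrix.trace_zero]
  induction hM using Submodule.span_induction with
  | zero => simp
  | add x y _ _ hx hy => rw [add_mul, Matrix.trace_add, hx, hy, add_zero]
  | smul b x _ hx => rw [smul_mul_assoc, Matrix.trace_smul, hx, smul_zero]
  | mem x hx =>
    obtain ⟨r, rfl⟩ := hx
    exact (Matrix.isNilpotent_trace_of_isNilpotent (isNilpotent_mul r)).eq_zero

theorem isSemisimpleRing_range_rep : IsSemisimpleRing Z.rep.range := by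
  have : Algebra.IsIntegral k Z.rep.range :=
    ⟨by
      rintro ⟨_, x, rfl⟩
      exact (isIntegral_algHom_iff Z.rep.range.val Subtype.val_injective).1 (Z.isIntegral_rep x)⟩
  have : Infinite K := IsAlgClosed.instInfinite
  exact Z.faithful.isSemisimpleRing_of_injective (k := k) (φ := Z.rep.range.toSubring.subtype)
    Subtype.val_injective Z.eq_bot_of_forall_isNilpotent

theorem isSplitBy_of_algEquiv {ι : Type*} {A : ι → Type*} [∀ i, Ring (A i)]
    [∀ i, Algebra k (A i)] (e : Z.rep.range ≃ₐ[k] Π i, A i) (i : ι) [Nontrivial (A i)] :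
    IsSplitBy K (A i) := by
  classical
  have single_ne_zero : (e.symm (Pi.single i 1)).1 ≠ 0 := fun h =>
    one_ne_zero ((Pi.single_eq_zero_iff).1 ((map_eq_zero_iff _ e.symm.injective).1 (Subtype.ext h)))
  obtain ⟨l, hl⟩ := Function.ne_iff.1 single_ne_zero
  have := Z.neZero l
  let Ψ : (Π i, A i) →+* Matrix (Fin (Z.c l)) (Fin (Z.c l)) K :=
    (Pi.evalRingHom _ l).comp (Z.rep.range.toSubring.subtype.comp (e.symm : _ →+* Z.rep.range))
  have range_eq : Set.range (fun x => Z.rep x l) ⊆ Set.range Ψ := by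
    rintro _ ⟨x, rfl⟩
    exact ⟨e ⟨Z.rep x, x, rfl⟩,
      congrArg (fun y : Z.rep.range => y.1 l) (e.symm_apply_apply _)⟩
  have hΨ : Submodule.span K (Set.range Ψ) = ⊤ :=
    eq_top_iff.2 (Z.span_range_rep_apply l ▸ Submodule.span_mono range_eq)
  exact ⟨Z.c l, this, exists_ringHom_span_range_eq_top hΨ hl⟩

end SplitModel

theorem PolyLaw.IsMult.exists_algHom_pi_isSimpleRing {k R : Type u} [Field k] [Ring R] [Algebra k R]
    {D : PolyLaw k R} {n : ℕ} (mult : D.IsMult) (homog : D.IsHomog n) (K : Type u) [Field K]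
    [IsAlgClosed K] [Algebra k K] :
    ∃ (N : ℕ) (A : Fin N → Type u) (_ : ∀ i, Ring (A i)) (_ : ∀ i, Algebra k (A i))
      (θ : R →ₐ[k] Π i, A i), Function.Surjective θ ∧ (∀ x, θ x = 0 ↔ x ∈ D.lawKer) ∧
      ∀ i, IsSimpleRing (A i) ∧ IsSplitBy K (A i) := by
  obtain ⟨Z⟩ := SplitModel.nonempty (K := K) mult homog
  have := Z.isSemisimpleRing_range_rep
  obtain ⟨N, E, m, _, _, _, ⟨e⟩⟩ :=
    IsSemisimpleRing.exists_algEquiv_pi_matrix_divisionRing k Z.rep.range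
  refine ⟨N, fun i => Matrix (Fin (m i)) (Fin (m i)) (E i), inferInstance, inferInstance,
    e.toAlgHom.comp Z.rep.rangeRestrict, e.surjective.comp Z.rep.rangeRestrict_surjective,
    fun x => ?_, fun i => ⟨inferInstance, Z.isSplitBy_of_algEquiv e i⟩⟩
  rw [← Z.proj_one_tmul_eq_zero_iff mult homog, Z.proj_tmul, one_smul]
  exact (map_eq_zero_iff e e.injective).trans Subtype.ext_iff

/-! ### Central simple algebras and their splittings -/

theorem exists_mem_apply_eq_one {T ι : Type*} [Ring T] [IsSimpleRing T] (V : AddSubgroup (ι → T))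
    (mul_left : ∀ x, ∀ t ∈ V, (fun i => x * t i) ∈ V)
    (mul_right : ∀ x, ∀ t ∈ V, (fun i => t i * x) ∈ V) {t : ι → T} (ht : t ∈ V) {a : ι}
    (hta : t a ≠ 0) : ∃ t' ∈ V, t' a = 1 := by
  have one_mem : (1 : T) ∈ TwoSidedIdeal.span {t a} :=
    IsSimpleRing.one_mem_of_ne_zero_mem _ hta (TwoSidedIdeal.subset_span rfl)
  rw [TwoSidedIdeal.mem_span_iff_mem_addSubgroup_closure] at one_mem
  refine (AddSubgroup.closure_le (V.map (Pi.evalAddMonoidHom _ a))).2 ?_ one_mem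
  rintro _ ⟨_, ⟨x, -, _, rfl, rfl⟩, y, -, rfl⟩
  exact ⟨_, mul_right y _ (mul_left x _ ht), rfl⟩

section Relations

variable {Z K T S ι : Type*} [Field Z] [Field K] [Ring T] [Algebra Z T] [Ring S]
  [Algebra K S] [Algebra Z S]

/-- The `K`-linear relations with coefficients `c`, supported on `F`, in the image of `φ`. -/
def relations (φ : T →ₐ[Z] S) (c : ι → K) (F : Finset ι) : AddSubgroup (ι → T) where
  carrier := {t | ∑ i ∈ F, c i • φ (t i) = 0}
  zero_mem' := by simp
  add_mem' {t t'} ht ht' := by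
    simp_all only [Set.mem_ofPred_eq, Pi.add_apply, map_add, smul_add, Finset.sum_add_distrib,
      add_zero]
  neg_mem' {t} ht := by
    simp_all only [Set.mem_ofPred_eq, Pi.neg_apply, map_neg, smul_neg, Finset.sum_neg_distrib,
      neg_zero]

variable {φ : T →ₐ[Z] S} {c : ι → K} {F : Finset ι} {t : ι → T}

theorem mem_relations : t ∈ relations φ c F ↔ ∑ i ∈ F, c i • φ (t i) = 0 := Iff.rfl

theorem mul_left_mem_relations (x : T) (ht : t ∈ relations φ c F) :
    (fun i => x * t i) ∈ relations φ c F := by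
  rw [mem_relations] at ht ⊢
  simp only [map_mul, ← mul_smul_comm, ← Finset.mul_sum, ht, mul_zero]

theorem mul_right_mem_relations (x : T) (ht : t ∈ relations φ c F) :
    (fun i => t i * x) ∈ relations φ c F := by
  rw [mem_relations] at ht ⊢
  simp only [map_mul, ← smul_mul_assoc, ← Finset.sum_mul, ht, zero_mul]

theorem mem_relations_insert [DecidableEq ι] {a : ι} (ha : a ∉ F) (hta : t a = 0) :
    t ∈ relations φ c (insert a F) ↔ t ∈ relations φ c F := by
  simp only [mem_relations, Finset.sum_insert ha, hta, map_zero, smul_zero, zero_add]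

/- A shortest nontrivial relation can be scaled to have a coefficient `1`. Its commutators with `T`
are shorter relations, hence vanish, so that its coefficients lie in the centre `Z`. -/
theorem eq_zero_of_mem_relations [Algebra Z K] [IsSimpleRing T] [Algebra.IsCentral Z T]
    [IsScalarTower Z K S] [Nontrivial S] (hc : LinearIndependent Z c)
    (ht : t ∈ relations φ c F) :
    ∀ i ∈ F, t i = 0 := by
  classical
  induction F using Finset.induction_on generalizing t with
  | empty => simp
  | insert a F ha ih =>
    suffices hta : t a = 0 from
      (Finset.forall_mem_insert _ _ _).2 ⟨hta, ih ((mem_relations_insert ha hta).1 ht)⟩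
    by_contra hta
    obtain ⟨t', ht', hta'⟩ := exists_mem_apply_eq_one _
      (fun x _ => mul_left_mem_relations x) (fun x _ => mul_right_mem_relations x) ht hta
    have commute (y : T) : ∀ i ∈ F, y * t' i - t' i * y = 0 := by
      have sub_mem := sub_mem (mul_left_mem_relations y ht') (mul_right_mem_relations y ht')
      exact ih ((mem_relations_insert ha (by simp [hta'])).1 sub_mem)
    have central : ∀ i ∈ insert a F, ∃ z : Z, t' i = algebraMap Z T z := by
      refine (Finset.forall_mem_insert _ _ _).2 ⟨⟨1, by rw [hta', map_one]⟩, fun i hi => ?_⟩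
      exact (Algebra.IsCentral.mem_center_iff Z).1
        (Subalgebra.mem_center_iff.2 fun y => sub_eq_zero.1 (commute y i hi))
    choose! z hz using central
    have sum_eq_zero : ∑ i ∈ insert a F, z i • c i = 0 := by
      refine FaithfulSMul.algebraMap_injective K S ?_
      rw [map_zero, map_sum, ← mem_relations.1 ht']
      refine Finset.sum_congr rfl fun i hi => ?_
      rw [hz i hi, AlgHom.commutes, Algebra.algebraMap_eq_smul_one, Algebra.algebraMap_eq_smul_one,
        smul_assoc, smul_comm]
    have hza : z a = 0 := linearIndependent_iff'.1 hc _ z sum_eq_zero a (Finset.mem_insert_self a F)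
    exact one_ne_zero (by rw [← hta', hz a (Finset.mem_insert_self a F), hza, map_zero])

theorem lift_ofId_bijective [Algebra Z K] [IsSimpleRing T] [Algebra.IsCentral Z T]
    [IsScalarTower Z K S] [Nontrivial S] (hφ : Submodule.span K (Set.range φ) = ⊤) :
    Function.Bijective (Algebra.TensorProduct.lift (Algebra.ofId K S) φ
      fun x _ => Algebra.commutes x _) := by
  set Φ := Algebra.TensorProduct.lift (Algebra.ofId K S) φ fun x _ => Algebra.commutes x _
  have apply_tmul (c : K) (t : T) : Φ (c ⊗ₜ t) = c • φ t := by
    rw [Algebra.smul_def]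
    exact Algebra.TensorProduct.lift_tmul _ _ _ _ _
  constructor
  · rw [injective_iff_map_eq_zero]
    intro x hx
    let b := Module.Basis.ofVectorSpace Z K
    obtain ⟨f, rfl⟩ := TensorProduct.eq_repr_basis_left b x
    simp only [Finsupp.sum, map_sum, apply_tmul] at hx
    refine Finset.sum_eq_zero fun i hi => ?_
    simp only [eq_zero_of_mem_relations b.linearIndependent hx i hi, TensorProduct.tmul_zero]
  · rw [← AlgHom.coe_toLinearMap, ← LinearMap.range_eq_top, eq_top_iff, ← hφ, Submodule.span_le]
    rintro _ ⟨t, rfl⟩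
    exact ⟨1 ⊗ₜ t, by rw [AlgHom.coe_toLinearMap, apply_tmul, one_smul]⟩

end Relations

theorem exists_ringHom_center {K S T : Type*} [Field K] [Ring S] [Algebra K S]
    [Algebra.IsCentral K S] [Nontrivial S] [Ring T] (φ : T →+* S)
    (hφ : Submodule.span K (Set.range φ) = ⊤) :
    ∃ g : Subring.center T →+* K, ∀ z, algebraMap K S (g z) = φ z := by
  have central (z : Subring.center T) : φ z ∈ (algebraMap K S).range := by
    have commute : ∀ x ∈ Set.range φ, Commute x (φ z) := by
      rintro _ ⟨r, rfl⟩
      exact Commute.map (Subring.mem_center_iff.1 z.2 r) φ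
    obtain ⟨c, hc⟩ := (Algebra.IsCentral.mem_center_iff K).1
      (Subalgebra.mem_center_iff.2 (commute_of_span_eq_top hφ commute))
    exact ⟨c, hc.symm⟩
  let e := RingEquiv.ofBijective (algebraMap K S).rangeRestrict
    ⟨RingHom.injective_codRestrict.2 (FaithfulSMul.algebraMap_injective K S),
      (algebraMap K S).rangeRestrict_surjective⟩
  exact ⟨(e.symm : _ →+* K).comp ((φ.comp (Subring.center T).subtype).codRestrict _ central),
    fun z => congrArg Subtype.val (e.apply_symm_apply ⟨φ z, central z⟩)⟩

theorem IsSplitBy.exists_center {K T : Type u} [Field K] [Ring T] [IsSimpleRing T]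
    (h : IsSplitBy K T) :
    ∃ (Z : Type u) (_ : Field Z) (_ : Algebra Z T) (_ : Algebra Z K) (m : ℕ), NeZero m ∧
      Algebra.IsCentral Z T ∧ FiniteDimensional Z T ∧
      Nonempty (K ⊗[Z] T ≃ₐ[K] Matrix (Fin m) (Fin m) K) := by
  obtain ⟨m, _, φ, hφ⟩ := h
  obtain ⟨g, hg⟩ := exists_ringHom_center φ hφ
  let : Field (Subring.center T) := (IsSimpleRing.isField_center T).toField
  let : Algebra (Subring.center T) T := (Subring.center T).subtype.toAlgebra'
    fun c x => (Subring.mem_center_iff.1 c.2 x).symm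
  let : Algebra (Subring.center T) K := g.toAlgebra
  have : Algebra.IsCentral (Subring.center T) T := ⟨fun x hx => Algebra.mem_bot.2
    ⟨⟨x, Subring.mem_center_iff.2 (Subalgebra.mem_center_iff.1 hx)⟩, rfl⟩⟩
  let φ' : T →ₐ[Subring.center T] Matrix (Fin m) (Fin m) K :=
    { φ with commutes' := fun z => (hg z).symm }
  let e := AlgEquiv.ofBijective _ (lift_ofId_bijective (φ := φ') hφ)
  refine ⟨Subring.center T, inferInstance, inferInstance, inferInstance, m, ‹_›, ‹_›, ?_, ⟨e⟩⟩
  have rank_lt := Module.rank_lt_aleph0_iff.2 (Module.Finite.equiv e.symm.toLinearEquiv)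
  rw [Module.rank_baseChange, Cardinal.lift_id] at rank_lt
  exact Module.rank_lt_aleph0_iff.1 rank_lt

/-! ### Types of involutions -/

theorem InvAlg.isAntiAutOn_star {A R : Type u} [CommRing A] [Ring R] [Algebra A R]
    (s : InvAlg A R) : IsAntiAutOn R s.star :=
  ⟨s.star_one, map_add s.star, s.star_mul, s.star_star⟩

section CentralSimple

variable {k Z T : Type u} [Field k] [Field Z] [Ring T] [Algebra k T] [Algebra Z T]

/-- An involution fixing the scalars in `Z` is `Z`-linear. -/
def InvAlg.overField (s : InvAlg k T)
    (fix : ∀ z : Z, s.star (algebraMap Z T z) = algebraMap Z T z) : InvAlg Z T where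
  star :=
    { toFun := s.star
      map_add' := map_add s.star
      map_smul' c x := by
        rw [Algebra.smul_def, s.star_mul, fix, ← Algebra.commutes, RingHom.id_apply,
          Algebra.smul_def] }
  star_one := s.star_one
  star_mul := s.star_mul
  star_star := s.star_star

theorem nonempty_firstKindCase {K : Type u} [Field K] [Algebra Z K] [Algebra.IsCentral Z T]
    [IsSimpleRing T] [FiniteDimensional Z T] (s : InvAlg Z T) {m : ℕ} [NeZero m]
    (e : K ⊗[Z] T ≃ₐ[K] Matrix (Fin m) (Fin m) K) :
    Nonempty (FirstKindCase T s.star (-1)) ∨ Nonempty (FirstKindCase T s.star 1) := by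
  obtain ⟨τ, hτ⟩ := (s.baseChange K).exists_star_comm_of_surjective
    (π := e.toAlgHom) e.surjective fun x hx => by
      rw [(map_eq_zero_iff _ e.injective).1 hx, map_zero, map_zero]
  obtain ⟨u, hu, conj⟩ := τ.exists_star_eq_conj_transpose
  have firstKindCase (ε : ℤ) (hut : uᵀ = (ε : K) • u) : Nonempty (FirstKindCase T s.star ε) :=
    ⟨{  K := Z
        L := K
        n := m
        central := ‹_›
        simple := ‹_›
        findim := ‹_›
        linear := fun c x => by rw [← Algebra.smul_def, map_smul, Algebra.smul_def]
        anti := s.isAntiAutOn_star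
        split := e
        u := u
        hu := hu
        hut := hut
        hconj := fun x => (hτ (1 ⊗ₜ x)).symm.trans (conj _) }⟩
  refine (InvAlg.transpose_eq_or_eq_neg hu conj).imp (fun h => firstKindCase _ ?_)
    fun h => firstKindCase _ ?_
  · rw [h, Int.cast_neg, Int.cast_one, neg_one_smul]
  · rw [h, Int.cast_one, one_smul]

theorem InvAlg.exists_ringAut_center [Algebra.IsCentral Z T] [Nontrivial T] (s : InvAlg k T) :
    ∃ τ : RingAut Z, τ ^ 2 = 1 ∧ ∀ z, algebraMap Z T (τ z) = s.star (algebraMap Z T z) := by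
  have injective := FaithfulSMul.algebraMap_injective Z T
  have central (z : Z) : ∃ w, algebraMap Z T w = s.star (algebraMap Z T z) := by
    have mem_center : s.star (algebraMap Z T z) ∈ Subalgebra.center Z T :=
      Subalgebra.mem_center_iff.2 fun x => by
        rw [← s.star_star x, ← s.star_mul, ← s.star_mul, Algebra.commutes]
    exact ((Algebra.IsCentral.mem_center_iff Z).1 mem_center).imp fun _ h => h.symm
  choose τ hτ using central
  have involutive : Function.Involutive τ := fun z => injective (by rw [hτ, hτ, s.star_star])
  let τ' : RingAut Z :=
    { involutive.toPerm with
      map_mul' := fun x y => injective (by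
        change algebraMap Z T (τ (x * y)) = algebraMap Z T (τ x * τ y)
        rw [mul_comm x y, hτ, (algebraMap Z T).map_mul y x, s.star_mul, map_mul, hτ, hτ])
      map_add' := fun x y => injective (by
        change algebraMap Z T (τ (x + y)) = algebraMap Z T (τ x + τ y)
        rw [hτ, map_add, map_add, map_add, hτ, hτ]) }
  exact ⟨τ', RingEquiv.ext involutive, hτ⟩

theorem finrank_fixedPoints_zpowers {τ : RingAut Z} (sq : τ ^ 2 = 1) (ne_one : τ ≠ 1) :
    Module.finrank (FixedPoints.subfield (Subgroup.zpowers τ) Z) Z = 2 := by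
  have card : Nat.card (Subgroup.zpowers τ) = 2 := by
    rw [Nat.card_zpowers, orderOf_eq_prime sq ne_one]
  have : Finite (Subgroup.zpowers τ) :=
    finite_zpowers.2 (isOfFinOrder_iff_pow_eq_one.2 ⟨2, two_pos, sq⟩)
  have := Fintype.ofFinite (Subgroup.zpowers τ)
  rw [FixedPoints.finrank_eq_card, ← Nat.card_eq_fintype_card, card]

theorem nonempty_secondKindCase [Algebra.IsCentral Z T] [IsSimpleRing T] [FiniteDimensional Z T]
    (s : InvAlg k T) {z : Z} (hz : s.star (algebraMap Z T z) ≠ algebraMap Z T z) :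
    Nonempty (SecondKindCase T s.star) := by
  obtain ⟨τ, sq, hτ⟩ := s.exists_ringAut_center (Z := Z)
  have ne_one : τ ≠ 1 := by
    rintro rfl
    exact hz (hτ z).symm
  have quad := finrank_fixedPoints_zpowers sq ne_one
  have : Finite (Subgroup.zpowers τ) :=
    finite_zpowers.2 (isOfFinOrder_iff_pow_eq_one.2 ⟨2, two_pos, sq⟩)
  exact ⟨{  K := FixedPoints.subfield (Subgroup.zpowers τ) Z
            L := Z
            tower := .of_algebraMap_eq fun _ => rfl
            quad := quad
            separable := FixedPoints.isSeparable _ Z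
            central := ‹_›
            simple := ‹_›
            findim := ‹_›
            anti := s.isAntiAutOn_star
            linear := fun c x => by
              have fix : s.star (algebraMap Z T c) = algebraMap Z T c :=
                (hτ c).symm.trans (congrArg _ (c.2 ⟨τ, Subgroup.mem_zpowers τ⟩))
              change s.star (algebraMap Z T c * x) = algebraMap Z T c * s.star x
              rw [s.star_mul, fix, Algebra.commutes]
            secondKind := ⟨z, hz⟩ }⟩

end CentralSimple

theorem IsSplitBy.nonempty_firstKindCase_or_secondKindCase {k K T : Type u} [Field k] [Field K]
    [Ring T] [Algebra k T] [IsSimpleRing T] (h : IsSplitBy K T) (s : InvAlg k T) :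
    Nonempty (FirstKindCase T s.star (-1)) ∨ Nonempty (FirstKindCase T s.star 1) ∨
      Nonempty (SecondKindCase T s.star) := by
  obtain ⟨Z, _, _, _, m, _, _, _, ⟨e⟩⟩ := h.exists_center
  rw [← or_assoc]
  by_cases fix : ∀ z : Z, s.star (algebraMap Z T z) = algebraMap Z T z
  · exact .inl (nonempty_firstKindCase (s.overField fix) e)
  · obtain ⟨z, hz⟩ := not_forall.1 fix
    exact .inr (nonempty_secondKindCase s hz)

theorem IsSplitBy.nonempty_swapCase {k K T E : Type u} [Field k] [Field K] [Ring T] [Algebra k T]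
    [Ring E] [IsSimpleRing E] (h : IsSplitBy K E) (s : InvAlg k T) {p : T →+* E}
    (hp : Function.Surjective p) (eq_zero : ∀ x, p x = 0 → p (s.star x) = 0 → x = 0) {e : T}
    (he : p e = 1) (he' : p (s.star e) = 0) : Nonempty (SwapCase T s.star) := by
  obtain ⟨Z, _, _, _, -, -, central, findim, -⟩ := h.exists_center
  let f : T →+* E × Eᵐᵒᵖ :=
    { toFun x := (p x, MulOpposite.op (p (s.star x)))
      map_one' := by rw [s.star_one, map_one]; rfl
      map_mul' x y := by rw [s.star_mul, map_mul, map_mul]; rfl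
      map_zero' := by rw [map_zero, map_zero, map_zero]; rfl
      map_add' x y := by rw [map_add, map_add, map_add]; rfl }
  have injective : Function.Injective f := (injective_iff_map_eq_zero f).2 fun x hx =>
    eq_zero x (congrArg Prod.fst hx) (congrArg (fun y => y.2.unop) hx)
  have surjective : Function.Surjective f := by
    rintro ⟨a, b⟩
    obtain ⟨x, rfl⟩ := hp a
    obtain ⟨y, hy⟩ := hp b.unop
    refine ⟨e * x + s.star (e * y), Prod.ext ?_ (MulOpposite.unop_injective ?_)⟩
    · change p (e * x + s.star (e * y)) = p x
      rw [map_add, map_mul, s.star_mul, map_mul, he, he', one_mul, mul_zero, add_zero]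
    · change p (s.star (e * x + s.star (e * y))) = b.unop
      rw [map_add, map_add, s.star_star, s.star_mul, map_mul, map_mul, he, he', one_mul, mul_zero,
        zero_add, hy]
  exact ⟨{  K := Z
            E := E
            central := central
            simple := ‹_›
            findim := findim
            e := RingEquiv.ofBijective f ⟨injective, surjective⟩
            swap := fun x => Prod.ext rfl (congrArg (MulOpposite.op ∘ p) (s.star_star x)) }⟩

/-! ### Orbits of simple factors -/

theorem exists_fin_orbit_map {ι : Type*} [Finite ι] {σ : ι → ι} (hσ : σ.Involutive) :
    ∃ (t : ℕ) (o : ι → Fin t), Function.Surjective o ∧ ∀ a b, o a = o b ↔ b = a ∨ b = σ a := by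
  let S : Setoid ι :=
    { r := fun a b => b = a ∨ b = σ a
      iseqv :=
        { refl := fun _ => .inl rfl
          symm := by grind [hσ.eq_iff]
          trans := by grind [hσ.eq_iff] } }
  obtain ⟨t, ⟨f⟩⟩ := Finite.exists_equiv_fin (Quotient S)
  exact ⟨t, fun a => f ⟦a⟧, f.surjective.comp Quotient.mk_surjective, fun a b =>
    f.apply_eq_iff_eq.trans Quotient.eq⟩

section FiberProd

variable {k : Type u} [Field k] {ι κ : Type} {A : ι → Type u} [∀ a, Ring (A a)]
  [∀ a, Algebra k (A a)]

/-- The product of the algebras `A a` over the fiber of `o` at `i`. -/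
abbrev FiberProd (A : ι → Type u) (o : ι → κ) (i : κ) : Type u :=
  Π a : {a // o a = i}, A a

variable (k A) in
/-- The projection onto the product over a fiber. -/
def fiberProj (o : ι → κ) (i : κ) : (Π a, A a) →ₐ[k] FiberProd A o i :=
  AlgHom.pi fun a => Pi.evalAlgHom k A a

variable (k A) in
/-- The regrouping of a product along the fibers of `o`. -/
def piFiberProd (o : ι → κ) : (Π a, A a) →ₐ[k] Π i, FiberProd A o i :=
  AlgHom.pi (fiberProj k A o)

theorem fiberProj_surjective (o : ι → κ) (i : κ) : Function.Surjective (fiberProj k A o i) :=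
  Subtype.surjective_restrict fun a => o a = i

theorem piFiberProd_injective (o : ι → κ) : Function.Injective (piFiberProd k A o) :=
  fun _ _ h => funext fun a => congrFun (congrFun h (o a)) ⟨a, rfl⟩

theorem piFiberProd_surjective (o : ι → κ) : Function.Surjective (piFiberProd k A o) := by
  refine fun y => ⟨fun a => y (o a) ⟨a, rfl⟩, ?_⟩
  ext i ⟨a, rfl⟩
  rfl

variable [DecidableEq ι] {s : InvAlg k (Π a, A a)} {σ : ι → ι}

theorem InvAlg.exists_star_fiberProj (hσ : σ.Involutive)
    (hs : ∀ a, s.star (Pi.single a 1) = Pi.single (σ a) 1) {o : ι → κ} (ho : ∀ a, o (σ a) = o a)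
    (i : κ) : ∃ s' : InvAlg k (FiberProd A o i),
      ∀ x, s'.star (fiberProj k A o i x) = fiberProj k A o i (s.star x) := by
  refine s.exists_star_comm_of_surjective (fiberProj_surjective o i) fun x hx => ?_
  ext ⟨a, rfl⟩
  exact star_apply_eq_zero (by rw [hs, hσ]) (congrFun hx ⟨σ a, ho a⟩)

/-- `σ` is an involution of one of the kinds occurring in a `SympDetDecomposition`. -/
abbrev IsCentralSimpleInvolution (T : Type u) [Ring T] (σ : T → T) : Prop :=
  Nonempty (FirstKindCase T σ (-1)) ∨ Nonempty (FirstKindCase T σ 1) ∨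
    Nonempty (SecondKindCase T σ) ∨ Nonempty (SwapCase T σ)

/- An orbit `{a}` contributes a simple algebra with involution, an orbit `{a, σ a}` the product of
`A a` with its opposite. -/
theorem isCentralSimpleInvolution_fiberProd [∀ a, IsSimpleRing (A a)] {K : Type u} [Field K]
    (hA : ∀ a, IsSplitBy K (A a)) (hs : ∀ a, s.star (Pi.single a 1) = Pi.single (σ a) 1)
    {o : ι → κ} (ho : ∀ a b, o a = o b ↔ b = a ∨ b = σ a) (a : ι)
    {s' : InvAlg k (FiberProd A o (o a))}
    (comm : ∀ x, s'.star (fiberProj k A o (o a) x) = fiberProj k A o (o a) (s.star x)) :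
    IsCentralSimpleInvolution (FiberProd A o (o a)) s'.star := by
  by_cases fixed : σ a = a
  · let _ : Unique {b // o b = o a} :=
      ⟨⟨⟨a, rfl⟩⟩, fun b => Subtype.ext (by simpa [fixed] using (ho a b).1 b.2.symm)⟩
    let e : FiberProd A o (o a) ≃+* A a := RingEquiv.piUnique fun b : {b // o b = o a} => A b
    have := IsSimpleRing.of_ringEquiv e.symm inferInstance
    exact (((hA a).of_ringEquiv e).nonempty_firstKindCase_or_secondKindCase s').imp_right
      (Or.imp_right .inl)
  · let p : FiberProd A o (o a) →+* A a :=
      Pi.evalRingHom (fun b : {b // o b = o a} => A b) ⟨a, rfl⟩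
    refine .inr (.inr (.inr ((hA a).nonempty_swapCase s' (p := p) (fun y => ?_)
      ((fiberProj_surjective (k := k) o _).forall.2 fun x hx hx' => ?_)
      (e := fiberProj k A o _ (Pi.single a 1)) (Pi.single_eq_same a 1) ?_)))
    · exact ⟨fiberProj k A o _ (Pi.single a y), Pi.single_eq_same a y⟩
    · rw [comm] at hx'
      ext ⟨b, hb⟩
      obtain rfl | rfl := (ho a b).1 hb.symm
      · exact hx
      · rw [← s.star_star x]
        exact InvAlg.star_apply_eq_zero (hs a) hx'
    · rw [comm, hs]
      exact Pi.single_eq_of_ne (Ne.symm fixed) 1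

end FiberProd

/-! ### The decomposition -/

section Decomposition

variable {k R : Type u} [Field k] [Ring R] [Algebra k R] {s : InvAlg k R} {d : ℕ}
  {D : PolyLaw k R} {P : PolyLaw k s.plus}

theorem IsWeakSympDet.star_mem_lawKer (h : IsWeakSympDet s d D P) {x : R} (hx : x ∈ D.lawKer) :
    s.star x ∈ D.lawKer := by
  intro B _ _ b y
  rw [← h.starInv, map_add, LinearMap.lTensor_tmul, s.star_star, hx B b, h.starInv]

theorem IsWeakSympDet.nonempty_decomposition_of_surjective (h : IsWeakSympDet s d D P)
    (h2 : (2 : k) ≠ 0) {t : ℕ} {T : Fin t → Type u} [∀ i, Ring (T i)] [∀ i, Algebra k (T i)]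
    {s' : ∀ i, InvAlg k (T i)} {π : R →ₐ[k] Π i, T i} (hπ : Function.Surjective π)
    (ker_eq : ∀ x, π x = 0 ↔ x ∈ D.lawKer)
    (comm : ∀ x i, (s' i).star (π x i) = π (s.star x) i)
    (forms : ∀ i, IsCentralSimpleInvolution (T i) (s' i).star) :
    Nonempty (SympDetDecomposition s d D P) := by
  have comm' : (InvAlg.pi s').star ∘ₗ π.toLinearMap = π.toLinearMap ∘ₗ s.star :=
    LinearMap.ext fun x => funext (comm x)
  obtain ⟨D', P', h', hD, hP⟩ :=
    h.exists_eq_comp_of_surjective (comm := comm') h2 hπ fun x => (ker_eq x).1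
  choose d' hd' using h'.exists_component
  exact ⟨{
    t := t
    F := fun i => { carrier := T i, inv := s' i }
    π := π
    surj := hπ
    ker_eq := ker_eq
    compat := fun x i => (comm x i).symm
    di := d'
    dimsum := h'.sum_component hd'
    Dlaw := D'.component
    Plaw := P'.plusComponent
    sympdet := fun i => (hd' i).isSympDet h2
    forms := forms
    factorD := fun B _ _ x => by
      simp only [LinearMap.lTensor_comp_apply]
      conv_lhs => rw [hD, h'.mult.eq_prod_component]
      rfl
    q := fun i => InvAlg.plusMap (s' := s' i) (LinearMap.proj i) rfl ∘ₗ
      InvAlg.plusMap π.toLinearMap comm'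
    hq := fun i y => rfl
    factorP := fun B _ _ y => by
      simp only [LinearMap.lTensor_comp_apply]
      conv_lhs => rw [hP, h'.eq_prod_plusComponent h2]
      rfl }⟩

theorem IsWeakSympDet.nonempty_decomposition (h : IsWeakSympDet s d D P) (h2 : (2 : k) ≠ 0) :
    Nonempty (SympDetDecomposition s d D P) := by
  obtain ⟨N, A, _, _, θ, hθ, ker_eq, simple_split⟩ :=
    h.mult.exists_algHom_pi_isSimpleRing h.homog (AlgebraicClosure k)
  have _ (a : Fin N) : IsSimpleRing (A a) := (simple_split a).1
  obtain ⟨sA, comm⟩ := s.exists_star_comm_of_surjective hθ fun x hx =>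
    (ker_eq _).2 (h.star_mem_lawKer ((ker_eq x).1 hx))
  obtain ⟨σ, hσ, star_single⟩ := InvAlg.exists_involutive_star_single (s := sA)
  obtain ⟨t, o, o_surj, ho⟩ := exists_fin_orbit_map hσ
  choose s' hs' using
    sA.exists_star_fiberProj hσ star_single fun a => ((ho a (σ a)).2 (.inr rfl)).symm
  refine h.nonempty_decomposition_of_surjective h2 (s' := s') (π := (piFiberProd k A o).comp θ)
    ((piFiberProd_surjective (k := k) o).comp hθ) (fun x => ?_) (fun x i => ?_)
    (o_surj.forall.2 fun a => ?_)
  · exact (map_eq_zero_iff _ (piFiberProd_injective (k := k) o)).trans (ker_eq x)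
  · exact (hs' i (θ x)).trans (congrArg _ (comm x))
  · exact isCentralSimpleInvolution_fiberProd (fun a => (simple_split a).2) star_single ho a
      (hs' (o a))

end Decomposition

end SympDet

open SympDet in
theorem stmt_6 {k : Type u} [Field k] (h2 : IsUnit (2 : k))
    {R : Type u} [Ring R] [Algebra k R] (s : InvAlg k R) (d : ℕ)
    (D : PolyLaw k R) (P : PolyLaw k ↥s.plus) (h : IsWeakSympDet s d D P) :
    Nonempty (SympDetDecomposition s d D P) ∧ IsSympDet s d D P :=
  ⟨h.nonempty_decomposition h2.ne_zero, h.isSympDet h2.ne_zero⟩
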